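/- arXiv:2602.23151 — 2 statements merged into one kernel-verified Lean document; each statement's English description precedes it below -/
import Mathlib

section
/- Fix an integer L ≥ 1. Suppose f, g : ℝ^d → ℝ satisfy parts (A1) and (A2) of Assumption A (with constants c_f, c_g ≥ 1, r₀ > 0). Then there exist constants c⁻ ≥ 1 (sufficiently large), c⁺ ∈ (0,1] (sufficiently small) and C ≥ 1, depending only on c_f, c_g and L, such that: whenever R ≥ c⁻·√(max(1, (log λ)/d)) and R√(d/λ) ≤ min(r₀, c⁺), there exist real numbers b₁, …, b_{L−1} (determined only by d and the tensors ∇^ℓ f(0), 3 ≤ ℓ ≤ 2L+1, and ∇^ℓ(log g)(0), 1 ≤ ℓ ≤ 2L−1, and not explicitly on λ) with |b_k| ≤ C·d^{k+1} for each k, such that I_in(λ) > 0 and |log I_in(λ) − Σ_{k=1}^{L−1} b_k λ^{−k}| ≤ C·(R²d)^{L+1}/λ^L. (When L = 1 the sum is empty.) -/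
open MeasureTheory Real

noncomputable section

/-!
Rescale by `x = S z` with `S = √(d / λ)`: up to the Taylor remainders of `f` and `log g`, the
integral becomes a multiple of the partition function `Z(S) = ∫ exp (-β V_S)` over the ball of
radius `R`, where `β = d`, `V_s = ∑ k, s ^ k v k`, `v 0 = ‖z‖² / 2` and `v k` is a polynomial of
degree `k + 2`. The idea is to interpolate in `s` from the Gaussian integral `Z(0)`. A polynomial `U = ∑ j, s ^ j u j` is constructed such that
`∂ₛV = m(s) + ∇V · ∇U - β⁻¹ ΔU` up to an error of order `s ^ N`, with `m(s)` constant in `z`: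
order by order in `s` this is an equation for the Ornstein–Uhlenbeck operator `z · ∇ - β⁻¹ Δ`, which
can be inverted on polynomials by successively removing the top degree part. Since
`(∇V · ∇U - β⁻¹ ΔU) exp (-β V)` is a divergence, `(log Z)'(s) = -β m(s)` up to that error
and a boundary term which is exponentially small in `β R²`. Integrating over `[0, S]` gives the
expansion, where only the odd powers of `s` in `m` contribute because the `j`-th coefficient of `m`
is the Gaussian mean of a polynomial of the parity of `j + 1`.

All constants are independent of `d` because polynomials are measured by their growth
`C (1 + ‖z‖) ^ M` as functions: gradients are controlled by Markov's inequality along lines, and the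
`d` terms of the Laplacian are compensated by the factor `β⁻¹ = d⁻¹`.
-/

namespace LaplaceExpansion

open scoped RealInnerProductSpace

section DerivativeBound

/-- The nodes `i / (m + 1)`, `i ≤ m`, used to interpolate on `[0, 1]`. -/
def interpolationNode (m i : ℕ) : ℝ := i / (m + 1)

/-- A constant for Markov's inequality `|q'(0)| ≤ K sup_{[-1, 1]} |q|` in degree `m`, coming from
Lagrange interpolation at `interpolationNode m`. -/
def markovConst (m : ℕ) : ℝ :=
  ∑ i ∈ Finset.range (m + 1),
    |(Lagrange.basis (Finset.range (m + 1)) (interpolationNode m) i).derivative.eval 0|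

lemma markovConst_nonneg (m : ℕ) : 0 ≤ markovConst m :=
  Finset.sum_nonneg fun _ _ => abs_nonneg _

lemma interpolationNode_injective (m : ℕ) : Function.Injective (interpolationNode m) := by
  intro a b hab
  simpa [interpolationNode, div_left_inj' (Nat.cast_add_one_ne_zero (R := ℝ) m)] using hab

lemma abs_interpolationNode_le_one {m i : ℕ} (hi : i ∈ Finset.range (m + 1)) :
    |interpolationNode m i| ≤ 1 := by
  have hi' : (i : ℝ) ≤ m + 1 := by exact_mod_cast (Finset.mem_range.1 hi).le
  rw [interpolationNode, abs_of_nonneg (by positivity)]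
  exact div_le_one_of_le₀ hi' (by positivity)

lemma abs_eval_derivative_zero_le {m : ℕ} {q : Polynomial ℝ} (hq : q.natDegree ≤ m) {B : ℝ}
    (hB : ∀ t : ℝ, |t| ≤ 1 → |q.eval t| ≤ B) :
    |q.derivative.eval 0| ≤ markovConst m * B := by
  set s := Finset.range (m + 1) with hs
  have hdeg : q.degree < s.card := by
    rw [hs, Finset.card_range]
    exact Polynomial.degree_le_natDegree.trans_lt (by exact_mod_cast Nat.lt_succ_of_le hq)
  have hq' : q.derivative.eval 0 = ∑ i ∈ s, q.eval (interpolationNode m i) *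
      (Lagrange.basis s (interpolationNode m) i).derivative.eval 0 := by
    conv_lhs => rw [Lagrange.eq_interpolate (interpolationNode_injective m).injOn hdeg,
      Lagrange.interpolate_apply]
    simp [Polynomial.eval_finsetSum]
  rw [hq', markovConst, Finset.sum_mul]
  refine (Finset.abs_sum_le_sum_abs _ _).trans (Finset.sum_le_sum fun i hi => ?_)
  rw [abs_mul, mul_comm]
  gcongr
  exact hB _ (abs_interpolationNode_le_one hi)

end DerivativeBound

section PolynomialFunctions

variable {ι : Type*}

/-- Value at a point of Euclidean space of the function defined by a polynomial. -/
def evalAt (z : EuclideanSpace ℝ ι) : MvPolynomial ι ℝ →ₐ[ℝ] ℝ :=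
  MvPolynomial.aeval z

@[simp]
lemma evalAt_X (z : EuclideanSpace ℝ ι) (i : ι) : evalAt z (MvPolynomial.X i) = z i :=
  MvPolynomial.aeval_X _ _

@[simp]
lemma evalAt_C (z : EuclideanSpace ℝ ι) (a : ℝ) : evalAt z (MvPolynomial.C a) = a :=
  MvPolynomial.aeval_C _ _

@[fun_prop]
lemma continuous_evalAt (p : MvPolynomial ι ℝ) :
    Continuous fun z : EuclideanSpace ℝ ι => evalAt z p := by
  simp only [evalAt, MvPolynomial.aeval_eq_eval]
  exact (MvPolynomial.continuous_eval p).comp (by fun_prop)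

/-- Gradient at `z` of the function defined by a polynomial. -/
def grad (z : EuclideanSpace ℝ ι) : MvPolynomial ι ℝ →ₗ[ℝ] EuclideanSpace ℝ ι where
  toFun p := WithLp.toLp 2 fun i => evalAt z (MvPolynomial.pderiv i p)
  map_add' p q := by ext i; simp
  map_smul' a p := by ext i; simp

@[simp]
lemma grad_apply (z : EuclideanSpace ℝ ι) (p : MvPolynomial ι ℝ) (i : ι) :
    grad z p i = evalAt z (MvPolynomial.pderiv i p) :=
  rfl

@[fun_prop]
lemma continuous_grad (p : MvPolynomial ι ℝ) :
    Continuous fun z : EuclideanSpace ℝ ι => grad z p :=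
  (PiLp.continuous_toLp 2 _).comp (continuous_pi fun _ => continuous_evalAt _)

lemma grad_mul (z : EuclideanSpace ℝ ι) (p q : MvPolynomial ι ℝ) :
    grad z (p * q) = evalAt z p • grad z q + evalAt z q • grad z p := by
  ext i
  simp

lemma grad_X [DecidableEq ι] (z : EuclideanSpace ℝ ι) (i : ι) :
    grad z (MvPolynomial.X i) = EuclideanSpace.single i 1 := by
  ext j
  obtain rfl | hij := eq_or_ne j i
  · simp
  · simp [MvPolynomial.pderiv_X_of_ne hij.symm, hij]

/-- The univariate polynomial `t ↦ p (z + t w)`. -/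
def alongLine (z w : EuclideanSpace ℝ ι) : MvPolynomial ι ℝ →ₐ[ℝ] Polynomial ℝ :=
  MvPolynomial.aeval fun i => Polynomial.C (w i) * Polynomial.X + Polynomial.C (z i)

lemma eval_alongLine (z w : EuclideanSpace ℝ ι) (p : MvPolynomial ι ℝ) (t : ℝ) :
    (alongLine z w p).eval t = evalAt (z + t • w) p := by
  have : (Polynomial.aeval t).comp (alongLine z w) = evalAt (z + t • w) := by
    ext i
    simp only [alongLine, AlgHom.comp_apply, MvPolynomial.aeval_X, Polynomial.coe_aeval_eq_eval,
      Polynomial.eval_add, Polynomial.eval_mul, Polynomial.eval_C, Polynomial.eval_X, evalAt_X,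
      PiLp.add_apply, PiLp.smul_apply, smul_eq_mul]
    ring
  simpa using DFunLike.congr_fun this p

lemma natDegree_alongLine_le (z w : EuclideanSpace ℝ ι) {p : MvPolynomial ι ℝ} {m : ℕ}
    (hp : p.totalDegree ≤ m) : (alongLine z w p).natDegree ≤ m := by
  have := MvPolynomial.aeval_natDegree_le (n := 1) p hp
    (fun i => Polynomial.C (w i) * Polynomial.X + Polynomial.C (z i))
    fun _ => Polynomial.natDegree_linear_le
  rwa [mul_one] at this

variable [Fintype ι]

lemma hasGradientAt_evalAt (p : MvPolynomial ι ℝ) (z : EuclideanSpace ℝ ι) :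
    HasGradientAt (fun z => evalAt z p) (grad z p) z := by
  rw [hasGradientAt_iff_hasFDerivAt]
  induction p using MvPolynomial.induction_on with
  | C a =>
    have : grad z (MvPolynomial.C a) = 0 := by ext i; simp
    simpa [this] using hasFDerivAt_const a z
  | add p q hp hq =>
    simp only [map_add]
    exact hp.add hq
  | mul_X p i hp =>
    have hX : HasFDerivAt (fun z : EuclideanSpace ℝ ι => z i)
        (EuclideanSpace.proj i : EuclideanSpace ℝ ι →L[ℝ] ℝ) z :=
      (EuclideanSpace.proj i : EuclideanSpace ℝ ι →L[ℝ] ℝ).hasFDerivAt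
    simp only [map_mul, evalAt_X]
    refine (hp.mul hX).congr_fderiv ?_
    ext w
    classical
    simp [grad_mul, grad_X, EuclideanSpace.inner_single_left]

/-- Sum of the second partial derivatives of a polynomial. -/
def laplacian : MvPolynomial ι ℝ →ₗ[ℝ] MvPolynomial ι ℝ :=
  ∑ i, (MvPolynomial.pderiv i).toLinearMap ∘ₗ (MvPolynomial.pderiv i).toLinearMap

lemma laplacian_apply (p : MvPolynomial ι ℝ) :
    laplacian p = ∑ i, MvPolynomial.pderiv i (MvPolynomial.pderiv i p) := by
  simp [laplacian]

/-- Euler's operator `∑ i, Xᵢ ∂ᵢ`. -/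
def euler : MvPolynomial ι ℝ →ₗ[ℝ] MvPolynomial ι ℝ :=
  ∑ i, LinearMap.mulLeft ℝ (MvPolynomial.X i) ∘ₗ (MvPolynomial.pderiv i).toLinearMap

lemma euler_apply (p : MvPolynomial ι ℝ) :
    euler p = ∑ i, MvPolynomial.X i * MvPolynomial.pderiv i p := by
  simp [euler]

/-- The polynomial `∑ i, ∂ᵢp ∂ᵢq`, whose values are the inner products of gradients. -/
def gradInner : MvPolynomial ι ℝ →ₗ[ℝ] MvPolynomial ι ℝ →ₗ[ℝ] MvPolynomial ι ℝ :=
  ∑ i, (LinearMap.mul ℝ (MvPolynomial ι ℝ)).compl₁₂ (MvPolynomial.pderiv i).toLinearMap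
    (MvPolynomial.pderiv i).toLinearMap

lemma gradInner_apply (p q : MvPolynomial ι ℝ) :
    gradInner p q = ∑ i, MvPolynomial.pderiv i p * MvPolynomial.pderiv i q := by
  simp [gradInner]

lemma evalAt_gradInner (z : EuclideanSpace ℝ ι) (p q : MvPolynomial ι ℝ) :
    evalAt z (gradInner p q) = ⟪grad z p, grad z q⟫ := by
  simp [gradInner_apply, PiLp.inner_apply, mul_comm]

lemma evalAt_euler (z : EuclideanSpace ℝ ι) (p : MvPolynomial ι ℝ) :
    evalAt z (euler p) = ⟪grad z p, z⟫ := by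
  simp [euler_apply, PiLp.inner_apply]

lemma eval_derivative_alongLine_zero (z w : EuclideanSpace ℝ ι) (p : MvPolynomial ι ℝ) :
    (alongLine z w p).derivative.eval 0 = ⟪grad z p, w⟫ := by
  have hline : HasDerivAt (fun t : ℝ => z + t • w) w 0 := by
    simpa using ((hasDerivAt_id (0 : ℝ)).smul_const w).const_add z
  have hp : HasFDerivAt (fun z => evalAt z p) (InnerProductSpace.toDual ℝ _ (grad z p))
      (z + (0 : ℝ) • w) := by
    simpa using (hasGradientAt_evalAt p z).hasFDerivAt
  refine ((alongLine z w p).hasDerivAt 0).unique ?_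
  simpa [eval_alongLine, Function.comp_def] using hp.comp_hasDerivAt 0 hline

end PolynomialFunctions

section Degrees

variable {ι : Type*}

lemma totalDegree_pderiv_le (i : ι) (p : MvPolynomial ι ℝ) :
    (MvPolynomial.pderiv i p).totalDegree ≤ p.totalDegree - 1 := by
  classical
  refine Finset.sup_le fun s hs => Nat.le_sub_one_of_lt ?_
  have hsp : s + Finsupp.single i 1 ∈ p.support := by
    rw [MvPolynomial.mem_support_iff, MvPolynomial.coeff_pderiv] at hs
    exact MvPolynomial.mem_support_iff.2 (left_ne_zero_of_mul hs)
  have := MvPolynomial.le_totalDegree hsp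
  rwa [Finsupp.sum_add_index' (fun _ => rfl) fun _ _ _ => rfl, Finsupp.sum_single_index rfl] at this

variable [Fintype ι]

lemma totalDegree_laplacian_le (p : MvPolynomial ι ℝ) :
    (laplacian p).totalDegree ≤ p.totalDegree - 1 := by
  rw [laplacian_apply]
  refine MvPolynomial.totalDegree_finsetSum_le fun i _ => ?_
  exact (totalDegree_pderiv_le i _).trans <|
    (Nat.sub_le _ _).trans (totalDegree_pderiv_le i p)

lemma coeff_euler (p : MvPolynomial ι ℝ) (s : ι →₀ ℕ) :
    (euler p).coeff s = s.degree * p.coeff s := by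
  induction p using MvPolynomial.induction_on' with
  | monomial u a =>
    rw [euler_apply]
    simp only [MvPolynomial.X_mul_pderiv_monomial]
    rw [← Finset.sum_smul, ← Finsupp.degree_eq_sum, MvPolynomial.coeff_smul, nsmul_eq_mul]
    obtain rfl | hsu := eq_or_ne u s
    · rfl
    · classical simp [MvPolynomial.coeff_monomial, hsu]
  | add p q hp hq => rw [map_add, MvPolynomial.coeff_add, hp, hq, MvPolynomial.coeff_add, mul_add]

lemma totalDegree_euler_le (p : MvPolynomial ι ℝ) : (euler p).totalDegree ≤ p.totalDegree := by
  refine MvPolynomial.totalDegree_le_of_support_subset fun s hs => ?_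
  rw [MvPolynomial.mem_support_iff, coeff_euler] at hs
  exact MvPolynomial.mem_support_iff.2 (right_ne_zero_of_mul hs)

lemma totalDegree_gradInner_le {M N : ℕ} {p q : MvPolynomial ι ℝ} (hp : p.totalDegree ≤ M + 1)
    (hq : q.totalDegree ≤ N + 1) : (gradInner p q).totalDegree ≤ M + N := by
  rw [gradInner_apply]
  refine MvPolynomial.totalDegree_finsetSum_le fun i _ => ?_
  refine (MvPolynomial.totalDegree_mul _ _).trans (add_le_add ?_ ?_)
  · exact (totalDegree_pderiv_le i p).trans (Nat.sub_le_of_le_add hp)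
  · exact (totalDegree_pderiv_le i q).trans (Nat.sub_le_of_le_add hq)

end Degrees

section Growth

variable {ι : Type*} [Fintype ι] {M N : ℕ} {C D : ℝ} {p q : MvPolynomial ι ℝ}

/-- `p` has total degree at most `M` and size at most `C (1 + ‖z‖) ^ M`. The constant `C` does not
control the coefficients of `p` individually, so that it may be independent of the dimension. -/
structure HasGrowth (M : ℕ) (C : ℝ) (p : MvPolynomial ι ℝ) : Prop where
  totalDegree_le : p.totalDegree ≤ M
  abs_evalAt_le : ∀ z : EuclideanSpace ℝ ι, |evalAt z p| ≤ C * (1 + ‖z‖) ^ M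

namespace HasGrowth

lemma nonneg (hp : HasGrowth M C p) : 0 ≤ C := by
  simpa using (abs_nonneg _).trans (hp.abs_evalAt_le 0)

lemma zero : HasGrowth M 0 (0 : MvPolynomial ι ℝ) :=
  ⟨by simp, by simp⟩

lemma mono (hp : HasGrowth M C p) (hMN : M ≤ N) (hCD : C ≤ D) : HasGrowth N D p where
  totalDegree_le := hp.totalDegree_le.trans hMN
  abs_evalAt_le z := by
    have hD := hp.nonneg.trans hCD
    have hz : 1 ≤ 1 + ‖z‖ := le_add_of_nonneg_right (norm_nonneg z)
    exact (hp.abs_evalAt_le z).trans (by gcongr)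

lemma add (hp : HasGrowth M C p) (hq : HasGrowth M D q) : HasGrowth M (C + D) (p + q) where
  totalDegree_le :=
    (MvPolynomial.totalDegree_add _ _).trans (max_le hp.totalDegree_le hq.totalDegree_le)
  abs_evalAt_le z := by
    rw [map_add, add_mul]
    exact (abs_add_le _ _).trans (add_le_add (hp.abs_evalAt_le z) (hq.abs_evalAt_le z))

lemma smul (hp : HasGrowth M C p) (a : ℝ) : HasGrowth M (|a| * C) (a • p) where
  totalDegree_le := (MvPolynomial.totalDegree_smul_le _ _).trans hp.totalDegree_le
  abs_evalAt_le z := by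
    rw [map_smul, smul_eq_mul, abs_mul, mul_assoc]
    gcongr
    exact hp.abs_evalAt_le z

lemma sub (hp : HasGrowth M C p) (hq : HasGrowth M D q) : HasGrowth M (C + D) (p - q) := by
  simpa [sub_eq_add_neg] using hp.add (hq.smul (-1))

lemma sum {κ : Type*} {s : Finset κ} {C : κ → ℝ} {p : κ → MvPolynomial ι ℝ}
    (hp : ∀ k ∈ s, HasGrowth M (C k) (p k)) : HasGrowth M (∑ k ∈ s, C k) (∑ k ∈ s, p k) := by
  classical
  induction s using Finset.induction_on with
  | empty => exact zero
  | insert k s hk ih =>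
    rw [Finset.sum_insert hk, Finset.sum_insert hk]
    exact (hp k (Finset.mem_insert_self k s)).add
      (ih fun l hl => hp l (Finset.mem_insert_of_mem hl))

end HasGrowth

/-- The factor lost in `HasGrowth` when differentiating a polynomial of degree at most `M`. -/
def gradConst (M : ℕ) : ℝ :=
  markovConst M * 2 ^ M

lemma gradConst_nonneg (M : ℕ) : 0 ≤ gradConst M :=
  mul_nonneg (markovConst_nonneg M) (by positivity)

namespace HasGrowth

/- Markov's inequality is applied on the segment of half-length `1 + ‖z‖` around `z`, where
`1 + ‖·‖ ≤ 2 (1 + ‖z‖)`. -/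
lemma abs_inner_grad_mul_le (hp : HasGrowth M C p) (z : EuclideanSpace ℝ ι)
    {w : EuclideanSpace ℝ ι} (hw : ‖w‖ ≤ 1) :
    |⟪grad z p, w⟫| * (1 + ‖z‖) ≤ gradConst M * C * (1 + ‖z‖) ^ M := by
  set r := 1 + ‖z‖
  have hr0 : 0 ≤ r := by positivity
  have hC := hp.nonneg
  have hseg (t : ℝ) (ht : |t| ≤ 1) : 1 + ‖z + t • r • w‖ ≤ 2 * r := by
    have : ‖t • r • w‖ ≤ r := by
      rw [norm_smul, norm_smul, Real.norm_eq_abs, Real.norm_of_nonneg hr0]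
      exact (mul_le_mul ht (mul_le_of_le_one_right hr0 hw) (by positivity) zero_le_one).trans_eq
        (one_mul r)
    linarith [norm_add_le z (t • r • w)]
  have hbound (t : ℝ) (ht : |t| ≤ 1) : |(alongLine z (r • w) p).eval t| ≤ C * (2 * r) ^ M := by
    rw [eval_alongLine]
    exact (hp.abs_evalAt_le _).trans (by gcongr; exact hseg t ht)
  have := abs_eval_derivative_zero_le (natDegree_alongLine_le z (r • w) hp.totalDegree_le) hbound
  rw [eval_derivative_alongLine_zero, inner_smul_right, abs_mul, abs_of_nonneg hr0] at this
  calc |⟪grad z p, w⟫| * r = r * |⟪grad z p, w⟫| := mul_comm _ _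
    _ ≤ markovConst M * (C * (2 * r) ^ M) := this
    _ = gradConst M * C * r ^ M := by rw [gradConst, mul_pow]; ring

lemma norm_grad_mul_le (hp : HasGrowth M C p) (z : EuclideanSpace ℝ ι) :
    ‖grad z p‖ * (1 + ‖z‖) ≤ gradConst M * C * (1 + ‖z‖) ^ M := by
  have hunit : ‖‖grad z p‖⁻¹ • grad z p‖ ≤ 1 := by
    rw [norm_smul, norm_inv, norm_norm]
    exact inv_mul_le_one
  have hinner : ⟪grad z p, ‖grad z p‖⁻¹ • grad z p⟫ = ‖grad z p‖ := by
    rw [inner_smul_right, real_inner_self_eq_norm_mul_norm, ← mul_assoc, inv_mul_mul_self]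
  simpa [hinner] using hp.abs_inner_grad_mul_le z hunit

lemma norm_grad_le (hp : HasGrowth (M + 1) C p) (z : EuclideanSpace ℝ ι) :
    ‖grad z p‖ ≤ gradConst (M + 1) * C * (1 + ‖z‖) ^ M := by
  have h := hp.norm_grad_mul_le z
  rw [pow_succ, ← mul_assoc] at h
  exact le_of_mul_le_mul_right h (by positivity)

lemma pderiv (hp : HasGrowth M C p) (i : ι) :
    HasGrowth M (gradConst M * C) (MvPolynomial.pderiv i p) where
  totalDegree_le :=
    (totalDegree_pderiv_le i p).trans ((Nat.sub_le _ _).trans hp.totalDegree_le)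
  abs_evalAt_le z := calc
    |evalAt z (MvPolynomial.pderiv i p)| ≤ ‖grad z p‖ := PiLp.norm_apply_le (grad z p) i
    _ ≤ ‖grad z p‖ * (1 + ‖z‖) :=
      le_mul_of_one_le_right (norm_nonneg _) (le_add_of_nonneg_right (norm_nonneg z))
    _ ≤ _ := hp.norm_grad_mul_le z

lemma euler (hp : HasGrowth M C p) : HasGrowth M (gradConst M * C) (euler p) where
  totalDegree_le := (totalDegree_euler_le p).trans hp.totalDegree_le
  abs_evalAt_le z := calc
    |evalAt z (LaplaceExpansion.euler p)| ≤ ‖grad z p‖ * ‖z‖ := by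
      rw [evalAt_euler]
      exact abs_real_inner_le_norm _ _
    _ ≤ ‖grad z p‖ * (1 + ‖z‖) := by gcongr; linarith
    _ ≤ _ := hp.norm_grad_mul_le z

lemma inv_smul_laplacian (hp : HasGrowth M C p) {β : ℝ} (hβ : Fintype.card ι ≤ β) :
    HasGrowth M (gradConst M ^ 2 * C) (β⁻¹ • laplacian p) := by
  have hsum : HasGrowth M (Fintype.card ι * (gradConst M * (gradConst M * C))) (laplacian p) := by
    rw [laplacian_apply]
    simpa using sum (s := Finset.univ) fun i _ => (hp.pderiv i).pderiv i
  have hC := hp.nonneg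
  have hβ0 : 0 ≤ β := (Nat.cast_nonneg _).trans hβ
  refine (hsum.smul β⁻¹).mono le_rfl ?_
  rw [abs_of_nonneg (inv_nonneg.2 hβ0), ← mul_assoc, ← mul_assoc (gradConst M), ← sq]
  exact mul_le_of_le_one_left (mul_nonneg (by positivity) hC) (inv_mul_le_one_of_le₀ hβ hβ0)

lemma gradInner (hp : HasGrowth (M + 1) C p) (hq : HasGrowth (N + 1) D q) :
    HasGrowth (M + N) (gradConst (M + 1) * C * (gradConst (N + 1) * D)) (gradInner p q) where
  totalDegree_le := totalDegree_gradInner_le hp.totalDegree_le hq.totalDegree_le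
  abs_evalAt_le z := calc
    |evalAt z (LaplaceExpansion.gradInner p q)| ≤ ‖grad z p‖ * ‖grad z q‖ := by
      rw [evalAt_gradInner]
      exact abs_real_inner_le_norm _ _
    _ ≤ gradConst (M + 1) * C * (1 + ‖z‖) ^ M * (gradConst (N + 1) * D * (1 + ‖z‖) ^ N) :=
      mul_le_mul (hp.norm_grad_le z) (hq.norm_grad_le z) (norm_nonneg _)
        ((norm_nonneg _).trans (hp.norm_grad_le z))
    _ = _ := by rw [pow_add]; ring

end HasGrowth

section Ball

variable {s R : ℝ} {z : EuclideanSpace ℝ ι} {j a : ℕ}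

lemma pow_mul_le_of_le_one_add_norm_pow {x K : ℝ} (hK : 0 ≤ K)
    (hx : x ≤ K * (1 + ‖z‖) ^ (j + a)) (hs : 0 ≤ s) (hR : 1 ≤ R) (hsR : s * R ≤ 1)
    (hz : ‖z‖ ≤ R) : s ^ j * x ≤ 2 ^ (j + a) * K * R ^ a := by
  have hz2 : 1 + ‖z‖ ≤ 2 * R := by linarith
  calc s ^ j * x ≤ s ^ j * (K * (2 * R) ^ (j + a)) := by
        gcongr
        exact hx.trans (by gcongr)
    _ = (s * R) ^ j * (2 ^ (j + a) * K * R ^ a) := by ring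
    _ ≤ 2 ^ (j + a) * K * R ^ a :=
      mul_le_of_le_one_left (by positivity) (pow_le_one₀ (by positivity) hsR)

lemma HasGrowth.pow_mul_abs_evalAt_le (hp : HasGrowth (j + a) C p) (hs : 0 ≤ s) (hR : 1 ≤ R)
    (hsR : s * R ≤ 1) (hz : ‖z‖ ≤ R) :
    s ^ j * |evalAt z p| ≤ 2 ^ (j + a) * C * R ^ a :=
  pow_mul_le_of_le_one_add_norm_pow hp.nonneg (hp.abs_evalAt_le z) hs hR hsR hz

lemma HasGrowth.pow_mul_norm_grad_le (hp : HasGrowth (j + a + 1) C p) (hs : 0 ≤ s) (hR : 1 ≤ R)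
    (hsR : s * R ≤ 1) (hz : ‖z‖ ≤ R) :
    s ^ j * ‖grad z p‖ ≤ 2 ^ (j + a) * (gradConst (j + a + 1) * C) * R ^ a :=
  pow_mul_le_of_le_one_add_norm_pow (mul_nonneg (gradConst_nonneg _) hp.nonneg)
    (hp.norm_grad_le z) hs hR hsR hz

end Ball

end Growth

section Parity

variable {ι : Type*} {m n : ZMod 2} {p q : MvPolynomial ι ℝ}

/-- All monomials of `p` have degree congruent to `n` modulo 2, i.e. `p (-z) = (-1) ^ n p z`. -/
def HasParity (n : ZMod 2) (p : MvPolynomial ι ℝ) : Prop :=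
  MvPolynomial.IsWeightedHomogeneous (fun _ : ι => (1 : ZMod 2)) p n

namespace HasParity

lemma sub (hp : HasParity n p) (hq : HasParity n q) : HasParity n (p - q) :=
  Submodule.sub_mem (MvPolynomial.weightedHomogeneousSubmodule ℝ _ n) hp hq

lemma add (hp : HasParity n p) (hq : HasParity n q) : HasParity n (p + q) :=
  Submodule.add_mem (MvPolynomial.weightedHomogeneousSubmodule ℝ _ n) hp hq

lemma smul (hp : HasParity n p) (a : ℝ) : HasParity n (a • p) :=
  Submodule.smul_mem (MvPolynomial.weightedHomogeneousSubmodule ℝ _ n) a hp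

lemma sum {κ : Type*} {s : Finset κ} {p : κ → MvPolynomial ι ℝ}
    (hp : ∀ k ∈ s, HasParity n (p k)) : HasParity n (∑ k ∈ s, p k) :=
  Submodule.sum_mem (MvPolynomial.weightedHomogeneousSubmodule ℝ _ n) hp

lemma zero : HasParity n (0 : MvPolynomial ι ℝ) :=
  MvPolynomial.isWeightedHomogeneous_zero ℝ _ n

lemma of_isHomogeneous {k : ℕ} (hp : p.IsHomogeneous k) : HasParity (k : ZMod 2) p := by
  intro s hs
  have h := hp hs
  rw [Finsupp.weight_apply] at h ⊢
  simp [← h, Finsupp.sum]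

lemma pderiv (hp : HasParity n p) (i : ι) : HasParity (n + 1) (MvPolynomial.pderiv i p) :=
  MvPolynomial.IsWeightedHomogeneous.pderiv hp <| by
    rw [add_assoc, CharTwo.add_self_eq_zero, add_zero]

lemma constantCoeff_eq_zero (hp : HasParity 1 p) : MvPolynomial.constantCoeff p = 0 := by
  rw [MvPolynomial.constantCoeff_eq]
  exact hp.coeff_eq_zero 0 (by simp)

variable [Fintype ι]

lemma laplacian (hp : HasParity n p) : HasParity n (laplacian p) := by
  rw [laplacian_apply]
  refine sum fun i _ => ?_
  simpa [add_assoc, CharTwo.add_self_eq_zero] using (hp.pderiv i).pderiv i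

lemma euler (hp : HasParity n p) : HasParity n (euler p) := by
  rw [euler_apply]
  refine sum fun i _ => ?_
  have := (MvPolynomial.isWeightedHomogeneous_X ℝ (fun _ : ι => (1 : ZMod 2)) i).mul (hp.pderiv i)
  rwa [add_left_comm, CharTwo.add_self_eq_zero, add_zero] at this

lemma gradInner (hp : HasParity m p) (hq : HasParity n q) : HasParity (m + n) (gradInner p q) := by
  rw [gradInner_apply]
  refine sum fun i _ => ?_
  have := (hp.pderiv i).mul (hq.pderiv i)
  rwa [add_add_add_comm, CharTwo.add_self_eq_zero, add_zero] at this

end HasParity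

end Parity

section OrnsteinUhlenbeck

variable {ι : Type*} [Fintype ι] {β C : ℝ} {m M : ℕ} {n : ZMod 2} {p : MvPolynomial ι ℝ}

/-- The Ornstein–Uhlenbeck operator `u ↦ z · ∇u - β⁻¹ Δu`. -/
def ornsteinUhlenbeck (β : ℝ) : MvPolynomial ι ℝ →ₗ[ℝ] MvPolynomial ι ℝ :=
  euler - β⁻¹ • laplacian

lemma ornsteinUhlenbeck_apply (β : ℝ) (p : MvPolynomial ι ℝ) :
    ornsteinUhlenbeck β p = euler p - β⁻¹ • laplacian p :=
  rfl

lemma HasParity.ornsteinUhlenbeck (hp : HasParity n p) : HasParity n (ornsteinUhlenbeck β p) :=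
  hp.euler.sub (hp.laplacian.smul β⁻¹)

/-- Removes the homogeneous part of degree `m + 1`, on which the Ornstein–Uhlenbeck operator acts
as multiplication by `m + 1` up to lower order terms. -/
def ouReduce (β : ℝ) (m : ℕ) (p : MvPolynomial ι ℝ) : MvPolynomial ι ℝ :=
  p - (m + 1 : ℝ)⁻¹ • ornsteinUhlenbeck β p

lemma totalDegree_ouReduce_le (hp : p.totalDegree ≤ m + 1) : (ouReduce β m p).totalDegree ≤ m := by
  refine Finset.sup_le fun s hs => ?_
  by_contra! hms
  change m < s.degree at hms
  refine MvPolynomial.mem_support_iff.1 hs ?_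
  have hlap : (laplacian p).coeff s = 0 := MvPolynomial.coeff_eq_zero_of_totalDegree_lt <|
    (totalDegree_laplacian_le p).trans_lt ((Nat.sub_le_of_le_add hp).trans_lt hms)
  have hcoeff : (ouReduce β m p).coeff s = (1 - (m + 1 : ℝ)⁻¹ * s.degree) * p.coeff s := by
    simp only [ouReduce, ornsteinUhlenbeck_apply, MvPolynomial.coeff_sub, MvPolynomial.coeff_smul,
      coeff_euler, hlap, smul_eq_mul]
    ring
  rw [hcoeff]
  obtain hs | hs := (Nat.succ_le_of_lt hms).eq_or_lt
  · rw [← hs, Nat.cast_succ, inv_mul_cancel₀ (by positivity), sub_self, zero_mul]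
  · rw [MvPolynomial.coeff_eq_zero_of_totalDegree_lt (hp.trans_lt hs), mul_zero]

lemma HasParity.ouReduce (hp : HasParity n p) : HasParity n (ouReduce β m p) :=
  hp.sub (hp.ornsteinUhlenbeck.smul _)

/-- The factor lost in `HasGrowth` by `ouReduce` on polynomials of degree at most `M`. -/
def ouConst (M : ℕ) : ℝ :=
  1 + (gradConst M + gradConst M ^ 2)

lemma one_le_ouConst (M : ℕ) : 1 ≤ ouConst M :=
  le_add_of_nonneg_right (add_nonneg (gradConst_nonneg M) (sq_nonneg _))

lemma HasGrowth.ouReduce (hp : HasGrowth M C p) (hβ : Fintype.card ι ≤ β) :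
    HasGrowth M (ouConst M * C) (ouReduce β m p) := by
  have hou := hp.euler.sub (hp.inv_smul_laplacian hβ)
  refine (hp.sub (hou.smul (m + 1 : ℝ)⁻¹)).mono le_rfl ?_
  rw [ouConst, add_mul, add_mul, one_mul, abs_of_nonneg (by positivity)]
  gcongr
  exact mul_le_of_le_one_left hou.nonneg
    (inv_le_one_of_one_le₀ (le_add_of_nonneg_left (Nat.cast_nonneg m)))

/-- The solution `u` of `ornsteinUhlenbeck β u = p - ouMean β m p` for `p` of degree at most `m`. -/
def ouInv (β : ℝ) : ℕ → MvPolynomial ι ℝ → MvPolynomial ι ℝ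
  | 0, _ => 0
  | m + 1, p => (m + 1 : ℝ)⁻¹ • p + ouInv β m (ouReduce β m p)

/-- The mean of `p` under the Gaussian measure of variance `β⁻¹` for `p` of degree at most `m`,
in the form of the solvability constant of `ornsteinUhlenbeck β u = p - c`. -/
def ouMean (β : ℝ) : ℕ → MvPolynomial ι ℝ → ℝ
  | 0, p => MvPolynomial.constantCoeff p
  | m + 1, p => ouMean β m (ouReduce β m p)

lemma ornsteinUhlenbeck_ouInv (hp : p.totalDegree ≤ m) :
    ornsteinUhlenbeck β (ouInv β m p) = p - MvPolynomial.C (ouMean β m p) := by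
  induction m generalizing p with
  | zero =>
    rw [ouInv, ouMean, map_zero, MvPolynomial.constantCoeff_eq,
      ← MvPolynomial.totalDegree_eq_zero_iff_eq_C.1 (Nat.le_zero.1 hp), sub_self]
  | succ m ih =>
    rw [ouInv, ouMean, map_add, ih (totalDegree_ouReduce_le hp), map_smul]
    simp only [ouReduce]
    abel

lemma HasGrowth.ouInv (hp : HasGrowth M C p) (hβ : Fintype.card ι ≤ β) (m : ℕ) :
    HasGrowth M (m * ouConst M ^ m * C) (ouInv β m p) := by
  induction m generalizing p C with
  | zero => simpa [LaplaceExpansion.ouInv] using zero.mono (Nat.zero_le M) le_rfl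
  | succ m ih =>
    have hC := hp.nonneg
    have hm : |(m + 1 : ℝ)⁻¹| * C ≤ ouConst M ^ (m + 1) * C := by
      rw [abs_of_nonneg (by positivity)]
      gcongr
      exact (inv_le_one_of_one_le₀ (le_add_of_nonneg_left (Nat.cast_nonneg m))).trans
        (one_le_pow₀ (one_le_ouConst M))
    refine ((hp.smul _).add (ih (hp.ouReduce hβ))).mono le_rfl ?_
    calc _ ≤ ouConst M ^ (m + 1) * C + m * ouConst M ^ m * (ouConst M * C) := by gcongr
      _ = _ := by push_cast; ring

lemma HasGrowth.abs_ouMean_le (hp : HasGrowth M C p) (hβ : Fintype.card ι ≤ β) (m : ℕ) :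
    |ouMean β m p| ≤ ouConst M ^ m * C := by
  induction m generalizing p C with
  | zero => simpa [ouMean, evalAt, MvPolynomial.aeval_zero] using hp.abs_evalAt_le 0
  | succ m ih =>
    refine (ih (hp.ouReduce hβ)).trans_eq ?_
    ring

lemma HasParity.ouInv (hp : HasParity n p) (m : ℕ) : HasParity n (ouInv β m p) := by
  induction m generalizing p with
  | zero => exact zero
  | succ m ih => exact (hp.smul _).add (ih hp.ouReduce)

lemma HasParity.ouMean_eq_zero (hp : HasParity 1 p) (m : ℕ) : ouMean β m p = 0 := by
  induction m generalizing p with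
  | zero => exact hp.constantCoeff_eq_zero
  | succ m ih => exact ih hp.ouReduce

end OrnsteinUhlenbeck

section Correctors

variable {ι : Type*} [Fintype ι]

/-- The polynomial `‖z‖² / 2`. -/
def halfNormSq : MvPolynomial ι ℝ :=
  (1 / 2 : ℝ) • ∑ i, MvPolynomial.X i ^ 2

@[simp]
lemma evalAt_halfNormSq (z : EuclideanSpace ℝ ι) : evalAt z halfNormSq = ‖z‖ ^ 2 / 2 := by
  simp [halfNormSq, EuclideanSpace.norm_sq_eq]
  ring

lemma isHomogeneous_halfNormSq : (halfNormSq : MvPolynomial ι ℝ).IsHomogeneous 2 :=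
  (MvPolynomial.homogeneousSubmodule ι ℝ 2).smul_mem _ <|
    (MvPolynomial.homogeneousSubmodule ι ℝ 2).sum_mem fun i _ =>
      MvPolynomial.isHomogeneous_X_pow i 2

lemma hasGrowth_halfNormSq {C : ℝ} (hC : 1 ≤ C) :
    HasGrowth 2 C (halfNormSq : MvPolynomial ι ℝ) where
  totalDegree_le := isHomogeneous_halfNormSq.totalDegree_le
  abs_evalAt_le z := by
    rw [evalAt_halfNormSq, abs_of_nonneg (by positivity)]
    nlinarith [norm_nonneg z, sq_nonneg ‖z‖, mul_le_mul_of_nonneg_right hC (sq_nonneg (1 + ‖z‖))]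

lemma gradInner_halfNormSq (p : MvPolynomial ι ℝ) : gradInner halfNormSq p = euler p := by
  classical
  rw [gradInner_apply, euler_apply]
  refine Finset.sum_congr rfl fun i _ => ?_
  congr 1
  simp only [halfNormSq, Derivation.map_smul, map_sum, MvPolynomial.pderiv_pow,
    MvPolynomial.pderiv_X, Pi.single_apply, mul_ite, mul_one, mul_zero, Finset.sum_ite_eq',
    Finset.mem_univ, if_true]
  rw [MvPolynomial.smul_eq_C_mul, Nat.cast_ofNat, pow_one, ← mul_assoc,
    ← map_ofNat (MvPolynomial.C (σ := ι) (R := ℝ)) 2, ← MvPolynomial.C_mul]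
  norm_num

/-- The coefficients of a potential `∑ k ≤ N, s ^ k v k` perturbing `‖z‖² / 2`: the polynomial
`v k` grows like `C (1 + ‖z‖) ^ (k + 2)` and has the parity of `k`. -/
structure IsPotential (N : ℕ) (C : ℝ) (v : ℕ → MvPolynomial ι ℝ) : Prop where
  zero_eq : v 0 = halfNormSq
  growth : ∀ k ≤ N, HasGrowth (k + 2) C (v k)
  parity : ∀ k ≤ N, HasParity (k : ZMod 2) (v k)

variable {N j : ℕ} {β C : ℝ} {v : ℕ → MvPolynomial ι ℝ}

/-- The coefficient of `s ^ j` in the vector field `∇U`, `U = ∑ j, s ^ j corrector β v j`, which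
transports the measures `exp (-β V)`, `V = ∑ k, s ^ k v k`, as `s` varies. -/
def corrector (β : ℝ) (v : ℕ → MvPolynomial ι ℝ) (j : ℕ) : MvPolynomial ι ℝ :=
  ouInv β (j + 3) ((j + 1 : ℝ) • v (j + 1) - ∑ i : Fin j, gradInner (v (j - i)) (corrector β v i))
termination_by j
decreasing_by exact i.isLt

/-- The right-hand side of the Ornstein–Uhlenbeck equation solved by `corrector β v j`. -/
def correctorSource (β : ℝ) (v : ℕ → MvPolynomial ι ℝ) (j : ℕ) : MvPolynomial ι ℝ :=
  (j + 1 : ℝ) • v (j + 1) - ∑ i ∈ Finset.range j, gradInner (v (j - i)) (corrector β v i)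

/-- The solvability constant of the equation for `corrector β v j`; up to the factor `-β` it is the
coefficient of `s ^ j` in the logarithmic derivative of `∫ exp (-β V)`. -/
def correctorMean (β : ℝ) (v : ℕ → MvPolynomial ι ℝ) (j : ℕ) : ℝ :=
  ouMean β (j + 3) (correctorSource β v j)

lemma corrector_eq (β : ℝ) (v : ℕ → MvPolynomial ι ℝ) (j : ℕ) :
    corrector β v j = ouInv β (j + 3) (correctorSource β v j) := by
  rw [corrector, correctorSource, Finset.sum_range]

/-- The growth constant of `corrector β v j` when `v` has growth constant `C`. -/
def correctorConst (C : ℝ) (j : ℕ) : ℝ :=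
  (j + 3) * ouConst (j + 3) ^ (j + 3) * ((j + 1) * C +
    ∑ i : Fin j, gradConst (j - i + 2) * C * (gradConst (i + 3) * correctorConst C i))
termination_by j
decreasing_by exact i.isLt

/-- The growth constant of `correctorSource β v j` when `v` has growth constant `C`. -/
def correctorSourceConst (C : ℝ) (j : ℕ) : ℝ :=
  (j + 1) * C + ∑ i ∈ Finset.range j,
    gradConst (j - i + 2) * C * (gradConst (i + 3) * correctorConst C i)

lemma correctorConst_eq (C : ℝ) (j : ℕ) :
    correctorConst C j = (j + 3) * ouConst (j + 3) ^ (j + 3) * correctorSourceConst C j := by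
  rw [correctorConst, correctorSourceConst, Finset.sum_range]

lemma correctorConst_nonneg (hC : 0 ≤ C) (j : ℕ) : 0 ≤ correctorConst C j := by
  induction j using Nat.strong_induction_on with
  | _ j ih =>
    rw [correctorConst]
    have hou := zero_le_one.trans (one_le_ouConst (j + 3))
    have hsum : 0 ≤ ∑ i : Fin j,
        gradConst (j - i + 2) * C * (gradConst (i + 3) * correctorConst C i) :=
      Finset.sum_nonneg fun i _ => mul_nonneg (mul_nonneg (gradConst_nonneg _) hC)
        (mul_nonneg (gradConst_nonneg _) (ih i i.isLt))
    positivity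

namespace IsPotential

lemma hasGrowth_correctorSource (hv : IsPotential N C v) (hj : j < N)
    (hu : ∀ i < j, HasGrowth (i + 3) (correctorConst C i) (corrector β v i)) :
    HasGrowth (j + 3) (correctorSourceConst C j) (correctorSource β v j) := by
  refine HasGrowth.sub ?_ (HasGrowth.sum fun i hi => ?_)
  · simpa [abs_of_nonneg (by positivity : (0 : ℝ) ≤ j + 1)] using
      (hv.growth (j + 1) hj).smul (j + 1 : ℝ)
  · have hij := Finset.mem_range.1 hi
    have := (hv.growth (j - i) (by omega)).gradInner (hu i hij)
    rwa [show j - i + 1 + (i + 2) = j + 3 by omega] at this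

lemma hasGrowth_corrector (hv : IsPotential N C v) (hβ : Fintype.card ι ≤ β) (hj : j < N) :
    HasGrowth (j + 3) (correctorConst C j) (corrector β v j) := by
  induction j using Nat.strong_induction_on with
  | _ j ih =>
    rw [corrector_eq, correctorConst_eq]
    simpa using (hv.hasGrowth_correctorSource hj fun i hi => ih i hi (hi.trans hj)).ouInv hβ (j + 3)

lemma abs_correctorMean_le (hv : IsPotential N C v) (hβ : Fintype.card ι ≤ β) (hj : j < N) :
    |correctorMean β v j| ≤ correctorConst C j := by
  have hsource := hv.hasGrowth_correctorSource hj fun i hi =>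
    hv.hasGrowth_corrector hβ (hi.trans hj)
  rw [correctorConst_eq, mul_assoc]
  refine (hsource.abs_ouMean_le hβ (j + 3)).trans (le_mul_of_one_le_left ?_ ?_)
  · exact mul_nonneg (pow_nonneg (zero_le_one.trans (one_le_ouConst _)) _) hsource.nonneg
  · linarith [(Nat.cast_nonneg j : (0 : ℝ) ≤ j)]

lemma hasParity_correctorSource (hv : IsPotential N C v) (hj : j < N)
    (hu : ∀ i < j, HasParity ((i + 1 : ℕ) : ZMod 2) (corrector β v i)) :
    HasParity ((j + 1 : ℕ) : ZMod 2) (correctorSource β v j) := by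
  refine ((hv.parity (j + 1) hj).smul _).sub (HasParity.sum fun i hi => ?_)
  have hij := Finset.mem_range.1 hi
  have := (hv.parity (j - i) (by omega)).gradInner (hu i hij)
  rwa [← Nat.cast_add, show j - i + (i + 1) = j + 1 by omega] at this

lemma hasParity_corrector (hv : IsPotential N C v) (hj : j < N) :
    HasParity ((j + 1 : ℕ) : ZMod 2) (corrector β v j) := by
  induction j using Nat.strong_induction_on with
  | _ j ih =>
    rw [corrector_eq]
    exact (hv.hasParity_correctorSource hj fun i hi => ih i hi (hi.trans hj)).ouInv _

lemma correctorMean_eq_zero_of_even (hv : IsPotential N C v) (hj : j < N) (hj_even : Even j) :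
    correctorMean β v j = 0 := by
  have hsource := hv.hasParity_correctorSource (β := β) hj
    fun i hi => hv.hasParity_corrector (hi.trans hj)
  rw [(ZMod.natCast_eq_one_iff_odd).2 hj_even.add_one] at hsource
  exact hsource.ouMean_eq_zero _

lemma sum_gradInner_corrector_sub (hv : IsPotential N C v) (hβ : Fintype.card ι ≤ β) (hj : j < N) :
    ∑ i ∈ Finset.range (j + 1), gradInner (v (j - i)) (corrector β v i) -
        β⁻¹ • laplacian (corrector β v j) =
      (j + 1 : ℝ) • v (j + 1) - MvPolynomial.C (correctorMean β v j) := by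
  have hsource := hv.hasGrowth_correctorSource hj fun i hi =>
    hv.hasGrowth_corrector hβ (hi.trans hj)
  have hou : euler (corrector β v j) - β⁻¹ • laplacian (corrector β v j) =
      correctorSource β v j - MvPolynomial.C (correctorMean β v j) := by
    rw [corrector_eq]
    exact ornsteinUhlenbeck_ouInv hsource.totalDegree_le
  rw [Finset.sum_range_succ, Nat.sub_self, hv.zero_eq, gradInner_halfNormSq, add_sub_assoc, hou,
    correctorSource]
  abel

end IsPotential

/-- The finite sum `∑ k < n, s ^ k w k`. -/
def truncation (n : ℕ) (w : ℕ → MvPolynomial ι ℝ) (s : ℝ) : MvPolynomial ι ℝ :=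
  ∑ k ∈ Finset.range n, s ^ k • w k

/-- The terms of order at least `N` in the product `gradInner (∑ k ≤ N, s ^ k v k)
(∑ j < N, s ^ j u j)`. -/
def crossRemainder (N : ℕ) (v u : ℕ → MvPolynomial ι ℝ) (s : ℝ) : MvPolynomial ι ℝ :=
  ∑ i ∈ Finset.range N, ∑ k ∈ Finset.Ico (N - i) (N + 1), s ^ (i + k) • gradInner (v k) (u i)

lemma gradInner_truncation (N : ℕ) (v u : ℕ → MvPolynomial ι ℝ) (s : ℝ) :
    gradInner (truncation (N + 1) v s) (truncation N u s) =
      truncation N (fun j => ∑ i ∈ Finset.range (j + 1), gradInner (v (j - i)) (u i)) s +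
        crossRemainder N v u s := by
  have hcauchy : truncation N (fun j => ∑ i ∈ Finset.range (j + 1), gradInner (v (j - i)) (u i)) s =
      ∑ i ∈ Finset.range N, ∑ k ∈ Finset.range (N - i), s ^ (i + k) • gradInner (v k) (u i) := by
    rw [← Finset.sum_range_diag_flip N fun i k => s ^ (i + k) • gradInner (v k) (u i), truncation]
    refine Finset.sum_congr rfl fun j _ => ?_
    rw [Finset.smul_sum]
    refine Finset.sum_congr rfl fun i hi => ?_
    rw [Nat.add_sub_cancel' (Nat.lt_succ_iff.1 (Finset.mem_range.1 hi))]
  rw [hcauchy, crossRemainder, ← Finset.sum_add_distrib]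
  simp only [truncation, map_sum, map_smul, LinearMap.sum_apply, LinearMap.smul_apply]
  refine Finset.sum_congr rfl fun i _ => ?_
  rw [Finset.sum_range_add_sum_Ico _ (by omega), Finset.smul_sum]
  refine Finset.sum_congr rfl fun k _ => ?_
  rw [smul_smul, pow_add]

/-- The derivative of `truncation (N + 1) v s` in `s`. -/
def truncationDeriv (N : ℕ) (v : ℕ → MvPolynomial ι ℝ) (s : ℝ) : MvPolynomial ι ℝ :=
  truncation N (fun j => (j + 1 : ℝ) • v (j + 1)) s

lemma IsPotential.gradInner_truncation_sub_laplacian (hv : IsPotential N C v)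
    (hβ : Fintype.card ι ≤ β) (s : ℝ) :
    gradInner (truncation (N + 1) v s) (truncation N (corrector β v) s) -
        β⁻¹ • laplacian (truncation N (corrector β v) s) =
      truncationDeriv N v s - MvPolynomial.C (∑ j ∈ Finset.range N, s ^ j * correctorMean β v j) +
        crossRemainder N v (corrector β v) s := by
  rw [gradInner_truncation, add_sub_right_comm]
  congr 1
  simp only [truncation, truncationDeriv, map_sum, map_smul, Finset.smul_sum (r := β⁻¹)]
  rw [← Finset.sum_sub_distrib, ← Finset.sum_sub_distrib]
  refine Finset.sum_congr rfl fun j hj => ?_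
  rw [MvPolynomial.C_mul, ← MvPolynomial.smul_eq_C_mul, smul_comm β⁻¹, ← smul_sub, ← smul_sub,
    hv.sum_gradInner_corrector_sub hβ (Finset.mem_range.1 hj)]

end Correctors

section BallBounds

variable {ι : Type*} [Fintype ι] {N n a : ℕ} {β C s R : ℝ} {v w : ℕ → MvPolynomial ι ℝ}
  {z : EuclideanSpace ℝ ι}

omit [Fintype ι] in
lemma evalAt_truncation (n : ℕ) (w : ℕ → MvPolynomial ι ℝ) (s : ℝ) (z : EuclideanSpace ℝ ι) :
    evalAt z (truncation n w s) = ∑ k ∈ Finset.range n, s ^ k * evalAt z (w k) := by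
  simp [truncation]

lemma abs_evalAt_truncation_le {D : ℕ → ℝ} (hw : ∀ j < n, HasGrowth (j + a) (D j) (w j))
    (hs : 0 ≤ s) (hR : 1 ≤ R) (hsR : s * R ≤ 1) (hz : ‖z‖ ≤ R) :
    |evalAt z (truncation n w s)| ≤ (∑ j ∈ Finset.range n, 2 ^ (j + a) * D j) * R ^ a := by
  rw [evalAt_truncation, Finset.sum_mul]
  refine Finset.abs_sum_le_sum_abs _ _ |>.trans (Finset.sum_le_sum fun j hj => ?_)
  rw [abs_mul, abs_of_nonneg (pow_nonneg hs j)]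
  exact (hw j (Finset.mem_range.1 hj)).pow_mul_abs_evalAt_le hs hR hsR hz

lemma norm_grad_truncation_le {D : ℕ → ℝ} (hw : ∀ j < n, HasGrowth (j + a + 1) (D j) (w j))
    (hs : 0 ≤ s) (hR : 1 ≤ R) (hsR : s * R ≤ 1) (hz : ‖z‖ ≤ R) :
    ‖grad z (truncation n w s)‖ ≤
      (∑ j ∈ Finset.range n, 2 ^ (j + a) * (gradConst (j + a + 1) * D j)) * R ^ a := by
  rw [truncation, map_sum, Finset.sum_mul]
  refine norm_sum_le _ _ |>.trans (Finset.sum_le_sum fun j hj => ?_)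
  rw [map_smul, norm_smul, Real.norm_of_nonneg (pow_nonneg hs j)]
  exact (hw j (Finset.mem_range.1 hj)).pow_mul_norm_grad_le hs hR hsR hz

/-- The constant of `IsPotential.abs_evalAt_truncationDeriv_le`. -/
def truncationDerivConst (N : ℕ) (C : ℝ) : ℝ :=
  ∑ j ∈ Finset.range N, 2 ^ (j + 3) * ((j + 1) * C)

/-- The constant of `IsPotential.norm_grad_truncation_corrector_le`. -/
def velocityConst (N : ℕ) (C : ℝ) : ℝ :=
  ∑ j ∈ Finset.range N, 2 ^ (j + 2) * (gradConst (j + 3) * correctorConst C j)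

/-- The constant of `IsPotential.abs_sum_correctorMean_le`. -/
def meanConst (N : ℕ) (C : ℝ) : ℝ :=
  ∑ j ∈ Finset.range N, correctorConst C j

/-- The constant of `IsPotential.abs_evalAt_crossRemainder_le`. -/
def crossConst (N : ℕ) (C : ℝ) : ℝ :=
  ∑ i ∈ Finset.range N, ∑ k ∈ Finset.Ico (N - i) (N + 1),
    2 ^ (k + i + 3) * (gradConst (k + 2) * C * (gradConst (i + 3) * correctorConst C i))

lemma truncationDerivConst_nonneg (hC : 0 ≤ C) (N : ℕ) : 0 ≤ truncationDerivConst N C :=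
  Finset.sum_nonneg fun _ _ => by positivity

lemma velocityConst_nonneg (hC : 0 ≤ C) (N : ℕ) : 0 ≤ velocityConst N C :=
  Finset.sum_nonneg fun j _ =>
    mul_nonneg (by positivity) (mul_nonneg (gradConst_nonneg _) (correctorConst_nonneg hC j))

lemma meanConst_nonneg (hC : 0 ≤ C) (N : ℕ) : 0 ≤ meanConst N C :=
  Finset.sum_nonneg fun j _ => correctorConst_nonneg hC j

lemma crossConst_nonneg (hC : 0 ≤ C) (N : ℕ) : 0 ≤ crossConst N C :=
  Finset.sum_nonneg fun i _ => Finset.sum_nonneg fun _ _ =>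
    mul_nonneg (by positivity) (mul_nonneg (mul_nonneg (gradConst_nonneg _) hC)
      (mul_nonneg (gradConst_nonneg _) (correctorConst_nonneg hC i)))

namespace IsPotential

lemma abs_evalAt_truncationDeriv_le (hv : IsPotential N C v) (hs : 0 ≤ s) (hR : 1 ≤ R)
    (hsR : s * R ≤ 1) (hz : ‖z‖ ≤ R) :
    |evalAt z (truncationDeriv N v s)| ≤ truncationDerivConst N C * R ^ 3 := by
  refine abs_evalAt_truncation_le (fun j hj => ?_) hs hR hsR hz
  simpa [abs_of_nonneg (by positivity : (0 : ℝ) ≤ j + 1)] using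
    (hv.growth (j + 1) hj).smul (j + 1 : ℝ)

lemma norm_grad_truncation_corrector_le (hv : IsPotential N C v) (hβ : Fintype.card ι ≤ β)
    (hs : 0 ≤ s) (hR : 1 ≤ R) (hsR : s * R ≤ 1) (hz : ‖z‖ ≤ R) :
    ‖grad z (truncation N (corrector β v) s)‖ ≤ velocityConst N C * R ^ 2 :=
  norm_grad_truncation_le (fun _ hj => hv.hasGrowth_corrector hβ hj) hs hR hsR hz

lemma abs_sum_correctorMean_le (hv : IsPotential N C v) (hβ : Fintype.card ι ≤ β)
    (hs : 0 ≤ s) (hs1 : s ≤ 1) :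
    |∑ j ∈ Finset.range N, s ^ j * correctorMean β v j| ≤ meanConst N C := by
  refine Finset.abs_sum_le_sum_abs _ _ |>.trans (Finset.sum_le_sum fun j hj => ?_)
  rw [abs_mul, abs_of_nonneg (pow_nonneg hs j)]
  exact (mul_le_of_le_one_left (abs_nonneg _) (pow_le_one₀ hs hs1)).trans
    (hv.abs_correctorMean_le hβ (Finset.mem_range.1 hj))

lemma abs_evalAt_crossRemainder_le (hv : IsPotential N C v) (hβ : Fintype.card ι ≤ β)
    (hs : 0 ≤ s) (hR : 1 ≤ R) (hsR : s * R ≤ 1) (hz : ‖z‖ ≤ R) :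
    |evalAt z (crossRemainder N v (corrector β v) s)| ≤
      crossConst N C * (s ^ N * R ^ (N + 3)) := by
  rw [crossRemainder, map_sum, crossConst, Finset.sum_mul]
  refine Finset.abs_sum_le_sum_abs _ _ |>.trans (Finset.sum_le_sum fun i hi => ?_)
  rw [map_sum, Finset.sum_mul]
  refine Finset.abs_sum_le_sum_abs _ _ |>.trans (Finset.sum_le_sum fun k hk => ?_)
  obtain ⟨hNk, hkN⟩ := Finset.mem_Ico.1 hk
  obtain ⟨l, hl⟩ : ∃ l, i + k = N + l := ⟨i + k - N, by omega⟩
  have hgrowth := (hv.growth k (Nat.lt_succ_iff.1 hkN)).gradInner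
    (hv.hasGrowth_corrector hβ (Finset.mem_range.1 hi))
  rw [show k + 1 + (i + 2) = l + (N + 3) by omega] at hgrowth
  have := hgrowth.pow_mul_abs_evalAt_le hs hR hsR hz
  rw [map_smul, smul_eq_mul, abs_mul, abs_of_nonneg (pow_nonneg hs _), hl,
    show k + i + 3 = l + (N + 3) by omega, pow_add, mul_assoc]
  calc s ^ N * (s ^ l * |evalAt z (gradInner (v k) (corrector β v i))|)
      ≤ s ^ N * (2 ^ (l + (N + 3)) *
          (gradConst (k + 2) * C * (gradConst (i + 3) * correctorConst C i)) * R ^ (N + 3)) := by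
        gcongr
    _ = _ := by ring

lemma pow_mul_abs_evalAt_le (hv : IsPotential N C v) (hs : 0 ≤ s) (hR : 1 ≤ R)
    (hsR : 2 * (s * R) ≤ 1) {k : ℕ} (hk : k < N) (hz : ‖z‖ ≤ R) :
    s ^ (k + 1) * |evalAt z (v (k + 1))| ≤ C * (2 * (s * R)) * (1 + ‖z‖) ^ 2 := by
  have hgrowth := hv.growth (k + 1) hk
  have hC := hgrowth.nonneg
  have hz2 : s * (1 + ‖z‖) ≤ 2 * (s * R) := by nlinarith
  calc s ^ (k + 1) * |evalAt z (v (k + 1))|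
      ≤ s ^ (k + 1) * (C * (1 + ‖z‖) ^ (k + 1 + 2)) := by gcongr; exact hgrowth.abs_evalAt_le z
    _ = C * (s * (1 + ‖z‖)) ^ (k + 1) * (1 + ‖z‖) ^ 2 := by rw [mul_pow, pow_add _ (k + 1) 2]; ring
    _ ≤ C * (2 * (s * R)) ^ (k + 1) * (1 + ‖z‖) ^ 2 := by gcongr
    _ ≤ C * (2 * (s * R)) * (1 + ‖z‖) ^ 2 := by
        gcongr
        exact pow_le_of_le_one (by positivity) hsR k.succ_ne_zero

lemma abs_evalAt_truncation_sub_le (hv : IsPotential N C v) (hs : 0 ≤ s) (hR : 1 ≤ R)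
    (hsR : 2 * (s * R) ≤ 1) (hNsR : 32 * N * C * (s * R) ≤ 1) (hz : ‖z‖ ≤ R) :
    |evalAt z (truncation (N + 1) v s) - ‖z‖ ^ 2 / 2| ≤ ‖z‖ ^ 2 / 8 + 1 / 8 := by
  rw [evalAt_truncation, Finset.sum_range_succ', hv.zero_eq, evalAt_halfNormSq, pow_zero, one_mul,
    add_sub_cancel_right]
  calc |∑ k ∈ Finset.range N, s ^ (k + 1) * evalAt z (v (k + 1))|
      ≤ ∑ _k ∈ Finset.range N, C * (2 * (s * R)) * (1 + ‖z‖) ^ 2 := by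
        refine Finset.abs_sum_le_sum_abs _ _ |>.trans (Finset.sum_le_sum fun k hk => ?_)
        rw [abs_mul, abs_of_nonneg (pow_nonneg hs _)]
        exact hv.pow_mul_abs_evalAt_le hs hR hsR (Finset.mem_range.1 hk) hz
    _ = 32 * N * C * (s * R) * ((1 + ‖z‖) ^ 2 / 16) := by
        rw [Finset.sum_const, Finset.card_range, nsmul_eq_mul]
        ring
    _ ≤ (1 + ‖z‖) ^ 2 / 16 := mul_le_of_le_one_left (by positivity) hNsR
    _ ≤ ‖z‖ ^ 2 / 8 + 1 / 8 := by nlinarith [sq_nonneg (‖z‖ - 1)]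

end IsPotential

end BallBounds

section IntegrationByParts

lemma fderiv_evalAt_mul_exp_single {ι : Type*} [Finite ι] [DecidableEq ι] (β : ℝ)
    (V q : MvPolynomial ι ℝ) (i : ι) (z : EuclideanSpace ℝ ι) :
    fderiv ℝ (fun z => evalAt z q * exp (-(β * evalAt z V))) z (EuclideanSpace.single i 1) =
      (evalAt z (MvPolynomial.pderiv i q) -
        β * (evalAt z (MvPolynomial.pderiv i V) * evalAt z q)) * exp (-(β * evalAt z V)) := by
  have := Fintype.ofFinite ι
  have hq := (hasGradientAt_evalAt q z).hasFDerivAt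
  have hV := (hasGradientAt_evalAt V z).hasFDerivAt
  rw [(hq.fun_mul (hV.const_mul β).fun_neg.exp).fderiv]
  simp [EuclideanSpace.inner_single_right]
  ring

variable {ι : Type*} [Fintype ι] {χ : EuclideanSpace ℝ ι → ℝ}

lemma integral_mul_pderiv_mul_exp [DecidableEq ι] (hχ : ContDiff ℝ 1 χ)
    (hχ_supp : HasCompactSupport χ) (β : ℝ) (V q : MvPolynomial ι ℝ) (i : ι) :
    ∫ z, χ z * ((evalAt z (MvPolynomial.pderiv i q) -
        β * (evalAt z (MvPolynomial.pderiv i V) * evalAt z q)) * exp (-(β * evalAt z V))) =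
      -∫ z, fderiv ℝ χ z (EuclideanSpace.single i 1) *
        (evalAt z q * exp (-(β * evalAt z V))) := by
  simp only [← fderiv_evalAt_mul_exp_single]
  refine integral_mul_fderiv_eq_neg_fderiv_mul_of_integrable ?_ ?_ ?_ ?_ ?_
  · refine Continuous.integrable_of_hasCompactSupport ?_ (hχ_supp.fderiv_apply (𝕜 := ℝ) _).mul_right
    have := hχ.continuous_fderiv one_ne_zero
    fun_prop
  · refine Continuous.integrable_of_hasCompactSupport ?_ hχ_supp.mul_right
    simp only [fderiv_evalAt_mul_exp_single]
    have := hχ.continuous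
    fun_prop
  · refine Continuous.integrable_of_hasCompactSupport ?_ hχ_supp.mul_right
    have := hχ.continuous
    fun_prop
  · exact fun z _ => hχ.differentiable one_ne_zero z
  · exact fun z _ => (hasGradientAt_evalAt q z).hasFDerivAt.differentiableAt.mul
      ((hasGradientAt_evalAt V z).hasFDerivAt.differentiableAt.const_mul β).neg.exp

lemma integral_mul_laplacian_sub_mul_exp (hχ : ContDiff ℝ 1 χ) (hχ_supp : HasCompactSupport χ)
    (β : ℝ) (V U : MvPolynomial ι ℝ) :
    ∫ z, χ z * (evalAt z (laplacian U - β • gradInner V U) * exp (-(β * evalAt z V))) =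
      -∫ z, fderiv ℝ χ z (grad z U) * exp (-(β * evalAt z V)) := by
  classical
  have := hχ.continuous
  have := hχ.continuous_fderiv one_ne_zero
  have hdiv (z : EuclideanSpace ℝ ι) :
      χ z * (evalAt z (laplacian U - β • gradInner V U) * exp (-(β * evalAt z V))) =
        ∑ i, χ z * ((evalAt z (MvPolynomial.pderiv i (MvPolynomial.pderiv i U)) -
          β * (evalAt z (MvPolynomial.pderiv i V) * evalAt z (MvPolynomial.pderiv i U))) *
            exp (-(β * evalAt z V))) := by
    rw [← Finset.mul_sum, ← Finset.sum_mul, Finset.sum_sub_distrib, ← Finset.mul_sum]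
    simp [laplacian_apply, gradInner_apply]
  have hfderiv (z : EuclideanSpace ℝ ι) :
      fderiv ℝ χ z (grad z U) * exp (-(β * evalAt z V)) =
        ∑ i, fderiv ℝ χ z (EuclideanSpace.single i 1) *
          (evalAt z (MvPolynomial.pderiv i U) * exp (-(β * evalAt z V))) := by
    have hbasis := ((EuclideanSpace.basisFun ι ℝ).sum_repr (grad z U)).symm
    simp only [EuclideanSpace.basisFun_repr, EuclideanSpace.basisFun_apply] at hbasis
    rw [hbasis, map_sum, Finset.sum_mul]
    refine Finset.sum_congr rfl fun i _ => ?_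
    rw [map_smul, grad_apply, smul_eq_mul]
    ring
  simp only [hdiv, hfderiv]
  rw [integral_finsetSum, integral_finsetSum, ← Finset.sum_neg_distrib]
  · exact Finset.sum_congr rfl fun i _ => integral_mul_pderiv_mul_exp hχ hχ_supp β V _ i
  · exact fun i _ => Continuous.integrable_of_hasCompactSupport (by fun_prop)
      (hχ_supp.fderiv_apply (𝕜 := ℝ) _).mul_right
  · exact fun i _ => Continuous.integrable_of_hasCompactSupport (by fun_prop) hχ_supp.mul_right

end IntegrationByParts

section Cutoff

/-- A bump function on `ℝ` equal to `1` on `[-1/4, 1/4]` and supported in `[-1, 1]`. -/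
def cutoffProfile : ContDiffBump (0 : ℝ) :=
  ⟨1 / 4, 1, by norm_num, by norm_num⟩

/-- The Lipschitz constant of `cutoffProfile`. -/
def cutoffSlope : ℝ :=
  ⨆ t, ‖deriv cutoffProfile t‖

lemma norm_deriv_cutoffProfile_le (t : ℝ) : ‖deriv cutoffProfile t‖ ≤ cutoffSlope :=
  le_ciSup ((cutoffProfile.contDiff.continuous_deriv (n := 1) le_rfl).norm
    |>.bddAbove_range_of_hasCompactSupport cutoffProfile.hasCompactSupport.deriv.norm) t

lemma cutoffSlope_nonneg : 0 ≤ cutoffSlope :=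
  (norm_nonneg _).trans (norm_deriv_cutoffProfile_le 0)

variable {E : Type*} [NormedAddCommGroup E] {R : ℝ} {z : E}

/-- A smooth function equal to `1` for `‖z‖ ≤ R / 2` and to `0` for `R ≤ ‖z‖`. -/
def cutoff (R : ℝ) (z : E) : ℝ :=
  cutoffProfile (‖z‖ ^ 2 / R ^ 2)

/-- The set `R / 2 ≤ ‖z‖ ≤ R` on which `cutoff R` varies. -/
def shell (E : Type*) [NormedAddCommGroup E] (R : ℝ) : Set E :=
  Metric.closedBall 0 R \ Metric.ball 0 (R / 2)

lemma mem_shell : z ∈ shell E R ↔ ‖z‖ ≤ R ∧ R / 2 ≤ ‖z‖ := by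
  simp [shell]

lemma shell_subset_closedBall : shell E R ⊆ Metric.closedBall 0 R :=
  Set.sdiff_subset

lemma cutoff_mem_Icc (R : ℝ) (z : E) : cutoff R z ∈ Set.Icc (0 : ℝ) 1 :=
  ⟨cutoffProfile.nonneg, cutoffProfile.le_one⟩

lemma cutoff_eq_one (hR : 0 < R) (hz : ‖z‖ ≤ R / 2) : cutoff R z = 1 := by
  refine cutoffProfile.one_of_mem_closedBall ?_
  rw [mem_closedBall_zero_iff, Real.norm_of_nonneg (by positivity), div_le_iff₀ (by positivity)]
  change ‖z‖ ^ 2 ≤ 1 / 4 * R ^ 2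
  nlinarith [norm_nonneg z]

lemma cutoff_eq_zero (hR : 0 < R) (hz : R ≤ ‖z‖) : cutoff R z = 0 := by
  refine cutoffProfile.zero_of_le_dist ?_
  rw [dist_zero_right, Real.norm_of_nonneg (by positivity), le_div_iff₀ (by positivity)]
  change 1 * R ^ 2 ≤ ‖z‖ ^ 2
  nlinarith [norm_nonneg z]

lemma measurableSet_shell [MeasurableSpace E] [OpensMeasurableSpace E] (R : ℝ) :
    MeasurableSet (shell E R) :=
  measurableSet_closedBall.diff measurableSet_ball

lemma hasCompactSupport_cutoff [ProperSpace E] (hR : 0 < R) :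
    HasCompactSupport (cutoff R : E → ℝ) :=
  .intro (isCompact_closedBall 0 R) fun _ hz =>
    cutoff_eq_zero hR (not_le.1 fun h => hz (mem_closedBall_zero_iff.2 h)).le

variable [InnerProductSpace ℝ E]

lemma contDiff_cutoff (R : ℝ) : ContDiff ℝ 1 (cutoff R : E → ℝ) :=
  cutoffProfile.contDiff.comp ((contDiff_norm_sq ℝ).div_const _)

lemma fderiv_cutoff_eq_zero (hR : 0 < R) (hz : z ∉ shell E R) : fderiv ℝ (cutoff R) z = 0 := by
  rcases lt_or_ge ‖z‖ (R / 2) with hz' | hz'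
  · have : cutoff R =ᶠ[nhds z] fun _ => (1 : ℝ) := by
      filter_upwards [continuous_norm.continuousAt.eventually_lt_const hz'] with y hy
      exact cutoff_eq_one hR hy.le
    rw [this.fderiv_eq, fderiv_fun_const, Pi.zero_apply]
  · have hRz : R < ‖z‖ := not_le.1 fun h => hz (mem_shell.2 ⟨h, hz'⟩)
    have : cutoff R =ᶠ[nhds z] fun _ => (0 : ℝ) := by
      filter_upwards [continuous_norm.continuousAt.eventually_const_lt hRz] with y hy
      exact cutoff_eq_zero hR hy.le
    rw [this.fderiv_eq, fderiv_fun_const, Pi.zero_apply]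

lemma norm_fderiv_cutoff_le (hR : 0 < R) (hz : ‖z‖ ≤ R) :
    ‖fderiv ℝ (cutoff R) z‖ ≤ 2 * cutoffSlope / R := by
  have hprofile := ((cutoffProfile.contDiff (n := 1)).differentiable one_ne_zero
    (‖z‖ ^ 2 / R ^ 2)).hasDerivAt
  have hnorm :
      HasFDerivAt (fun z : E => ‖z‖ ^ 2 / R ^ 2) ((R ^ 2)⁻¹ • (2 : ℝ) • innerSL ℝ z) z := by
    simpa only [div_eq_inv_mul, ofNat_smul_eq_nsmul] using
      (hasStrictFDerivAt_norm_sq z).hasFDerivAt.const_mul (R ^ 2)⁻¹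
  have hcutoff : HasFDerivAt (cutoff R) _ z := hprofile.comp_hasFDerivAt z hnorm
  rw [hcutoff.fderiv, norm_smul, norm_smul, norm_smul, innerSL_apply_norm,
    Real.norm_of_nonneg (by positivity : (0 : ℝ) ≤ (R ^ 2)⁻¹), Real.norm_two]
  calc ‖deriv cutoffProfile (‖z‖ ^ 2 / R ^ 2)‖ * ((R ^ 2)⁻¹ * (2 * ‖z‖))
      ≤ cutoffSlope * ((R ^ 2)⁻¹ * (2 * R)) := by
        have := cutoffSlope_nonneg
        gcongr
        · exact norm_deriv_cutoffProfile_le _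
    _ = 2 * cutoffSlope / R := by field_simp

end Cutoff

section BoundaryTerm

variable {ι : Type*} [Fintype ι] {β R M K : ℝ} {V U : MvPolynomial ι ℝ}

lemma setIntegral_cutoff_mul_laplacian_sub_mul_exp (hR : 0 < R) (β : ℝ) (V U : MvPolynomial ι ℝ) :
    ∫ z in Metric.closedBall 0 R,
        cutoff R z * (evalAt z (laplacian U - β • gradInner V U) * exp (-(β * evalAt z V))) =
      -∫ z in shell (EuclideanSpace ℝ ι) R,
        fderiv ℝ (cutoff R) z (grad z U) * exp (-(β * evalAt z V)) := by
  have houtside (z : EuclideanSpace ℝ ι) (hz : z ∉ Metric.closedBall 0 R) : cutoff R z = 0 :=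
    cutoff_eq_zero hR (not_le.1 fun h => hz (mem_closedBall_zero_iff.2 h)).le
  rw [setIntegral_eq_integral_of_forall_compl_eq_zero fun z hz => by rw [houtside z hz, zero_mul],
    setIntegral_eq_integral_of_forall_compl_eq_zero fun z hz => by
      rw [fderiv_cutoff_eq_zero hR hz, zero_apply, zero_mul]]
  exact integral_mul_laplacian_sub_mul_exp (contDiff_cutoff R) (hasCompactSupport_cutoff hR) β V U

lemma setIntegral_laplacian_sub_mul_exp (hR : 0 < R) (β : ℝ) (V U : MvPolynomial ι ℝ) :
    ∫ z in Metric.closedBall 0 R,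
        evalAt z (laplacian U - β • gradInner V U) * exp (-(β * evalAt z V)) =
      ∫ z in shell (EuclideanSpace ℝ ι) R,
        ((1 - cutoff R z) * evalAt z (laplacian U - β • gradInner V U) -
          fderiv ℝ (cutoff R) z (grad z U)) * exp (-(β * evalAt z V)) := by
  set F : EuclideanSpace ℝ ι → ℝ := fun z =>
    evalAt z (laplacian U - β • gradInner V U) * exp (-(β * evalAt z V)) with hF
  set G : EuclideanSpace ℝ ι → ℝ := fun z =>
    fderiv ℝ (cutoff R) z (grad z U) * exp (-(β * evalAt z V)) with hG
  have hF_cont : Continuous F := by fun_prop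
  have hcutoff_cont := (contDiff_cutoff (E := EuclideanSpace ℝ ι) R).continuous
  have hG_cont : Continuous G := by
    have := (contDiff_cutoff (E := EuclideanSpace ℝ ι) R).continuous_fderiv one_ne_zero
    fun_prop
  have hint {H : EuclideanSpace ℝ ι → ℝ} (hH : Continuous H) :
      IntegrableOn H (Metric.closedBall 0 R) :=
    hH.continuousOn.integrableOn_compact (isCompact_closedBall _ _)
  have hinside : ∫ z in Metric.closedBall 0 R, (1 - cutoff R z) * F z =
      ∫ z in shell (EuclideanSpace ℝ ι) R, (1 - cutoff R z) * F z := by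
    refine setIntegral_eq_of_subset_of_forall_sdiff_eq_zero measurableSet_closedBall
      shell_subset_closedBall fun z hz => ?_
    have hz' : ‖z‖ < R / 2 := not_le.1 fun h =>
      hz.2 (mem_shell.2 ⟨mem_closedBall_zero_iff.1 hz.1, h⟩)
    rw [cutoff_eq_one hR hz'.le, sub_self, zero_mul]
  calc ∫ z in Metric.closedBall 0 R, F z
      = (∫ z in Metric.closedBall 0 R, (1 - cutoff R z) * F z) +
          ∫ z in Metric.closedBall 0 R, cutoff R z * F z := by
        rw [← integral_add (hint (by fun_prop)) (hint (by fun_prop))]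
        exact integral_congr_ae (.of_forall fun z => by ring)
    _ = ∫ z in shell (EuclideanSpace ℝ ι) R, ((1 - cutoff R z) * F z - G z) := by
        rw [hinside, setIntegral_cutoff_mul_laplacian_sub_mul_exp hR, ← sub_eq_add_neg]
        exact (integral_sub ((hint (by fun_prop)).mono_set shell_subset_closedBall)
          ((hint hG_cont).mono_set shell_subset_closedBall)).symm
    _ = _ := integral_congr_ae (.of_forall fun z => by simp only [hF, hG]; ring)

lemma abs_setIntegral_laplacian_sub_mul_exp_le (hR : 0 < R)
    (hM : ∀ z : EuclideanSpace ℝ ι, ‖z‖ ≤ R → |evalAt z (laplacian U - β • gradInner V U)| ≤ M)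
    (hK : ∀ z : EuclideanSpace ℝ ι, ‖z‖ ≤ R → ‖grad z U‖ ≤ K) :
    |∫ z in Metric.closedBall 0 R,
        evalAt z (laplacian U - β • gradInner V U) * exp (-(β * evalAt z V))| ≤
      (M + 2 * cutoffSlope / R * K) *
        ∫ z in shell (EuclideanSpace ℝ ι) R, exp (-(β * evalAt z V)) := by
  rw [setIntegral_laplacian_sub_mul_exp hR, ← integral_const_mul, ← Real.norm_eq_abs]
  refine norm_integral_le_of_norm_le ?_ ?_
  · refine (Continuous.continuousOn (by fun_prop)).integrableOn_compact
      (isCompact_closedBall 0 R) |>.mono_set shell_subset_closedBall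
  filter_upwards [ae_restrict_mem (measurableSet_shell R)] with z hz
  have hzR := (mem_shell.1 hz).1
  obtain ⟨hcutoff0, hcutoff1⟩ := cutoff_mem_Icc R z
  rw [norm_mul, Real.norm_of_nonneg (exp_nonneg _)]
  gcongr
  refine (norm_sub_le _ _).trans (add_le_add ?_ ?_)
  · rw [norm_mul, Real.norm_of_nonneg (sub_nonneg.2 hcutoff1)]
    exact (mul_le_of_le_one_left (norm_nonneg _) (by linarith)).trans (hM z hzR)
  · have := cutoffSlope_nonneg
    exact (ContinuousLinearMap.le_opNorm _ _).trans
      (mul_le_mul (norm_fderiv_cutoff_le hR hzR) (hK z hzR) (norm_nonneg _) (by positivity))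

end BoundaryTerm

section Gaussian

open Module

variable {E : Type*} [NormedAddCommGroup E] [InnerProductSpace ℝ E] [FiniteDimensional ℝ E]
  [MeasurableSpace E] [BorelSpace E] {a b c r β R : ℝ}

omit [MeasurableSpace E] [BorelSpace E] [FiniteDimensional ℝ E] in
lemma rpow_half_finrank_le_exp (hβ : finrank ℝ E ≤ β) (hc : 1 ≤ c) :
    c ^ (finrank ℝ E / 2 : ℝ) ≤ exp (β * (c - 1) / 2) := by
  rw [rpow_def_of_pos (by linarith), exp_le_exp]
  calc log c * (finrank ℝ E / 2) ≤ (c - 1) * (β / 2) :=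
        mul_le_mul (log_le_sub_one_of_pos (by linarith)) (by linarith) (by positivity)
          (by linarith)
    _ = β * (c - 1) / 2 := by ring

lemma integrable_exp_neg_mul_sq_norm (hb : 0 < b) :
    Integrable fun z : E => exp (-b * ‖z‖ ^ 2) := by
  refine .of_integral_ne_zero ?_
  rw [GaussianFourier.integral_rexp_neg_mul_sq_norm hb]
  positivity

lemma setIntegral_exp_neg_add_mul_sq_norm_le (ha : 0 ≤ a) (hb : 0 < b) (hr : 0 ≤ r) {s : Set E}
    (hs : MeasurableSet s) (hrs : ∀ z ∈ s, r ≤ ‖z‖) :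
    ∫ z in s, exp (-(a + b) * ‖z‖ ^ 2) ≤
      exp (-(a * r ^ 2)) * (π / b) ^ (finrank ℝ E / 2 : ℝ) := by
  have hint := (integrable_exp_neg_mul_sq_norm (E := E) hb).const_mul (exp (-(a * r ^ 2)))
  calc ∫ z in s, exp (-(a + b) * ‖z‖ ^ 2)
      ≤ ∫ z in s, exp (-(a * r ^ 2)) * exp (-b * ‖z‖ ^ 2) := by
        refine setIntegral_mono_on (integrable_exp_neg_mul_sq_norm (by linarith)).integrableOn
          hint.integrableOn hs fun z hz => ?_
        rw [← exp_add, exp_le_exp]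
        have : a * r ^ 2 ≤ a * ‖z‖ ^ 2 := by gcongr; exact hrs z hz
        linarith
    _ ≤ ∫ z : E, exp (-(a * r ^ 2)) * exp (-b * ‖z‖ ^ 2) :=
        setIntegral_le_integral hint (.of_forall fun z => by positivity)
    _ = exp (-(a * r ^ 2)) * (π / b) ^ (finrank ℝ E / 2 : ℝ) := by
        rw [integral_const_mul, GaussianFourier.integral_rexp_neg_mul_sq_norm hb]

lemma le_setIntegral_closedBall_exp_neg_mul_sq_norm (hβ : finrank ℝ E ≤ β) (hβ0 : 0 < β)
    (ha : β / 2 ≤ a) (hR : 8 ≤ R) :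
    (π / a) ^ (finrank ℝ E / 2 : ℝ) * (1 - exp (-(β * R ^ 2 / 8))) ≤
      ∫ z in Metric.closedBall (0 : E) R, exp (-a * ‖z‖ ^ 2) := by
  have ha0 : 0 < a := by linarith
  have htail : ∫ z in (Metric.closedBall (0 : E) R)ᶜ, exp (-a * ‖z‖ ^ 2) ≤
      (π / a) ^ (finrank ℝ E / 2 : ℝ) * exp (-(β * R ^ 2 / 8)) := by
    calc ∫ z in (Metric.closedBall (0 : E) R)ᶜ, exp (-a * ‖z‖ ^ 2)
        ≤ exp (-(a / 2 * R ^ 2)) * (π / (a / 2)) ^ (finrank ℝ E / 2 : ℝ) := by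
          nth_rewrite 1 [← add_halves a]
          refine setIntegral_exp_neg_add_mul_sq_norm_le (by positivity) (by positivity)
            (by linarith) measurableSet_closedBall.compl fun z hz => ?_
          exact (not_le.1 fun h => hz (mem_closedBall_zero_iff.2 h)).le
      _ = (π / a) ^ (finrank ℝ E / 2 : ℝ) *
            (exp (-(a / 2 * R ^ 2)) * 2 ^ (finrank ℝ E / 2 : ℝ)) := by
          rw [show π / (a / 2) = π / a * 2 by field_simp,
            mul_rpow (by positivity) zero_le_two]
          ring
      _ ≤ (π / a) ^ (finrank ℝ E / 2 : ℝ) *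
            (exp (-(a / 2 * R ^ 2)) * exp (β * (2 - 1) / 2)) := by
          gcongr
          exact rpow_half_finrank_le_exp hβ one_le_two
      _ ≤ (π / a) ^ (finrank ℝ E / 2 : ℝ) * exp (-(β * R ^ 2 / 8)) := by
          rw [← exp_add]
          gcongr
          nlinarith [mul_le_mul ha (show 64 ≤ R ^ 2 by nlinarith) (by norm_num) ha0.le]
  have hsplit := integral_add_compl measurableSet_closedBall
    (integrable_exp_neg_mul_sq_norm (E := E) ha0) (s := Metric.closedBall 0 R)
  rw [GaussianFourier.integral_rexp_neg_mul_sq_norm ha0] at hsplit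
  linarith

lemma exp_neg_mul_sq_div_eight_le_half (hβ : 1 ≤ β) (hR : 8 ≤ R) :
    exp (-(β * R ^ 2 / 8)) ≤ 1 / 2 := by
  have : 1 ≤ β * R ^ 2 / 8 := by nlinarith
  calc exp (-(β * R ^ 2 / 8)) ≤ exp (-1) := exp_le_exp.2 (by linarith)
    _ ≤ 1 / 2 := by linarith [exp_neg_one_lt_d9]

lemma abs_log_gaussian_closedBall_le (hβ : finrank ℝ E ≤ β) (hβ1 : 1 ≤ β) (hR : 8 ≤ R) :
    |log ((β / (2 * π)) ^ (finrank ℝ E / 2 : ℝ) *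
      ∫ z in Metric.closedBall (0 : E) R, exp (-(β * (‖z‖ ^ 2 / 2))))| ≤
      2 * exp (-(β * R ^ 2 / 8)) := by
  simp only [show ∀ z : E, -(β * (‖z‖ ^ 2 / 2)) = -(β / 2) * ‖z‖ ^ 2 from fun z => by ring]
  set I := ∫ z in Metric.closedBall (0 : E) R, exp (-(β / 2) * ‖z‖ ^ 2)
  set c := (β / (2 * π)) ^ (finrank ℝ E / 2 : ℝ)
  have hnormalised : c * (π / (β / 2)) ^ (finrank ℝ E / 2 : ℝ) = 1 := by
    rw [← mul_rpow (by positivity) (by positivity),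
      show β / (2 * π) * (π / (β / 2)) = 1 by field_simp, one_rpow]
  have hlower : 1 - exp (-(β * R ^ 2 / 8)) ≤ c * I := by
    calc 1 - exp (-(β * R ^ 2 / 8))
        = c * ((π / (β / 2)) ^ (finrank ℝ E / 2 : ℝ) * (1 - exp (-(β * R ^ 2 / 8)))) := by
          rw [← mul_assoc, hnormalised, one_mul]
      _ ≤ c * I := by
          gcongr
          exact le_setIntegral_closedBall_exp_neg_mul_sq_norm hβ (by linarith) le_rfl hR
  have hupper : c * I ≤ 1 := by
    rw [← hnormalised, ← GaussianFourier.integral_rexp_neg_mul_sq_norm (by positivity)]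
    gcongr
    exact setIntegral_le_integral (integrable_exp_neg_mul_sq_norm (by positivity))
      (.of_forall fun z => by positivity)
  have hhalf := exp_neg_mul_sq_div_eight_le_half hβ1 hR
  have hpos : 0 < c * I := by linarith
  have hinv : (c * I)⁻¹ ≤ 1 + 2 * exp (-(β * R ^ 2 / 8)) := by
    rw [inv_le_iff_one_le_mul₀ hpos]
    nlinarith [exp_pos (-(β * R ^ 2 / 8))]
  rw [abs_of_nonpos (log_nonpos hpos.le hupper)]
  linarith [one_sub_inv_le_log_of_pos hpos]

variable {Q : E → ℝ}

lemma le_setIntegral_closedBall_exp_neg (hβ : finrank ℝ E ≤ β) (hβ1 : 1 ≤ β) (hR : 8 ≤ R)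
    (hQ_cont : ContinuousOn Q (Metric.closedBall 0 R))
    (hQ : ∀ z, ‖z‖ ≤ R → |Q z - ‖z‖ ^ 2 / 2| ≤ ‖z‖ ^ 2 / 8 + 1 / 8) :
    exp (-(β / 8)) * ((π / (5 * β / 8)) ^ (finrank ℝ E / 2 : ℝ) * (1 / 2)) ≤
      ∫ z in Metric.closedBall 0 R, exp (-(β * Q z)) := by
  calc exp (-(β / 8)) * ((π / (5 * β / 8)) ^ (finrank ℝ E / 2 : ℝ) * (1 / 2))
      ≤ exp (-(β / 8)) * ∫ z in Metric.closedBall (0 : E) R, exp (-(5 * β / 8) * ‖z‖ ^ 2) := by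
        have hhalf := exp_neg_mul_sq_div_eight_le_half hβ1 hR
        gcongr
        refine le_trans ?_ (le_setIntegral_closedBall_exp_neg_mul_sq_norm hβ (by linarith)
          (by linarith) hR)
        gcongr
        linarith
    _ = ∫ z in Metric.closedBall (0 : E) R, exp (-(β / 8)) * exp (-(5 * β / 8) * ‖z‖ ^ 2) :=
        (integral_const_mul _ _).symm
    _ ≤ ∫ z in Metric.closedBall 0 R, exp (-(β * Q z)) := by
        refine setIntegral_mono_on
          ((integrable_exp_neg_mul_sq_norm (by positivity)).const_mul _).integrableOn
          (ContinuousOn.integrableOn_compact (isCompact_closedBall _ _) (by fun_prop))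
          measurableSet_closedBall fun z hz => ?_
        rw [← exp_add, exp_le_exp]
        nlinarith [(abs_le.1 (hQ z (mem_closedBall_zero_iff.1 hz))).2]

lemma setIntegral_closedBall_exp_neg_pos (hβ : finrank ℝ E ≤ β) (hβ1 : 1 ≤ β) (hR : 8 ≤ R)
    (hQ_cont : ContinuousOn Q (Metric.closedBall 0 R))
    (hQ : ∀ z, ‖z‖ ≤ R → |Q z - ‖z‖ ^ 2 / 2| ≤ ‖z‖ ^ 2 / 8 + 1 / 8) :
    0 < ∫ z in Metric.closedBall 0 R, exp (-(β * Q z)) := by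
  exact lt_of_lt_of_le (by positivity) (le_setIntegral_closedBall_exp_neg hβ hβ1 hR hQ_cont hQ)

lemma setIntegral_shell_exp_neg_le (hβ0 : 0 < β) (hR : 0 ≤ R)
    (hQ_cont : ContinuousOn Q (Metric.closedBall 0 R))
    (hQ : ∀ z, ‖z‖ ≤ R → |Q z - ‖z‖ ^ 2 / 2| ≤ ‖z‖ ^ 2 / 8 + 1 / 8) :
    ∫ z in shell E R, exp (-(β * Q z)) ≤
      exp (β / 8) * (exp (-(β / 8 * (R / 2) ^ 2)) * (π / (β / 4)) ^ (finrank ℝ E / 2 : ℝ)) := by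
  calc ∫ z in shell E R, exp (-(β * Q z))
      ≤ ∫ z in shell E R, exp (β / 8) * exp (-(β / 8 + β / 4) * ‖z‖ ^ 2) := by
        refine setIntegral_mono_on
          ((ContinuousOn.integrableOn_compact (isCompact_closedBall _ _) (by fun_prop)).mono_set
            shell_subset_closedBall)
          ((integrable_exp_neg_mul_sq_norm (by positivity)).const_mul _).integrableOn
          (measurableSet_shell R) fun z hz => ?_
        rw [← exp_add, exp_le_exp]
        nlinarith [(abs_le.1 (hQ z (mem_shell.1 hz).1)).1]
    _ ≤ exp (β / 8) *
          (exp (-(β / 8 * (R / 2) ^ 2)) * (π / (β / 4)) ^ (finrank ℝ E / 2 : ℝ)) := by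
        rw [integral_const_mul]
        gcongr
        exact setIntegral_exp_neg_add_mul_sq_norm_le (by positivity) (by positivity)
          (by positivity) (measurableSet_shell R) fun z hz => (mem_shell.1 hz).2

lemma setIntegral_shell_le_mul_setIntegral_closedBall (hβ : finrank ℝ E ≤ β) (hβ1 : 1 ≤ β)
    (hR : 8 ≤ R) (hQ_cont : ContinuousOn Q (Metric.closedBall 0 R))
    (hQ : ∀ z, ‖z‖ ≤ R → |Q z - ‖z‖ ^ 2 / 2| ≤ ‖z‖ ^ 2 / 8 + 1 / 8) :
    ∫ z in shell E R, exp (-(β * Q z)) ≤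
      2 * exp (-(β * R ^ 2 / 64)) * ∫ z in Metric.closedBall 0 R, exp (-(β * Q z)) := by
  have hdim : (5 / 2 : ℝ) ^ (finrank ℝ E / 2 : ℝ) ≤ exp (β * (5 / 2 - 1) / 2) :=
    rpow_half_finrank_le_exp hβ (by norm_num)
  have hexp : exp (β / 8) * exp (-(β / 8 * (R / 2) ^ 2)) * exp (β * (5 / 2 - 1) / 2) ≤
      exp (-(β * R ^ 2 / 64)) * exp (-(β / 8)) := by
    simp only [← exp_add, exp_le_exp]
    nlinarith [mul_le_mul_of_nonneg_left (show 64 ≤ R ^ 2 by nlinarith) (by linarith : 0 ≤ β)]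
  calc ∫ z in shell E R, exp (-(β * Q z))
      ≤ exp (β / 8) *
          (exp (-(β / 8 * (R / 2) ^ 2)) * (π / (β / 4)) ^ (finrank ℝ E / 2 : ℝ)) :=
        setIntegral_shell_exp_neg_le (by linarith) (by linarith) hQ_cont hQ
    _ = exp (β / 8) * exp (-(β / 8 * (R / 2) ^ 2)) * (5 / 2) ^ (finrank ℝ E / 2 : ℝ) *
          (π / (5 * β / 8)) ^ (finrank ℝ E / 2 : ℝ) := by
        rw [show π / (β / 4) = 5 / 2 * (π / (5 * β / 8)) by field_simp; norm_num,
          mul_rpow (by norm_num) (by positivity)]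
        ring
    _ ≤ exp (-(β * R ^ 2 / 64)) * exp (-(β / 8)) *
          (π / (5 * β / 8)) ^ (finrank ℝ E / 2 : ℝ) := by
        refine mul_le_mul_of_nonneg_right (le_trans ?_ hexp) (by positivity)
        gcongr
    _ = 2 * exp (-(β * R ^ 2 / 64)) *
          (exp (-(β / 8)) * ((π / (5 * β / 8)) ^ (finrank ℝ E / 2 : ℝ) * (1 / 2))) := by ring
    _ ≤ 2 * exp (-(β * R ^ 2 / 64)) * ∫ z in Metric.closedBall 0 R, exp (-(β * Q z)) := by
        gcongr
        exact le_setIntegral_closedBall_exp_neg hβ hβ1 hR hQ_cont hQ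

end Gaussian

section Partition

variable {ι : Type*} [Fintype ι] {N : ℕ} {β C s S R : ℝ} {v : ℕ → MvPolynomial ι ℝ}

omit [Fintype ι] in
lemma hasDerivAt_evalAt_truncation (N : ℕ) (v : ℕ → MvPolynomial ι ℝ) (s : ℝ)
    (z : EuclideanSpace ℝ ι) :
    HasDerivAt (fun t => evalAt z (truncation (N + 1) v t))
      (evalAt z (truncationDeriv N v s)) s := by
  simp only [evalAt_truncation, Finset.sum_range_succ' _ N, pow_zero, truncationDeriv]
  refine ((HasDerivAt.fun_sum fun k _ =>
    (hasDerivAt_pow (k + 1) s).mul_const (evalAt z (v (k + 1)))).add_const _).congr_deriv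
    (Finset.sum_congr rfl fun k _ => ?_)
  rw [map_smul, smul_eq_mul, Nat.add_sub_cancel]
  push_cast
  ring

/-- The partition function `Z(s)` of the truncated potential `v 0 + s • v 1 + ⋯ + s ^ N • v N`
on the ball of radius `R`, at inverse temperature `β`. -/
def partitionFunction (N : ℕ) (β R : ℝ) (v : ℕ → MvPolynomial ι ℝ) (s : ℝ) : ℝ :=
  ∫ z in Metric.closedBall (0 : EuclideanSpace ℝ ι) R,
    exp (-(β * evalAt z (truncation (N + 1) v s)))

lemma hasDerivAt_partitionFunction (N : ℕ) (β R : ℝ) (v : ℕ → MvPolynomial ι ℝ) (s : ℝ) :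
    HasDerivAt (partitionFunction N β R v)
      (∫ z in Metric.closedBall (0 : EuclideanSpace ℝ ι) R,
        -(β * evalAt z (truncationDeriv N v s)) *
          exp (-(β * evalAt z (truncation (N + 1) v s)))) s := by
  have hcont : Continuous fun q : ℝ × EuclideanSpace ℝ ι =>
      -(β * evalAt q.2 (truncationDeriv N v q.1)) *
        exp (-(β * evalAt q.2 (truncation (N + 1) v q.1))) := by
    simp only [evalAt_truncation, truncationDeriv]
    fun_prop
  obtain ⟨M, hM⟩ := ((isCompact_Icc (a := s - 1) (b := s + 1)).prod
    (isCompact_closedBall (0 : EuclideanSpace ℝ ι) R)).exists_bound_of_continuousOn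
      hcont.continuousOn
  refine (hasDerivAt_integral_of_dominated_loc_of_deriv_le
    (F := fun t z => exp (-(β * evalAt z (truncation (N + 1) v t))))
    (F' := fun t z => -(β * evalAt z (truncationDeriv N v t)) *
      exp (-(β * evalAt z (truncation (N + 1) v t))))
    (s := Set.Icc (s - 1) (s + 1)) (bound := fun _ => M)
    (Icc_mem_nhds (by linarith) (by linarith)) (.of_forall fun t => ?_) ?_ ?_ ?_ ?_ ?_).2
  · exact Continuous.aestronglyMeasurable (by fun_prop)
  · exact ContinuousOn.integrableOn_compact (isCompact_closedBall _ _) (by fun_prop)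
  · exact Continuous.aestronglyMeasurable (by fun_prop)
  · filter_upwards [ae_restrict_mem measurableSet_closedBall] with z hz t ht
    exact hM (t, z) ⟨ht, hz⟩
  · exact integrableOn_const (isCompact_closedBall _ _).measure_lt_top.ne
  · refine .of_forall fun z t _ => ?_
    refine (((hasDerivAt_evalAt_truncation N v t z).const_mul β).fun_neg.exp).congr_deriv ?_
    ring

lemma hasDerivAt_sum_mul_pow_succ_div (N : ℕ) (c : ℕ → ℝ) (s : ℝ) :
    HasDerivAt (fun s => ∑ j ∈ Finset.range N, c j * (s ^ (j + 1) / (j + 1)))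
      (∑ j ∈ Finset.range N, s ^ j * c j) s := by
  refine (HasDerivAt.fun_sum fun j _ =>
    ((hasDerivAt_pow (j + 1) s).div_const (j + 1 : ℝ)).const_mul (c j)).congr_deriv
      (Finset.sum_congr rfl fun j _ => ?_)
  push_cast
  field_simp

/-- The constant of `IsPotential.abs_deriv_partitionFunction_add_le`. -/
def logDerivConst (N : ℕ) (C : ℝ) : ℝ :=
  2 * (truncationDerivConst N C + meanConst N C + crossConst N C +
    2 * cutoffSlope * velocityConst N C)

lemma logDerivConst_nonneg (hC : 0 ≤ C) (N : ℕ) : 0 ≤ logDerivConst N C := by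
  have hslope := mul_nonneg cutoffSlope_nonneg (velocityConst_nonneg hC N)
  have hsum := add_nonneg (add_nonneg (truncationDerivConst_nonneg hC N) (meanConst_nonneg hC N))
    (crossConst_nonneg hC N)
  rw [logDerivConst]
  linarith

namespace IsPotential

lemma const_nonneg (hv : IsPotential N C v) : 0 ≤ C :=
  (hv.growth 0 (Nat.zero_le N)).nonneg

lemma laplacian_sub_gradInner (hv : IsPotential N C v) (hβ : Fintype.card ι ≤ β) (hβ0 : 0 < β)
    (s : ℝ) (z : EuclideanSpace ℝ ι) :
    evalAt z (laplacian (truncation N (corrector β v) s) -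
        β • gradInner (truncation (N + 1) v s) (truncation N (corrector β v) s)) =
      -(β * (evalAt z (truncationDeriv N v s) -
        ∑ j ∈ Finset.range N, s ^ j * correctorMean β v j +
        evalAt z (crossRemainder N v (corrector β v) s))) := by
  have heval := congrArg (evalAt z) (hv.gradInner_truncation_sub_laplacian hβ s)
  simp only [map_sub, map_add, map_smul, smul_eq_mul, evalAt_C] at heval ⊢
  rw [← heval]
  field_simp
  ring

lemma deriv_partitionFunction_add (hv : IsPotential N C v) (hβ : Fintype.card ι ≤ β)
    (hβ0 : 0 < β) (R s : ℝ) :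
    deriv (partitionFunction N β R v) s +
        β * (∑ j ∈ Finset.range N, s ^ j * correctorMean β v j) * partitionFunction N β R v s =
      (∫ z in Metric.closedBall 0 R,
        evalAt z (laplacian (truncation N (corrector β v) s) -
          β • gradInner (truncation (N + 1) v s) (truncation N (corrector β v) s)) *
        exp (-(β * evalAt z (truncation (N + 1) v s)))) +
      ∫ z in Metric.closedBall 0 R, β * evalAt z (crossRemainder N v (corrector β v) s) *
        exp (-(β * evalAt z (truncation (N + 1) v s))) := by
  rw [(hasDerivAt_partitionFunction N β R v s).deriv, partitionFunction, ← integral_const_mul,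
    ← integral_add, ← integral_add]
  · refine integral_congr_ae (.of_forall fun z => ?_)
    simp only [hv.laplacian_sub_gradInner hβ hβ0]
    ring
  all_goals exact ContinuousOn.integrableOn_compact (isCompact_closedBall _ _) (by fun_prop)

lemma abs_laplacian_sub_gradInner_le (hv : IsPotential N C v) (hβ : Fintype.card ι ≤ β)
    (hβ0 : 0 < β) (hs : 0 ≤ s) (hR : 1 ≤ R) (hsR : s * R ≤ 1) {z : EuclideanSpace ℝ ι}
    (hz : ‖z‖ ≤ R) :
    |evalAt z (laplacian (truncation N (corrector β v) s) -
        β • gradInner (truncation (N + 1) v s) (truncation N (corrector β v) s))| ≤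
      β * ((truncationDerivConst N C + meanConst N C + crossConst N C) * R ^ 3) := by
  have hs1 : s ≤ 1 := by nlinarith
  have hR3 : 1 ≤ R ^ 3 := one_le_pow₀ hR
  have hderiv := hv.abs_evalAt_truncationDeriv_le hs hR hsR hz
  have hmean := hv.abs_sum_correctorMean_le hβ hs hs1
  have hcross := hv.abs_evalAt_crossRemainder_le hβ hs hR hsR hz
  have hmean0 := meanConst_nonneg hv.const_nonneg N
  have hcross0 := crossConst_nonneg hv.const_nonneg N
  have hcross' : |evalAt z (crossRemainder N v (corrector β v) s)| ≤ crossConst N C * R ^ 3 := by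
    refine hcross.trans (mul_le_mul_of_nonneg_left ?_ hcross0)
    rw [pow_add, ← mul_assoc, ← mul_pow]
    exact mul_le_of_le_one_left (by positivity) (pow_le_one₀ (by positivity) hsR)
  rw [hv.laplacian_sub_gradInner hβ hβ0, abs_neg, abs_mul, abs_of_pos hβ0]
  gcongr
  refine (abs_add_le _ _).trans (le_trans (add_le_add_left (abs_sub _ _) _) ?_)
  nlinarith

lemma partitionFunction_pos (hv : IsPotential N C v) (hβ : Fintype.card ι ≤ β)
    (hβ1 : 1 ≤ β) (hs : 0 ≤ s) (hR : 8 ≤ R) (hsR : 2 * (s * R) ≤ 1)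
    (hNsR : 32 * N * C * (s * R) ≤ 1) : 0 < partitionFunction N β R v s :=
  setIntegral_closedBall_exp_neg_pos (by rwa [finrank_euclideanSpace]) hβ1 hR (by fun_prop)
    fun _ => hv.abs_evalAt_truncation_sub_le hs (by linarith) hsR hNsR

lemma abs_setIntegral_laplacian_sub_gradInner_le (hv : IsPotential N C v)
    (hβ : Fintype.card ι ≤ β) (hβ1 : 1 ≤ β) (hs : 0 ≤ s) (hR : 8 ≤ R) (hsR : 2 * (s * R) ≤ 1)
    (hNsR : 32 * N * C * (s * R) ≤ 1) :
    |∫ z in Metric.closedBall 0 R,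
        evalAt z (laplacian (truncation N (corrector β v) s) -
          β • gradInner (truncation (N + 1) v s) (truncation N (corrector β v) s)) *
        exp (-(β * evalAt z (truncation (N + 1) v s)))| ≤
      β * (logDerivConst N C * (R ^ 3 * exp (-(β * R ^ 2 / 64)))) *
        partitionFunction N β R v s := by
  have hR1 : 1 ≤ R := by linarith
  have hsR1 : s * R ≤ 1 := by nlinarith
  have hwork := mul_nonneg cutoffSlope_nonneg (velocityConst_nonneg hv.const_nonneg N)
  have hfactor : β * ((truncationDerivConst N C + meanConst N C + crossConst N C) * R ^ 3) +
      2 * cutoffSlope / R * (velocityConst N C * R ^ 2) ≤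
      β * (logDerivConst N C / 2 * R ^ 3) := by
    have hpow : R ≤ β * R ^ 3 := by nlinarith [le_self_pow₀ hR1 three_ne_zero]
    have hcancel : 2 * cutoffSlope / R * (velocityConst N C * R ^ 2) =
        2 * (cutoffSlope * velocityConst N C) * R := by field_simp
    rw [hcancel, logDerivConst]
    linarith [mul_le_mul_of_nonneg_left hpow hwork]
  have hK := logDerivConst_nonneg hv.const_nonneg N
  calc _ ≤ (β * ((truncationDerivConst N C + meanConst N C + crossConst N C) * R ^ 3) +
          2 * cutoffSlope / R * (velocityConst N C * R ^ 2)) *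
        ∫ z in shell (EuclideanSpace ℝ ι) R, exp (-(β * evalAt z (truncation (N + 1) v s))) :=
        abs_setIntegral_laplacian_sub_mul_exp_le (by linarith)
          (fun z hz => hv.abs_laplacian_sub_gradInner_le hβ (by linarith) hs hR1 hsR1 hz)
          (fun z hz => hv.norm_grad_truncation_corrector_le hβ hs hR1 hsR1 hz)
    _ ≤ β * (logDerivConst N C / 2 * R ^ 3) *
        (2 * exp (-(β * R ^ 2 / 64)) * partitionFunction N β R v s) := by
        gcongr
        exact setIntegral_shell_le_mul_setIntegral_closedBall (by rwa [finrank_euclideanSpace])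
          hβ1 hR (by fun_prop) fun z hz => hv.abs_evalAt_truncation_sub_le hs hR1 hsR hNsR hz
    _ = _ := by ring

lemma abs_setIntegral_crossRemainder_le (hv : IsPotential N C v) (hβ : Fintype.card ι ≤ β)
    (hs : 0 ≤ s) (hR : 1 ≤ R) (hsR : s * R ≤ 1) :
    |∫ z in Metric.closedBall 0 R, β * evalAt z (crossRemainder N v (corrector β v) s) *
        exp (-(β * evalAt z (truncation (N + 1) v s)))| ≤
      β * (logDerivConst N C * (s ^ N * R ^ (N + 3))) * partitionFunction N β R v s := by
  have hC := hv.const_nonneg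
  have hβ0 : 0 ≤ β := (Nat.cast_nonneg _).trans hβ
  have hconst : crossConst N C ≤ logDerivConst N C := by
    rw [logDerivConst]
    linarith [truncationDerivConst_nonneg hC N, meanConst_nonneg hC N, crossConst_nonneg hC N,
      mul_nonneg cutoffSlope_nonneg (velocityConst_nonneg hC N)]
  rw [partitionFunction, ← integral_const_mul, ← Real.norm_eq_abs]
  refine norm_integral_le_of_norm_le
    (ContinuousOn.integrableOn_compact (isCompact_closedBall _ _) (by fun_prop)) ?_
  filter_upwards [ae_restrict_mem measurableSet_closedBall] with z hz
  rw [norm_mul, norm_mul, Real.norm_of_nonneg hβ0, Real.norm_of_nonneg (exp_nonneg _)]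
  gcongr
  refine (hv.abs_evalAt_crossRemainder_le hβ hs hR hsR (mem_closedBall_zero_iff.1 hz)).trans ?_
  gcongr

lemma abs_deriv_partitionFunction_add_le (hv : IsPotential N C v) (hβ : Fintype.card ι ≤ β)
    (hβ1 : 1 ≤ β) (hs : 0 ≤ s) (hR : 8 ≤ R) (hsR : 2 * (s * R) ≤ 1)
    (hNsR : 32 * N * C * (s * R) ≤ 1) :
    |deriv (partitionFunction N β R v) s +
        β * (∑ j ∈ Finset.range N, s ^ j * correctorMean β v j) * partitionFunction N β R v s| ≤
      β * logDerivConst N C * (s ^ N * R ^ (N + 3) + R ^ 3 * exp (-(β * R ^ 2 / 64))) *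
        partitionFunction N β R v s := by
  rw [hv.deriv_partitionFunction_add hβ (by linarith)]
  refine (abs_add_le _ _).trans ((add_le_add
    (hv.abs_setIntegral_laplacian_sub_gradInner_le hβ hβ1 hs hR hsR hNsR)
    (hv.abs_setIntegral_crossRemainder_le hβ hs (by linarith) (by nlinarith))).trans_eq ?_)
  ring

lemma abs_log_partitionFunction_sub_le (hv : IsPotential N C v) (hβ : Fintype.card ι ≤ β)
    (hβ1 : 1 ≤ β) (hS : 0 ≤ S) (hR : 8 ≤ R) (hSR : 2 * (S * R) ≤ 1)
    (hNSR : 32 * N * C * (S * R) ≤ 1) :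
    |log (partitionFunction N β R v S) - log (partitionFunction N β R v 0) +
        β * ∑ j ∈ Finset.range N, correctorMean β v j * (S ^ (j + 1) / (j + 1))| ≤
      β * logDerivConst N C * (S ^ N * R ^ (N + 3) + R ^ 3 * exp (-(β * R ^ 2 / 64))) * S := by
  have hC := hv.const_nonneg
  have hK := logDerivConst_nonneg hC N
  set Z := partitionFunction N β R v
  set A : ℝ → ℝ := fun s =>
    log (Z s) + β * ∑ j ∈ Finset.range N, correctorMean β v j * (s ^ (j + 1) / (j + 1))
  set A' : ℝ → ℝ := fun s =>
    deriv Z s / Z s + β * ∑ j ∈ Finset.range N, s ^ j * correctorMean β v j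
  have hpos : ∀ s ∈ Set.Icc 0 S, 0 < Z s := fun s hs =>
    hv.partitionFunction_pos hβ hβ1 hs.1 hR (le_trans (by gcongr; exact hs.2) hSR)
      (le_trans (by gcongr; exact hs.2) hNSR)
  have hderiv : ∀ s ∈ Set.Icc 0 S, HasDerivAt A (A' s) s := fun s hs => by
    have hZ := (hasDerivAt_partitionFunction N β R v s).differentiableAt.hasDerivAt
    exact (hZ.log (hpos s hs).ne').add ((hasDerivAt_sum_mul_pow_succ_div N _ s).const_mul β)
  have hbound : ∀ s ∈ Set.Icc 0 S, ‖A' s‖ ≤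
      β * logDerivConst N C * (S ^ N * R ^ (N + 3) + R ^ 3 * exp (-(β * R ^ 2 / 64))) := by
    intro s hs
    have hs0 := hs.1
    have hsS := hs.2
    have hZ := hpos s hs
    have heq : A' s = (deriv Z s +
        β * (∑ j ∈ Finset.range N, s ^ j * correctorMean β v j) * Z s) / Z s := by
      simp only [A']; field_simp
    rw [heq, Real.norm_eq_abs, abs_div, abs_of_pos hZ, div_le_iff₀ hZ]
    refine (hv.abs_deriv_partitionFunction_add_le hβ hβ1 hs0 hR (le_trans (by gcongr) hSR)
      (le_trans (by gcongr) hNSR)).trans ?_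
    gcongr
  have := norm_image_sub_le_of_norm_deriv_le_segment'
    (fun s hs => (hderiv s hs).hasDerivWithinAt)
    (fun s hs => hbound s (Set.Ico_subset_Icc_self hs)) S (Set.right_mem_Icc.2 hS)
  simpa [A, add_sub_right_comm] using this

end IsPotential

end Partition

section Tensors

lemma abs_map_const_le {E : Type*} [NormedAddCommGroup E] [NormedSpace ℝ E] {k : ℕ} {c : ℝ}
    (hk : k ≠ 0) (T : MultilinearMap ℝ (fun _ : Fin k => E) ℝ)
    (hT : ∀ u, ‖u‖ = 1 → |T fun _ => u| ≤ c) (z : E) : |T fun _ => z| ≤ c * ‖z‖ ^ k := by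
  rcases eq_or_ne z 0 with rfl | hz
  · have hzero : (T fun _ => 0) = 0 := T.map_coord_zero ⟨0, Nat.pos_of_ne_zero hk⟩ rfl
    simp [hzero, hk]
  · have hscale := T.map_smul_univ (fun _ => ‖z‖) fun _ => ‖z‖⁻¹ • z
    simp only [smul_inv_smul₀ (norm_ne_zero_iff.2 hz)] at hscale
    rw [hscale, Fin.prod_const, smul_eq_mul, abs_mul, abs_pow, abs_norm, mul_comm]
    gcongr
    exact hT _ (norm_smul_inv_norm hz)

variable {ι : Type*} [Fintype ι] {k : ℕ} {c : ℝ}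

/-- The polynomial `z ↦ T (z, …, z)`. -/
def tensorPoly (T : MultilinearMap ℝ (fun _ : Fin k => EuclideanSpace ℝ ι) ℝ) :
    MvPolynomial ι ℝ :=
  ∑ φ : Fin k → ι, T (fun j => EuclideanSpace.basisFun ι ℝ (φ j)) • ∏ j, MvPolynomial.X (φ j)

variable (T : MultilinearMap ℝ (fun _ : Fin k => EuclideanSpace ℝ ι) ℝ)

@[simp]
lemma evalAt_tensorPoly (z : EuclideanSpace ℝ ι) : evalAt z (tensorPoly T) = T fun _ => z := by
  classical
  have hz : z = ∑ i, z i • EuclideanSpace.basisFun ι ℝ i := by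
    simpa using ((EuclideanSpace.basisFun ι ℝ).sum_repr z).symm
  conv_rhs => rw [hz, T.map_sum]
  simp only [tensorPoly, map_sum, map_smul, map_prod, evalAt_X]
  refine Finset.sum_congr rfl fun φ _ => ?_
  rw [T.map_smul_univ (fun j => z (φ j)) fun j => EuclideanSpace.basisFun ι ℝ (φ j), smul_eq_mul,
    smul_eq_mul, mul_comm]

lemma isHomogeneous_tensorPoly : (tensorPoly T).IsHomogeneous k := by
  refine (MvPolynomial.homogeneousSubmodule ι ℝ k).sum_mem fun φ _ =>
    (MvPolynomial.homogeneousSubmodule ι ℝ k).smul_mem _ ?_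
  simpa using MvPolynomial.IsHomogeneous.prod Finset.univ
    (fun j => (MvPolynomial.X (φ j) : MvPolynomial ι ℝ)) (fun _ => 1)
    fun j _ => MvPolynomial.isHomogeneous_X ℝ (φ j)

lemma hasGrowth_tensorPoly (hk : k ≠ 0) (hc : 0 ≤ c) (hT : ∀ u, ‖u‖ = 1 → |T fun _ => u| ≤ c) :
    HasGrowth k c (tensorPoly T) where
  totalDegree_le := (isHomogeneous_tensorPoly T).totalDegree_le
  abs_evalAt_le z := by
    rw [evalAt_tensorPoly]
    refine (abs_map_const_le hk T hT z).trans ?_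
    gcongr
    exact le_add_of_nonneg_left zero_le_one

lemma evalAt_smul_tensorPoly (s : ℝ) (z : EuclideanSpace ℝ ι) :
    evalAt (s • z) (tensorPoly T) = s ^ k * evalAt z (tensorPoly T) := by
  simpa using T.map_smul_univ (fun _ => s) fun _ => z

end Tensors

section RescaledPotential

open scoped Nat

variable {ι : Type*} [Fintype ι] {L : ℕ} {β cf cg lam S : ℝ}
  {T G : (k : ℕ) → MultilinearMap ℝ (fun _ : Fin k => EuclideanSpace ℝ ι) ℝ}

/-- The Taylor polynomial of the phase `f` at its minimum, with `T k` in place of `∇ᵏ f (0)`. -/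
def taylorPhase (L : ℕ) (T : (k : ℕ) → MultilinearMap ℝ (fun _ : Fin k => EuclideanSpace ℝ ι) ℝ)
    (x : EuclideanSpace ℝ ι) : ℝ :=
  ‖x‖ ^ 2 / 2 + ∑ k ∈ Finset.Icc 3 (2 * L + 1), (1 / k ! : ℝ) * T k fun _ => x

/-- The Taylor polynomial of `log g` at `0`, with `G k` in place of `∇ᵏ (log g) (0)`. -/
def taylorLogAmplitude (L : ℕ)
    (G : (k : ℕ) → MultilinearMap ℝ (fun _ : Fin k => EuclideanSpace ℝ ι) ℝ)
    (x : EuclideanSpace ℝ ι) : ℝ :=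
  ∑ k ∈ Finset.Icc 1 (2 * L - 1), (1 / k ! : ℝ) * G k fun _ => x

/-- The coefficients in `S` of `(lam f (S z) - log g (S z)) / β`, where `lam * S ^ 2 = β`. -/
def laplacePotential (β : ℝ)
    (T G : (k : ℕ) → MultilinearMap ℝ (fun _ : Fin k => EuclideanSpace ℝ ι) ℝ) :
    ℕ → MvPolynomial ι ℝ
  | 0 => halfNormSq
  | k + 1 => (1 / (k + 3)! : ℝ) • tensorPoly (T (k + 3)) -
      (β⁻¹ * (1 / (k + 1)!)) • tensorPoly (G (k + 1))

lemma abs_one_div_factorial_le_one (k : ℕ) : |(1 / k ! : ℝ)| ≤ 1 := by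
  rw [abs_of_nonneg (by positivity), div_le_one (by positivity)]
  exact_mod_cast Nat.factorial_pos k

omit [Fintype ι] in
lemma HasParity.of_isHomogeneous_add_two {k : ℕ} {p : MvPolynomial ι ℝ}
    (hp : p.IsHomogeneous (k + 2)) : HasParity (k : ZMod 2) p := by
  have hcast : ((k + 2 : ℕ) : ZMod 2) = k :=
    (ZMod.natCast_eq_natCast_iff _ _ _).2 (Nat.add_mod_right k 2)
  exact hcast ▸ HasParity.of_isHomogeneous hp

lemma isPotential_laplacePotential (hβ1 : 1 ≤ β) (hcf : 1 ≤ cf) (hcg : 0 ≤ cg)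
    (hT : ∀ k, 3 ≤ k → k ≤ 2 * L + 1 → ∀ u, ‖u‖ = 1 → |T k fun _ => u| ≤ cf)
    (hG : ∀ k, 1 ≤ k → k ≤ 2 * L - 1 → ∀ u, ‖u‖ = 1 → |G k fun _ => u| ≤ cg) :
    IsPotential (2 * L - 1) (cf + cg) (laplacePotential β T G) where
  zero_eq := rfl
  growth
    | 0, _ => hasGrowth_halfNormSq (by linarith)
    | k + 1, hk => by
      have hT_growth := hasGrowth_tensorPoly (T (k + 3)) (by omega) (by linarith)
        (hT (k + 3) (by omega) (by omega))
      have hG_growth := hasGrowth_tensorPoly (G (k + 1)) (by omega) hcg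
        (hG (k + 1) (by omega) hk)
      have hG_coeff : |β⁻¹ * (1 / (k + 1)! : ℝ)| ≤ 1 := by
        rw [abs_mul]
        refine mul_le_one₀ ?_ (abs_nonneg _) (abs_one_div_factorial_le_one _)
        rw [abs_of_nonneg (by positivity)]
        exact inv_le_one_of_one_le₀ hβ1
      exact ((hT_growth.smul _).mono le_rfl (mul_le_of_le_one_left (by linarith)
        (abs_one_div_factorial_le_one _))).sub
        ((hG_growth.smul _).mono (by omega) (mul_le_of_le_one_left hcg hG_coeff))
  parity
    | 0, _ => HasParity.of_isHomogeneous_add_two isHomogeneous_halfNormSq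
    | k + 1, _ =>
      ((HasParity.of_isHomogeneous_add_two (isHomogeneous_tensorPoly (T (k + 3)))).smul _).sub
        ((HasParity.of_isHomogeneous (isHomogeneous_tensorPoly (G (k + 1)))).smul _)

lemma mul_evalAt_truncation_laplacePotential (hL : 1 ≤ L) (hβ : β ≠ 0) (hS : lam * S ^ 2 = β)
    (z : EuclideanSpace ℝ ι) :
    β * evalAt z (truncation (2 * L - 1 + 1) (laplacePotential β T G) S) =
      lam * taylorPhase L T (S • z) - taylorLogAmplitude L G (S • z) := by
  have hphase := Finset.sum_Ico_add' (fun k => (1 / k ! : ℝ) * T k fun _ => S • z) 0 (2 * L - 1) 3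
  have hamp := Finset.sum_Ico_add' (fun k => (1 / k ! : ℝ) * G k fun _ => S • z) 0 (2 * L - 1) 1
  rw [← Finset.range_eq_Ico, show 2 * L - 1 + 3 = 2 * L + 1 + 1 by omega,
    Finset.Ico_add_one_right_eq_Icc] at hphase
  rw [← Finset.range_eq_Ico, Finset.Ico_add_one_right_eq_Icc] at hamp
  rw [evalAt_truncation, Finset.sum_range_succ', taylorPhase, taylorLogAmplitude, ← hphase, ← hamp,
    mul_add, mul_add, Finset.mul_sum, Finset.mul_sum, add_comm, add_sub_assoc,
    ← Finset.sum_sub_distrib]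
  congr 1
  · rw [laplacePotential, evalAt_halfNormSq, norm_smul, mul_pow, norm_eq_abs, sq_abs, ← hS]
    ring
  · refine Finset.sum_congr rfl fun k _ => ?_
    rw [laplacePotential, map_sub, map_smul, map_smul, ← evalAt_tensorPoly, ← evalAt_tensorPoly,
      evalAt_smul_tensorPoly, evalAt_smul_tensorPoly, smul_eq_mul, smul_eq_mul, mul_sub, mul_sub]
    congr 1
    · rw [← hS]
      ring
    · field_simp

end RescaledPotential

section Scales

variable {L : ℕ} {β lam R S : ℝ}

/-- The error term `(R²β) ^ (L + 1) / lam ^ L` of the expansion. -/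
def laplaceError (L : ℕ) (β R lam : ℝ) : ℝ :=
  (R ^ 2 * β) ^ (L + 1) / lam ^ L

lemma pow_mul_pow_eq_laplaceError (hlam : lam ≠ 0) (hS : lam * S ^ 2 = β) :
    β * (S ^ (2 * L) * R ^ (2 * (L + 1))) = laplaceError L β R lam := by
  rw [laplaceError, ← hS, eq_div_iff (pow_ne_zero L hlam)]
  ring

lemma pow_le_laplaceError (hβ1 : 1 ≤ β) (hR : 1 ≤ R) (hlam : 0 < lam) (hS : lam * S ^ 2 = β) :
    (R * S) ^ (2 * L) ≤ laplaceError L β R lam := by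
  have hRβ : 1 ≤ R ^ 2 * β := one_le_mul_of_one_le_of_one_le (one_le_pow₀ hR) hβ1
  calc (R * S) ^ (2 * L) = (R ^ 2 * β) ^ L / lam ^ L := by
        rw [← hS, eq_div_iff (pow_ne_zero L hlam.ne')]
        ring
    _ ≤ laplaceError L β R lam := by
        rw [laplaceError]
        exact div_le_div_of_nonneg_right (pow_le_pow_right₀ hRβ L.le_succ) (pow_pos hlam L).le

lemma exp_neg_le_laplaceError (hβ1 : 1 ≤ β) (hR : 1 ≤ R) (hlam : 0 < lam)
    (hlog : 128 * L * log lam ≤ β * R ^ 2) :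
    exp (-(β * R ^ 2 / 128)) ≤ laplaceError L β R lam := by
  have hRβ : 1 ≤ R ^ 2 * β := one_le_mul_of_one_le_of_one_le (one_le_pow₀ hR) hβ1
  calc exp (-(β * R ^ 2 / 128)) ≤ exp (-(log lam * L)) := exp_le_exp.2 (by linarith)
    _ = 1 / lam ^ L := by rw [exp_neg, ← rpow_def_of_pos hlam, rpow_natCast, one_div]
    _ ≤ laplaceError L β R lam := by
        rw [laplaceError]
        gcongr
        exact one_le_pow₀ hRβ

lemma mul_exp_neg_le_laplaceError (hβ1 : 1 ≤ β) (hR : 1 ≤ R) (hlam : 0 < lam) (hSR : S * R ≤ 1)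
    (hlog : 128 * L * log lam ≤ β * R ^ 2) :
    β * (R ^ 3 * exp (-(β * R ^ 2 / 64))) * S ≤ 128 * laplaceError L β R lam := by
  have hexp : β * R ^ 2 ≤ 128 * exp (β * R ^ 2 / 128) := by
    linarith [add_one_le_exp (β * R ^ 2 / 128)]
  calc β * (R ^ 3 * exp (-(β * R ^ 2 / 64))) * S
      = S * R * (β * R ^ 2 * exp (-(β * R ^ 2 / 64))) := by ring
    _ ≤ 1 * (128 * exp (β * R ^ 2 / 128) * exp (-(β * R ^ 2 / 64))) := by gcongr
    _ = 128 * exp (-(β * R ^ 2 / 128)) := by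
        rw [one_mul, mul_assoc, ← exp_add]
        ring_nf
    _ ≤ 128 * laplaceError L β R lam := by
        gcongr
        exact exp_neg_le_laplaceError hβ1 hR hlam hlog

lemma interpolation_error_le {K : ℝ} (hK : 0 ≤ K) (hL : 1 ≤ L) (hβ1 : 1 ≤ β) (hR : 1 ≤ R)
    (hlam : 0 < lam) (hS : lam * S ^ 2 = β) (hSR : S * R ≤ 1)
    (hlog : 128 * L * log lam ≤ β * R ^ 2) :
    β * K * (S ^ (2 * L - 1) * R ^ (2 * L - 1 + 3) + R ^ 3 * exp (-(β * R ^ 2 / 64))) * S ≤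
      129 * K * laplaceError L β R lam := by
  have hpow := pow_mul_pow_eq_laplaceError (L := L) (R := R) hlam.ne' hS
  have htail := mul_exp_neg_le_laplaceError hβ1 hR hlam hSR hlog
  calc β * K * (S ^ (2 * L - 1) * R ^ (2 * L - 1 + 3) + R ^ 3 * exp (-(β * R ^ 2 / 64))) * S
      = K * (β * (S ^ (2 * L - 1 + 1) * R ^ (2 * L - 1 + 3)) +
          β * (R ^ 3 * exp (-(β * R ^ 2 / 64))) * S) := by ring
    _ = K * (laplaceError L β R lam + β * (R ^ 3 * exp (-(β * R ^ 2 / 64))) * S) := by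
        rw [show 2 * L - 1 + 1 = 2 * L by omega, show 2 * L - 1 + 3 = 2 * (L + 1) by omega, hpow]
    _ ≤ K * (laplaceError L β R lam + 128 * laplaceError L β R lam) := by gcongr
    _ = 129 * K * laplaceError L β R lam := by ring

lemma eight_le_of_mul_sqrt_max_le {x : ℝ}
    (h : (8 + 128 * L) * √(max 1 (x / β)) ≤ R) : 8 ≤ R := by
  have hsqrt : 1 ≤ √(max 1 (x / β)) := one_le_sqrt.2 (le_max_left _ _)
  nlinarith [mul_nonneg L.cast_nonneg (sub_nonneg.2 hsqrt)]

lemma mul_le_mul_sq_of_mul_sqrt_max_le {x : ℝ} (hβ : 0 < β)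
    (h : (8 + 128 * L) * √(max 1 (x / β)) ≤ R) : 128 * L * x ≤ β * R ^ 2 := by
  have hmax : 0 ≤ max 1 (x / β) := zero_le_one.trans (le_max_left _ _)
  have hsq : (8 + 128 * L : ℝ) ^ 2 * max 1 (x / β) ≤ R ^ 2 := by
    rw [← sq_sqrt hmax, ← mul_pow]
    gcongr
  have hcoeff : 128 * (L : ℝ) ≤ (8 + 128 * L) ^ 2 := by nlinarith
  calc 128 * L * x = β * (128 * L * (x / β)) := by field_simp
    _ ≤ β * (128 * L * max 1 (x / β)) := by gcongr; exact le_max_right _ _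
    _ ≤ β * R ^ 2 := by gcongr; exact le_trans (by gcongr) hsq

end Scales

section Expansion

lemma sum_range_eq_sum_odd {M : Type*} [AddCommMonoid M] (h : ℕ → M) (m : ℕ)
    (h_even : ∀ j < 2 * m + 1, Even j → h j = 0) :
    ∑ j ∈ Finset.range (2 * m + 1), h j = ∑ k ∈ Finset.Icc 1 m, h (2 * k - 1) := by
  induction m with
  | zero => simpa using h_even 0 (by omega) (by simp)
  | succ m ih =>
    rw [show 2 * (m + 1) + 1 = 2 * m + 1 + 1 + 1 by ring, Finset.sum_range_succ,
      Finset.sum_range_succ, ih (fun j hj => h_even j (by omega)),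
      Finset.sum_Icc_succ_top (by omega), h_even (2 * m + 1 + 1) (by omega) ⟨m + 1, by ring⟩,
      add_zero]
    rfl

variable {ι : Type*} [Fintype ι] {L N : ℕ} {β C lam R S : ℝ} {v : ℕ → MvPolynomial ι ℝ}

/-- The coefficient of `lam ^ (-k)` in the expansion of the logarithm of the partition function
at `S = √(β / lam)`. -/
def laplaceCoeff (β : ℝ) (v : ℕ → MvPolynomial ι ℝ) (k : ℕ) : ℝ :=
  -(β ^ (k + 1) * correctorMean β v (2 * k - 1) / (2 * k))

/-- The constant of `IsPotential.abs_log_mul_partitionFunction_sub_le`. -/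
def expansionConst (L : ℕ) (C : ℝ) : ℝ :=
  129 * logDerivConst (2 * L - 1) C + 2

lemma expansionConst_nonneg (hC : 0 ≤ C) (L : ℕ) : 0 ≤ expansionConst L C := by
  rw [expansionConst]
  linarith [logDerivConst_nonneg hC (2 * L - 1)]

namespace IsPotential

lemma abs_laplaceCoeff_le (hv : IsPotential (2 * L - 1) C v) (hβ : Fintype.card ι ≤ β) {k : ℕ}
    (hk : 1 ≤ k) (hkL : k ≤ L - 1) :
    |laplaceCoeff β v k| ≤ meanConst (2 * L - 1) C * β ^ (k + 1) := by
  have hβ0 : 0 ≤ β := (Nat.cast_nonneg _).trans hβ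
  have hk1 : (1 : ℝ) ≤ k := by exact_mod_cast hk
  have hmean : |correctorMean β v (2 * k - 1)| ≤ meanConst (2 * L - 1) C :=
    (hv.abs_correctorMean_le hβ (by omega)).trans <|
      Finset.single_le_sum (fun j _ => correctorConst_nonneg hv.const_nonneg j)
        (Finset.mem_range.2 (by omega))
  rw [laplaceCoeff, abs_neg, abs_div, abs_mul, abs_of_nonneg (pow_nonneg hβ0 _),
    abs_of_pos (by linarith : (0 : ℝ) < 2 * k), mul_comm]
  exact (div_le_self (by positivity) (by linarith)).trans (by gcongr)

lemma mul_sum_correctorMean_eq (hv : IsPotential (2 * L - 1) C v) (hL : 1 ≤ L) (hlam : lam ≠ 0)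
    (hS : lam * S ^ 2 = β) :
    β * ∑ j ∈ Finset.range (2 * L - 1), correctorMean β v j * (S ^ (j + 1) / (j + 1)) =
      -∑ k ∈ Finset.Icc 1 (L - 1), laplaceCoeff β v k / lam ^ k := by
  have hN : 2 * L - 1 = 2 * (L - 1) + 1 := by omega
  rw [hN, sum_range_eq_sum_odd _ _ fun j hj hj_even => by
    rw [hv.correctorMean_eq_zero_of_even (hN ▸ hj) hj_even, zero_mul], Finset.mul_sum,
    ← Finset.sum_neg_distrib]
  refine Finset.sum_congr rfl fun k hk => ?_
  have hk0 : 1 ≤ k := (Finset.mem_Icc.1 hk).1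
  have hindex : 2 * k - 1 + 1 = 2 * k := by omega
  have hcast : ((2 * k - 1 : ℕ) : ℝ) + 1 = 2 * k := by exact_mod_cast hindex
  have hS2 : S ^ 2 = β / lam := eq_div_of_mul_eq hlam (by rw [← hS, mul_comm])
  rw [laplaceCoeff, hindex, hcast, pow_mul, hS2, div_pow]
  ring

lemma partitionFunction_zero (hv : IsPotential N C v) (β R : ℝ) :
    partitionFunction N β R v 0 =
      ∫ z in Metric.closedBall (0 : EuclideanSpace ℝ ι) R, exp (-(β * (‖z‖ ^ 2 / 2))) := by
  simp [partitionFunction, evalAt_truncation, Finset.sum_range_succ', hv.zero_eq]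

lemma abs_log_mul_partitionFunction_zero_le (hv : IsPotential N C v)
    (hβ : Fintype.card ι ≤ β) (hβ1 : 1 ≤ β) (hR : 8 ≤ R) :
    |log ((β / (2 * π)) ^ (Fintype.card ι / 2 : ℝ) * partitionFunction N β R v 0)| ≤
      2 * exp (-(β * R ^ 2 / 128)) := by
  have hgauss := abs_log_gaussian_closedBall_le (E := EuclideanSpace ℝ ι) (β := β) (R := R)
    (by rwa [finrank_euclideanSpace]) hβ1 hR
  rw [finrank_euclideanSpace, ← hv.partitionFunction_zero] at hgauss
  refine hgauss.trans (mul_le_mul_of_nonneg_left (exp_le_exp.2 ?_) zero_le_two)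
  nlinarith [mul_nonneg (zero_le_one.trans hβ1) (sq_nonneg R)]

lemma abs_log_mul_partitionFunction_sub_le (hv : IsPotential (2 * L - 1) C v) (hL : 1 ≤ L)
    (hβ : Fintype.card ι ≤ β) (hβ1 : 1 ≤ β) (hlam : 0 < lam) (hS : 0 ≤ S)
    (hlamS : lam * S ^ 2 = β) (hR : 8 ≤ R) (hSR : 2 * (S * R) ≤ 1)
    (hNSR : 32 * (2 * L - 1 : ℕ) * C * (S * R) ≤ 1) (hlog : 128 * L * log lam ≤ β * R ^ 2) :
    |log ((β / (2 * π)) ^ (Fintype.card ι / 2 : ℝ) * partitionFunction (2 * L - 1) β R v S) -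
        ∑ k ∈ Finset.Icc 1 (L - 1), laplaceCoeff β v k / lam ^ k| ≤
      expansionConst L C * laplaceError L β R lam := by
  have hR1 : 1 ≤ R := by linarith
  have hq : (β / (2 * π)) ^ (Fintype.card ι / 2 : ℝ) ≠ 0 := by positivity
  have hZ0 := hv.partitionFunction_pos (s := 0) hβ hβ1 le_rfl hR (by simp) (by simp)
  have hZS := hv.partitionFunction_pos hβ hβ1 hS hR hSR hNSR
  have hgauss := hv.abs_log_mul_partitionFunction_zero_le hβ hβ1 hR
  have hinterp := hv.abs_log_partitionFunction_sub_le hβ hβ1 hS hR hSR hNSR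
  rw [log_mul hq hZ0.ne', abs_le] at hgauss
  rw [hv.mul_sum_correctorMean_eq hL hlam.ne' hlamS, abs_le] at hinterp
  have hgauss_error := exp_neg_le_laplaceError hβ1 hR1 hlam hlog
  have hinterp_error := interpolation_error_le (logDerivConst_nonneg hv.const_nonneg (2 * L - 1))
    hL hβ1 hR1 hlam hlamS (by linarith) hlog
  rw [log_mul hq hZS.ne', expansionConst, abs_le]
  constructor <;> linarith

end IsPotential

end Expansion

section Laplace

lemma abs_log_setIntegral_sub_le {α : Type*} [MeasurableSpace α] {μ : Measure α} {s : Set α}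
    {F h : α → ℝ} {ε : ℝ} (hs : MeasurableSet s) (hF : AEStronglyMeasurable F (μ.restrict s))
    (hF_pos : ∀ x ∈ s, 0 < F x) (hh : IntegrableOn (fun x => exp (h x)) s μ)
    (hh_pos : 0 < ∫ x in s, exp (h x) ∂μ) (hFh : ∀ x ∈ s, |log (F x) - h x| ≤ ε) :
    0 < ∫ x in s, F x ∂μ ∧ |log (∫ x in s, F x ∂μ) - log (∫ x in s, exp (h x) ∂μ)| ≤ ε := by
  have hF_le : ∀ x ∈ s, F x ≤ exp ε * exp (h x) := fun x hx => by
    rw [← exp_add, ← log_le_iff_le_exp (hF_pos x hx)]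
    linarith [(abs_le.1 (hFh x hx)).2]
  have hF_ge : ∀ x ∈ s, exp (-ε) * exp (h x) ≤ F x := fun x hx => by
    rw [← exp_add, ← le_log_iff_exp_le (hF_pos x hx)]
    linarith [(abs_le.1 (hFh x hx)).1]
  have hF_int : IntegrableOn F s μ := (hh.const_mul (exp ε)).mono' hF <|
    (ae_restrict_mem hs).mono fun x hx => by
      rw [norm_of_nonneg (hF_pos x hx).le]
      exact hF_le x hx
  have hupper := setIntegral_mono_on hF_int (hh.const_mul (exp ε)) hs hF_le
  have hlower := setIntegral_mono_on (hh.const_mul (exp (-ε))) hF_int hs hF_ge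
  rw [integral_const_mul] at hupper hlower
  have hpos : 0 < ∫ x in s, F x ∂μ := (mul_pos (exp_pos _) hh_pos).trans_le hlower
  have hlog_upper := log_le_log hpos hupper
  have hlog_lower := log_le_log (mul_pos (exp_pos _) hh_pos) hlower
  rw [log_mul (exp_pos _).ne' hh_pos.ne', log_exp] at hlog_upper hlog_lower
  exact ⟨hpos, abs_le.2 ⟨by linarith, by linarith⟩⟩

variable {d L : ℕ} {cf cg r₀ lam R S : ℝ} {f g : EuclideanSpace ℝ (Fin d) → ℝ}
  {T G : (k : ℕ) → MultilinearMap ℝ (fun _ : Fin k => EuclideanSpace ℝ (Fin d)) ℝ}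

/-- The part of Assumptions (A1) and (A2) which concerns the sizes of the Taylor coefficients `T k`
of `f` and `G k` of `log g` and of the Taylor remainders, with measurability in place of
smoothness. The normalizations `f 0 = 0` and `g 0 = 1` are contained in the remainder bounds. -/
structure IsLaplaceData (L : ℕ) (cf cg r₀ : ℝ) (f g : EuclideanSpace ℝ (Fin d) → ℝ)
    (T G : (k : ℕ) → MultilinearMap ℝ (fun _ : Fin k => EuclideanSpace ℝ (Fin d)) ℝ) : Prop where
  measurable_phase : AEStronglyMeasurable f (volume.restrict (Metric.closedBall 0 r₀))
  measurable_amplitude : AEStronglyMeasurable g (volume.restrict (Metric.closedBall 0 r₀))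
  amplitude_pos : ∀ x, ‖x‖ ≤ r₀ → 0 < g x
  phase_tensor_le : ∀ k, 3 ≤ k → k ≤ 2 * L + 1 → ∀ u, ‖u‖ = 1 → |T k fun _ => u| ≤ cf
  phase_remainder_le : ∀ x, ‖x‖ ≤ r₀ → |f x - taylorPhase L T x| ≤ cf * ‖x‖ ^ (2 * (L + 1))
  amplitude_tensor_le : ∀ k, 1 ≤ k → k ≤ 2 * L - 1 → ∀ u, ‖u‖ = 1 → |G k fun _ => u| ≤ cg
  amplitude_remainder_le :
    ∀ x, ‖x‖ ≤ r₀ → |log (g x) - taylorLogAmplitude L G x| ≤ cg * ‖x‖ ^ (2 * L)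

/-- The normalized Laplace integral of `f` and `g` over the ball of radius `r`; `I_in(λ)` is the
case `r = R √(d / λ)`. -/
def localIntegral (lam r : ℝ) (f g : EuclideanSpace ℝ (Fin d) → ℝ) : ℝ :=
  (lam / (2 * π)) ^ (d / 2 : ℝ) * ∫ x in Metric.closedBall 0 r, g x * exp (-(lam * f x))

lemma setIntegral_exp_taylor_eq (hL : 1 ≤ L) (hd : d ≠ 0) (hS : 0 < S) (hR : 0 ≤ R)
    (hlamS : lam * S ^ 2 = d) :
    ∫ x in Metric.closedBall (0 : EuclideanSpace ℝ (Fin d)) (R * S),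
        exp (taylorLogAmplitude L G x - lam * taylorPhase L T x) =
      S ^ d * partitionFunction (2 * L - 1) d R (laplacePotential d T G) S := by
  have hscale := Measure.setIntegral_comp_smul_of_pos (volume : Measure (EuclideanSpace ℝ (Fin d)))
    (fun x => exp (taylorLogAmplitude L G x - lam * taylorPhase L T x))
    (Metric.closedBall 0 R) hS
  rw [smul_closedBall _ _ hR, smul_zero, norm_of_nonneg hS.le, mul_comm S R,
    finrank_euclideanSpace, Fintype.card_fin, smul_eq_mul, eq_inv_mul_iff_mul_eq₀ (by positivity)]
    at hscale
  rw [← hscale, partitionFunction]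
  congr 3
  funext z
  rw [mul_evalAt_truncation_laplacePotential hL (Nat.cast_ne_zero.2 hd) hlamS, neg_sub]

lemma rpow_mul_pow_eq (hlam : 0 < lam) (hS : 0 ≤ S) (hlamS : lam * S ^ 2 = d) :
    (lam / (2 * π)) ^ (d / 2 : ℝ) * S ^ d = (d / (2 * π)) ^ (d / 2 : ℝ) := by
  have hSd : S ^ d = (S ^ 2) ^ (d / 2 : ℝ) := by
    rw [← rpow_natCast S 2, ← rpow_mul hS, ← rpow_natCast]
    congr 1
    push_cast
    ring
  rw [hSd, ← mul_rpow (by positivity) (by positivity), ← hlamS]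
  ring_nf

lemma continuous_map_const {k : ℕ}
    (T : MultilinearMap ℝ (fun _ : Fin k => EuclideanSpace ℝ (Fin d)) ℝ) :
    Continuous fun x => T fun _ => x := by
  simp_rw [← evalAt_tensorPoly]
  exact continuous_evalAt _

lemma continuous_taylorPhase : Continuous (taylorPhase L T) := by
  refine (by fun_prop : Continuous fun x : EuclideanSpace ℝ (Fin d) => ‖x‖ ^ 2 / 2).add ?_
  exact continuous_finsetSum _ fun k _ => (continuous_map_const (T k)).const_mul _

lemma continuous_taylorLogAmplitude : Continuous (taylorLogAmplitude L G) :=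
  continuous_finsetSum _ fun k _ => (continuous_map_const (G k)).const_mul _

lemma taylorPhase_zero : taylorPhase L T 0 = 0 := by
  rw [taylorPhase, norm_zero, zero_pow two_ne_zero, zero_div, zero_add]
  refine Finset.sum_eq_zero fun k hk => ?_
  have hk3 : 3 ≤ k := (Finset.mem_Icc.1 hk).1
  have hzero : (T k fun _ => 0) = 0 := (T k).map_coord_zero ⟨0, by omega⟩ rfl
  rw [hzero, mul_zero]

lemma taylorLogAmplitude_zero : taylorLogAmplitude L G 0 = 0 := by
  refine Finset.sum_eq_zero fun k hk => ?_
  have hk1 : 1 ≤ k := (Finset.mem_Icc.1 hk).1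
  have hzero : (G k fun _ => 0) = 0 := (G k).map_coord_zero ⟨0, by omega⟩ rfl
  rw [hzero, mul_zero]

lemma localIntegral_of_dim_zero {f g : EuclideanSpace ℝ (Fin 0) → ℝ} {r : ℝ} (hr : 0 ≤ r)
    (hf : f 0 = 0) (hg : g 0 = 1) : localIntegral lam r f g = 1 := by
  have hball : Metric.closedBall (0 : EuclideanSpace ℝ (Fin 0)) r = Set.univ :=
    Set.eq_univ_of_forall fun x => by
      rw [Subsingleton.elim x 0]
      exact Metric.mem_closedBall_self hr
  simp [localIntegral, hball, volume_euclideanSpace_eq_dirac, hf, hg]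

namespace IsLaplaceData

lemma abs_log_integrand_sub_le (h : IsLaplaceData L cf cg r₀ f g T G) (hd : d ≠ 0) (hcf : 0 ≤ cf)
    (hcg : 0 ≤ cg) (hlam : 0 < lam) (hR : 1 ≤ R) (hlamS : lam * S ^ 2 = d) (hRS : R * S ≤ r₀)
    {x : EuclideanSpace ℝ (Fin d)} (hx : ‖x‖ ≤ R * S) :
    |log (g x * exp (-(lam * f x))) - (taylorLogAmplitude L G x - lam * taylorPhase L T x)| ≤
      (cf + cg) * laplaceError L d R lam := by
  have hd1 : (1 : ℝ) ≤ d := by exact_mod_cast Nat.one_le_iff_ne_zero.2 hd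
  have hphase : lam * |f x - taylorPhase L T x| ≤ cf * laplaceError L d R lam := by
    calc lam * |f x - taylorPhase L T x| ≤ lam * (cf * (R * S) ^ (2 * (L + 1))) := by
          gcongr
          exact (h.phase_remainder_le x (hx.trans hRS)).trans (by gcongr)
      _ = cf * (lam * S ^ 2 * (S ^ (2 * L) * R ^ (2 * (L + 1)))) := by ring
      _ = cf * laplaceError L d R lam := by
          rw [hlamS, pow_mul_pow_eq_laplaceError hlam.ne' hlamS]
  have hamplitude : |log (g x) - taylorLogAmplitude L G x| ≤ cg * laplaceError L d R lam := by
    calc |log (g x) - taylorLogAmplitude L G x| ≤ cg * (R * S) ^ (2 * L) :=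
          (h.amplitude_remainder_le x (hx.trans hRS)).trans (by gcongr)
      _ ≤ cg * laplaceError L d R lam := by
          gcongr
          exact pow_le_laplaceError hd1 hR hlam hlamS
  rw [log_mul (h.amplitude_pos x (hx.trans hRS)).ne' (exp_pos _).ne', log_exp,
    show log (g x) + -(lam * f x) - (taylorLogAmplitude L G x - lam * taylorPhase L T x) =
      log (g x) - taylorLogAmplitude L G x - lam * (f x - taylorPhase L T x) by ring]
  refine (abs_sub _ _).trans ?_
  rw [abs_mul, abs_of_pos hlam]
  linarith

lemma phase_zero (h : IsLaplaceData L cf cg r₀ f g T G) (hr₀ : 0 ≤ r₀) : f 0 = 0 := by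
  have hbound := h.phase_remainder_le 0 (norm_zero.trans_le hr₀)
  rw [taylorPhase_zero, norm_zero, zero_pow (by omega), mul_zero, sub_zero] at hbound
  exact abs_nonpos_iff.1 hbound

lemma amplitude_zero (h : IsLaplaceData L cf cg r₀ f g T G) (hL : 1 ≤ L) (hr₀ : 0 ≤ r₀) :
    g 0 = 1 := by
  have hbound := h.amplitude_remainder_le 0 (norm_zero.trans_le hr₀)
  rw [taylorLogAmplitude_zero, norm_zero, zero_pow (by omega), mul_zero, sub_zero] at hbound
  exact eq_one_of_pos_of_log_eq_zero (h.amplitude_pos 0 (norm_zero.trans_le hr₀))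
    (abs_nonpos_iff.1 hbound)

lemma aestronglyMeasurable_integrand (h : IsLaplaceData L cf cg r₀ f g T G) {r : ℝ}
    (hr : r ≤ r₀) : AEStronglyMeasurable (fun x => g x * exp (-(lam * f x)))
      (volume.restrict (Metric.closedBall 0 r)) :=
  (h.measurable_amplitude.mul
    (continuous_exp.comp_aestronglyMeasurable (h.measurable_phase.const_mul lam).neg)).mono_measure
      (Measure.restrict_mono (Metric.closedBall_subset_closedBall hr) le_rfl)

lemma abs_log_localIntegral_sub_partitionFunction_le (h : IsLaplaceData L cf cg r₀ f g T G)
    (hL : 1 ≤ L) (hd : d ≠ 0) (hcf : 0 ≤ cf) (hcg : 0 ≤ cg) (hlam : 0 < lam) (hR : 1 ≤ R)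
    (hS : 0 < S) (hlamS : lam * S ^ 2 = d) (hRS : R * S ≤ r₀)
    (hZ : 0 < partitionFunction (2 * L - 1) d R (laplacePotential d T G) S) :
    0 < localIntegral lam (R * S) f g ∧
      |log (localIntegral lam (R * S) f g) - log ((d / (2 * π)) ^ (d / 2 : ℝ) *
          partitionFunction (2 * L - 1) d R (laplacePotential d T G) S)| ≤
        (cf + cg) * laplaceError L d R lam := by
  have hmodel := setIntegral_exp_taylor_eq (R := R) (T := T) (G := G) hL hd hS (by linarith) hlamS
  have hmodel_pos : 0 < S ^ d * partitionFunction (2 * L - 1) d R (laplacePotential d T G) S :=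
    mul_pos (pow_pos hS d) hZ
  have hmodel_cont : Continuous fun x : EuclideanSpace ℝ (Fin d) =>
      exp (taylorLogAmplitude L G x - lam * taylorPhase L T x) := by
    have hphase := continuous_taylorPhase (L := L) (T := T)
    have hamplitude := continuous_taylorLogAmplitude (L := L) (G := G)
    fun_prop
  have hprefactor : 0 < (lam / (2 * π)) ^ (d / 2 : ℝ) := by positivity
  obtain ⟨hpos, hlog⟩ := abs_log_setIntegral_sub_le Metric.isClosed_closedBall.measurableSet
    (h.aestronglyMeasurable_integrand hRS)
    (fun x hx => mul_pos (h.amplitude_pos x ((mem_closedBall_zero_iff.1 hx).trans hRS))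
      (exp_pos _))
    (hmodel_cont.continuousOn.integrableOn_compact (isCompact_closedBall _ _))
    (hmodel ▸ hmodel_pos)
    fun x hx => h.abs_log_integrand_sub_le hd hcf hcg hlam hR hlamS hRS
      (mem_closedBall_zero_iff.1 hx)
  refine ⟨mul_pos hprefactor hpos, ?_⟩
  rw [hmodel] at hlog
  rwa [← rpow_mul_pow_eq hlam hS.le hlamS, mul_assoc, localIntegral,
    log_mul hprefactor.ne' hpos.ne', log_mul hprefactor.ne' hmodel_pos.ne', add_sub_add_left_eq_sub]

lemma abs_log_localIntegral_sub_le_of_dim_ne_zero (h : IsLaplaceData L cf cg r₀ f g T G)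
    (hL : 1 ≤ L) (hd : d ≠ 0) (hcf : 1 ≤ cf) (hcg : 0 ≤ cg) (hlam : 0 < lam) (hS : 0 < S)
    (hlamS : lam * S ^ 2 = d) (hR : (8 + 128 * L) * √(max 1 (log lam / d)) ≤ R)
    (hRS : R * S ≤ r₀) (hRS_small : R * S ≤ 1 / (64 * L * (cf + cg))) :
    0 < localIntegral lam (R * S) f g ∧
      |log (localIntegral lam (R * S) f g) -
          ∑ k ∈ Finset.Icc 1 (L - 1), laplaceCoeff d (laplacePotential d T G) k / lam ^ k| ≤
        (expansionConst L (cf + cg) + (cf + cg)) * laplaceError L d R lam := by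
  have hd1 : (1 : ℝ) ≤ d := by exact_mod_cast Nat.one_le_iff_ne_zero.2 hd
  have hcard : ((Fintype.card (Fin d) : ℕ) : ℝ) ≤ d := by rw [Fintype.card_fin]
  have hL1 : (1 : ℝ) ≤ L := by exact_mod_cast hL
  have hN : ((2 * L - 1 : ℕ) : ℝ) ≤ 2 * L := by exact_mod_cast Nat.sub_le _ _
  have hR8 := eight_le_of_mul_sqrt_max_le hR
  have hSR0 : 0 ≤ S * R := by positivity
  have hSR_small : 64 * L * (cf + cg) * (S * R) ≤ 1 := by
    rwa [le_div_iff₀ (by positivity), mul_comm, mul_comm R] at hRS_small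
  have hLC : 1 ≤ L * (cf + cg) := one_le_mul_of_one_le_of_one_le hL1 (by linarith)
  have hSR : 2 * (S * R) ≤ 1 := by nlinarith
  have hNSR : 32 * (2 * L - 1 : ℕ) * (cf + cg) * (S * R) ≤ 1 := by
    calc _ ≤ 32 * (2 * L) * (cf + cg) * (S * R) := by gcongr
      _ ≤ 1 := by linarith
  have hv := isPotential_laplacePotential (β := d) hd1 hcf hcg h.phase_tensor_le
    h.amplitude_tensor_le
  obtain ⟨hpos, hcompare⟩ := h.abs_log_localIntegral_sub_partitionFunction_le hL hd (by linarith)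
    hcg hlam (by linarith) hS hlamS hRS (hv.partitionFunction_pos hcard hd1 hS.le hR8 hSR hNSR)
  have hexpand := hv.abs_log_mul_partitionFunction_sub_le hL hcard hd1 hlam hS.le hlamS hR8 hSR
    hNSR (mul_le_mul_sq_of_mul_sqrt_max_le (by linarith) hR)
  rw [Fintype.card_fin] at hexpand
  refine ⟨hpos, (abs_sub_le _ _ _).trans ((add_le_add hcompare hexpand).trans_eq ?_)⟩
  ring

lemma abs_log_localIntegral_sub_le (h : IsLaplaceData L cf cg r₀ f g T G) (hL : 1 ≤ L)
    (hcf : 1 ≤ cf) (hcg : 0 ≤ cg) (hr₀ : 0 ≤ r₀) (hlam : 0 < lam)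
    (hR : (8 + 128 * L) * √(max 1 (log lam / d)) ≤ R) (hR_le : R * √(d / lam) ≤ r₀)
    (hR_small : R * √(d / lam) ≤ 1 / (64 * L * (cf + cg))) :
    0 < localIntegral lam (R * √(d / lam)) f g ∧
      |log (localIntegral lam (R * √(d / lam)) f g) -
          ∑ k ∈ Finset.Icc 1 (L - 1), laplaceCoeff d (laplacePotential d T G) k / lam ^ k| ≤
        (expansionConst L (cf + cg) + (cf + cg)) * laplaceError L d R lam := by
  rcases eq_or_ne d 0 with rfl | hd
  · rw [localIntegral_of_dim_zero (by simp) (h.phase_zero hr₀) (h.amplitude_zero hL hr₀)]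
    simp [laplaceCoeff, laplaceError]
  · have hdlam : 0 < (d : ℝ) / lam := by positivity
    refine h.abs_log_localIntegral_sub_le_of_dim_ne_zero hL hd hcf hcg hlam (sqrt_pos.2 hdlam) ?_
      hR hR_le hR_small
    rw [sq_sqrt hdlam.le, mul_div_cancel₀ _ hlam.ne']

lemma abs_laplaceCoeff_le (h : IsLaplaceData L cf cg r₀ f g T G) (hcf : 1 ≤ cf) (hcg : 0 ≤ cg)
    {k : ℕ} (hk : 1 ≤ k) (hkL : k ≤ L - 1) :
    |laplaceCoeff d (laplacePotential d T G) k| ≤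
      meanConst (2 * L - 1) (cf + cg) * d ^ (k + 1) := by
  rcases eq_or_ne d 0 with rfl | hd
  · simp [laplaceCoeff]
  · have hd1 : (1 : ℝ) ≤ d := by exact_mod_cast Nat.one_le_iff_ne_zero.2 hd
    exact (isPotential_laplacePotential hd1 hcf hcg h.phase_tensor_le
      h.amplitude_tensor_le).abs_laplaceCoeff_le (by rw [Fintype.card_fin]) hk hkL

end IsLaplaceData

end Laplace

end LaplaceExpansion

open LaplaceExpansion in
theorem laplace_local_expansion_general (L : ℕ) (hL : 1 ≤ L) (cf cg : ℝ) (hcf : 1 ≤ cf)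
    (hcg : 0 ≤ cg) :
    ∃ cm cp C : ℝ, 1 ≤ cm ∧ 0 < cp ∧ cp ≤ 1 ∧ 1 ≤ C ∧
      ∀ (d : ℕ) (r₀ : ℝ), 0 ≤ r₀ →
      ∀ (f g : EuclideanSpace ℝ (Fin d) → ℝ)
        (T G : (k : ℕ) → MultilinearMap ℝ (fun _ : Fin k => EuclideanSpace ℝ (Fin d)) ℝ),
        IsLaplaceData L cf cg r₀ f g T G →
        ∃ b : ℕ → ℝ,
          (∀ k, 1 ≤ k → k ≤ L - 1 → |b k| ≤ C * (d : ℝ) ^ (k + 1)) ∧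
          ∀ lam R : ℝ, 0 < lam →
            cm * √(max 1 (log lam / d)) ≤ R →
            R * √((d : ℝ) / lam) ≤ min r₀ cp →
            0 < localIntegral lam (R * √((d : ℝ) / lam)) f g ∧
            |log (localIntegral lam (R * √((d : ℝ) / lam)) f g) -
                ∑ k ∈ Finset.Icc 1 (L - 1), b k / lam ^ k| ≤
              C * (R ^ 2 * d) ^ (L + 1) / lam ^ L := by
  have hL1 : (1 : ℝ) ≤ L := by exact_mod_cast hL
  have hC0 : 0 ≤ cf + cg := by linarith
  have hLC : 1 ≤ L * (cf + cg) := one_le_mul_of_one_le_of_one_le hL1 (by linarith)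
  have hcp : 1 ≤ 64 * L * (cf + cg) := by linarith
  have hexpansion := expansionConst_nonneg hC0 L
  have hmean := meanConst_nonneg hC0 (2 * L - 1)
  refine ⟨8 + 128 * L, 1 / (64 * L * (cf + cg)),
    expansionConst L (cf + cg) + (cf + cg) + meanConst (2 * L - 1) (cf + cg), by linarith,
    by positivity, div_le_one_of_le₀ hcp (by linarith), by linarith, ?_⟩
  intro d r₀ hr₀ f g T G h
  refine ⟨laplaceCoeff d (laplacePotential d T G), fun k hk hkL => ?_,
    fun lam R hlam hR hRmin => ?_⟩
  · exact (h.abs_laplaceCoeff_le hcf hcg hk hkL).trans (by gcongr; linarith)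
  · obtain ⟨hR_le, hR_small⟩ := le_min_iff.1 hRmin
    obtain ⟨hpos, hlog⟩ := h.abs_log_localIntegral_sub_le hL hcf hcg hr₀ hlam hR hR_le hR_small
    refine ⟨hpos, hlog.trans ?_⟩
    rw [mul_div_assoc, laplaceError]
    exact mul_le_mul_of_nonneg_right (le_add_of_nonneg_right hmean) (by positivity)

/-- **Expansion of the local Laplace integral `I_in(λ)`.** Under parts (A1)–(A2) of
Assumption A — where `T k` plays the role of `∇^k f(0)` and `G k` that of
`∇^k (log g)(0)` — there exist constants `c⁻ ≥ 1`, `c⁺ ∈ (0,1]`, `C ≥ 1` depending only on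
`c_f, c_g, L` such that, whenever `R ≥ c⁻ √(max(1, log λ / d))` and
`R√(d/λ) ≤ min(r₀, c⁺)`, there are coefficients `b₁, …, b_{L−1}` (independent of `λ` and
`R`, with `|b_k| ≤ C d^{k+1}`) such that `I_in(λ) > 0` and
`|log I_in(λ) − Σ_{k=1}^{L−1} b_k λ^{−k}| ≤ C (R²d)^{L+1} / λ^L`. -/
theorem laplace_local_expansion (L : ℕ) (hL : 1 ≤ L) (cf cg : ℝ)
    (hcf : 1 ≤ cf) (hcg : 1 ≤ cg) :
    ∃ cm cp C : ℝ, 1 ≤ cm ∧ 0 < cp ∧ cp ≤ 1 ∧ 1 ≤ C ∧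
      ∀ (d : ℕ) (r₀ : ℝ), 0 < r₀ →
      ∀ (f g : EuclideanSpace ℝ (Fin d) → ℝ)
        (T G : (k : ℕ) → MultilinearMap ℝ (fun _ : Fin k => EuclideanSpace ℝ (Fin d)) ℝ),
        -- smoothness
        ContDiffOn ℝ ((2 * L + 2 : ℕ) : ℕ∞) f (Metric.closedBall 0 r₀) →
        ContDiffOn ℝ ((2 * L : ℕ) : ℕ∞) g (Metric.closedBall 0 r₀) →
        -- (A1): Taylor expansion of f at 0 with symmetric bounded tensors
        (∀ k, 3 ≤ k → k ≤ 2 * L + 1 →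
          ∀ (σ : Equiv.Perm (Fin k)) (m : Fin k → EuclideanSpace ℝ (Fin d)),
            T k (m ∘ σ) = T k m) →
        (∀ k, 3 ≤ k → k ≤ 2 * L + 1 → ∀ u : EuclideanSpace ℝ (Fin d), ‖u‖ = 1 →
          |T k fun _ => u| ≤ cf) →
        (∀ x : EuclideanSpace ℝ (Fin d), ‖x‖ ≤ r₀ →
          |f x - (‖x‖ ^ 2 / 2 + ∑ k ∈ Finset.Icc 3 (2 * L + 1),
              (1 / (Nat.factorial k) : ℝ) * T k fun _ => x)| ≤
            cf * ‖x‖ ^ (2 * (L + 1))) →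
        -- (A2): Taylor expansion of log g at 0 with symmetric bounded tensors
        g 0 = 1 →
        (∀ x : EuclideanSpace ℝ (Fin d), ‖x‖ ≤ r₀ → 0 < g x) →
        (∀ k, 1 ≤ k → k ≤ 2 * L - 1 →
          ∀ (σ : Equiv.Perm (Fin k)) (m : Fin k → EuclideanSpace ℝ (Fin d)),
            G k (m ∘ σ) = G k m) →
        (∀ k, 1 ≤ k → k ≤ 2 * L - 1 → ∀ u : EuclideanSpace ℝ (Fin d), ‖u‖ = 1 →
          |G k fun _ => u| ≤ cg) →
        (∀ x : EuclideanSpace ℝ (Fin d), ‖x‖ ≤ r₀ →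
          |Real.log (g x) - ∑ k ∈ Finset.Icc 1 (2 * L - 1),
              (1 / (Nat.factorial k) : ℝ) * G k fun _ => x| ≤ cg * ‖x‖ ^ (2 * L)) →
        -- the coefficients (depending only on d and the tensors, not on λ or R)
        ∃ b : ℕ → ℝ,
          (∀ k, 1 ≤ k → k ≤ L - 1 → |b k| ≤ C * (d : ℝ) ^ (k + 1)) ∧
          ∀ lam R : ℝ, 0 < lam →
            cm * Real.sqrt (max 1 (Real.log lam / d)) ≤ R →
            R * Real.sqrt ((d : ℝ) / lam) ≤ min r₀ cp →
            0 < (lam / (2 * π)) ^ ((d : ℝ) / 2) *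
                ∫ x in Metric.closedBall (0 : EuclideanSpace ℝ (Fin d))
                    (R * Real.sqrt ((d : ℝ) / lam)),
                  g x * Real.exp (-(lam * f x)) ∧
            |Real.log ((lam / (2 * π)) ^ ((d : ℝ) / 2) *
                  ∫ x in Metric.closedBall (0 : EuclideanSpace ℝ (Fin d))
                      (R * Real.sqrt ((d : ℝ) / lam)),
                    g x * Real.exp (-(lam * f x))) -
                ∑ k ∈ Finset.Icc 1 (L - 1), b k / lam ^ k| ≤
              C * (R ^ 2 * d) ^ (L + 1) / lam ^ L := by
  obtain ⟨cm, cp, C, hcm, hcp, hcp1, hC, h⟩ :=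
    laplace_local_expansion_general L hL cf cg hcf (zero_le_one.trans hcg)
  exact ⟨cm, cp, C, hcm, hcp, hcp1, hC,
    fun d r₀ hr₀ f g T G hf hg _ hT hfT _ hg_pos _ hG hgG => h d r₀ hr₀.le f g T G
      ⟨hf.continuousOn.aestronglyMeasurable Metric.isClosed_closedBall.measurableSet,
        hg.continuousOn.aestronglyMeasurable Metric.isClosed_closedBall.measurableSet,
        hg_pos, hT, hfT, hG, hgG⟩⟩
end
end

section
/- Fix an integer L ≥ 1. Suppose f, g : ℝ^d → ℝ satisfy Assumption A (with constants c_f, c_g ≥ 1, r₀ > 0, κ ∈ (0,1/e]) and d ≥ 2L. Then there exist constants c⁻ ≥ 1 (sufficiently large) and c⁺ ∈ (0,1] (sufficiently small), depending only on c_f, c_g and L, such that whenever R ≥ c⁻·max(1, (1/κ)[√(log(1/κ)) + log R + (log λ)/d]), (R²d)^{L+1}/λ^L ≤ c⁺, and R√(d/λ) ≤ r₀, one has I_in(λ) > 0 and |I_out(λ)| / I_in(λ) ≤ 5·R^{2L}·d^{L+1}/λ^L. -/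
/-!
Put `σ = √(d/λ)`. On the ball of radius `σ` the Taylor expansions make `λ f` and `log g` at most a
constant times `d` in size, and this ball contains a cube of side `2σ/√d`, so
`I_in ≥ e^{-O(d)} (2σ/√d)^d` up to the common normalisation. Outside the ball of radius `Rσ` the
decay assumption dominates the integrand by `e^{-κRd/4} ∏ᵢ (1 + (b xᵢ)²)⁻¹` with `b = κ√d/(4σ)`:
by Jensen's inequality the logarithm of the product is at least `-2d log(1 + κ‖x‖/(4σ))`, which each
of the three regimes of the decay rate absorbs. The product integrates to `(4πσ/(κ√d))^d`, hence
`I_out / I_in ≤ (O(1)/κ)^d e^{-κRd/4}`, and the lower bound on `R` makes this at most `λ^{-L}`.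
-/

open MeasureTheory Real

noncomputable section

section Scalar

variable {σ κ R δ N : ℝ}

lemma log_one_add_mul_le {p q : ℝ} (hp : 0 ≤ p) (hpq : p ≤ q) (hq : 1 ≤ q) (hN : 0 ≤ N) :
    log (1 + p * N) ≤ q * log (1 + N) := by
  rw [← log_rpow (by positivity)]
  apply log_le_log (by positivity)
  calc 1 + p * N ≤ 1 + q * N := by gcongr
    _ ≤ (1 + N) ^ q := one_add_mul_self_le_rpow_one_add (by linarith) hq

lemma half_le_log_one_add {t : ℝ} (ht : 0 ≤ t) (ht1 : t ≤ 1) : t / 2 ≤ log (1 + t) := by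
  refine le_trans ?_ (le_log_one_add_of_nonneg ht)
  rw [div_le_div_iff₀ (by norm_num) (by positivity)]
  nlinarith

lemma log_majorant_le_linear_rate (hσ : 0 < σ) (hκ : 0 < κ) (hR : 0 ≤ R) (hN : R * σ ≤ N) :
    κ * R / 4 + 2 * log (1 + κ / (4 * σ) * N) ≤ κ / σ ^ 2 * (σ * N) := by
  have hN0 : 0 ≤ N := (by positivity : 0 ≤ R * σ).trans hN
  have hlog : log (1 + κ / (4 * σ) * N) ≤ κ / (4 * σ) * N := by
    linarith [log_le_sub_one_of_pos (by positivity : 0 < 1 + κ / (4 * σ) * N)]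
  have hRN : κ * R ≤ κ * (N / σ) := by
    gcongr
    rwa [le_div_iff₀ hσ]
  have hκN : 0 ≤ κ * (N / σ) := by positivity
  calc κ * R / 4 + 2 * log (1 + κ / (4 * σ) * N)
      ≤ κ * (N / σ) / 4 + 2 * (κ / (4 * σ) * N) := by gcongr
    _ = 3 / 4 * (κ * (N / σ)) := by field_simp; ring
    _ ≤ κ * (N / σ) := by linarith
    _ = κ / σ ^ 2 * (σ * N) := by field_simp

lemma log_majorant_le_log_rate (hσ : 0 < σ) (hκ : 0 < κ) (hR : 1 ≤ R) (hκR : 4 ≤ κ * R)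
    (hδ : R * σ ≤ δ) (hδ1 : δ ≤ 1) (hN : R * σ ≤ N) :
    κ * R / 4 + 2 * log (1 + κ / (4 * σ) * N) ≤ κ / σ ^ 2 * (δ * log (1 + N)) := by
  have hRσ : 0 < R * σ := by positivity
  have hσδ : σ ≤ δ := (le_mul_of_one_le_left hσ.le hR).trans hδ
  have hδ0 : 0 < δ := hσ.trans_le hσδ
  have hrate : κ / (4 * σ) ≤ κ * δ / (4 * σ ^ 2) := by
    calc κ / (4 * σ) = κ * σ / (4 * σ ^ 2) := by field_simp
      _ ≤ κ * δ / (4 * σ ^ 2) := by gcongr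
  have hrate_one : 1 ≤ κ * δ / (4 * σ ^ 2) := by
    rw [one_le_div (by positivity)]
    calc 4 * σ ^ 2 ≤ κ * R * σ ^ 2 := by gcongr
      _ = κ * (R * σ) * σ := by ring
      _ ≤ κ * δ * 1 := by gcongr; exact hσδ.trans hδ1
      _ = κ * δ := mul_one _
  have hlog_term := log_one_add_mul_le (by positivity) hrate hrate_one (hRσ.le.trans hN)
  have hlog_lower : R * σ / 2 ≤ log (1 + N) :=
    (half_le_log_one_add hRσ.le (hδ.trans hδ1)).trans (log_le_log (by positivity) (by linarith))
  have hconst_term : κ * R / 4 ≤ κ * δ / (2 * σ ^ 2) * log (1 + N) := by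
    calc κ * R / 4 = κ * σ / (2 * σ ^ 2) * (R * σ / 2) := by field_simp; ring
      _ ≤ κ * δ / (2 * σ ^ 2) * log (1 + N) := by gcongr
  calc κ * R / 4 + 2 * log (1 + κ / (4 * σ) * N)
      ≤ κ * δ / (2 * σ ^ 2) * log (1 + N) + 2 * (κ * δ / (4 * σ ^ 2) * log (1 + N)) := by gcongr
    _ = κ / σ ^ 2 * (δ * log (1 + N)) := by field_simp; ring

lemma log_majorant_le_min_rate (hσ : 0 < σ) (hκ : 0 < κ) (hR : 2 ≤ R) (hκR : 4 ≤ κ * R)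
    (hδ : R * σ ≤ δ) (hδ1 : δ ≤ 1) (hN : R * σ ≤ N) :
    κ * R / 4 + 2 * log (1 + κ / (4 * σ) * N) ≤
      κ / σ ^ 2 * min (N ^ 2 / 2) (min (σ * N) (δ * log (1 + N))) := by
  have hlinear := log_majorant_le_linear_rate hσ hκ (by linarith) hN
  have hquadratic : σ * N ≤ N ^ 2 / 2 := by
    have : 2 * σ ≤ N := le_trans (by gcongr) hN
    nlinarith
  rw [mul_min_of_nonneg _ _ (by positivity), mul_min_of_nonneg _ _ (by positivity)]
  refine le_min (hlinear.trans (by gcongr)) (le_min hlinear ?_)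
  exact log_majorant_le_log_rate hσ hκ (by linarith) hκR hδ hδ1 hN

end Scalar

section EuclideanSpace

variable {ι : Type*} [Fintype ι]

lemma integrable_prod_inv_one_add_mul_sq {b : ℝ} (hb : b ≠ 0) :
    Integrable fun x : EuclideanSpace ℝ ι => ∏ i, (1 + (b * x i) ^ 2)⁻¹ := by
  have hpi : Integrable fun x : ι → ℝ => ∏ i, (1 + (b * x i) ^ 2)⁻¹ :=
    Integrable.fintype_prod (f := fun _ t => (1 + (b * t) ^ 2)⁻¹) fun _ =>
      integrable_inv_one_add_sq.comp_mul_left' hb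
  exact ((PiLp.volume_preserving_ofLp ι).integrable_comp hpi.aestronglyMeasurable).2 hpi

lemma integral_prod_inv_one_add_mul_sq {b : ℝ} (hb : 0 < b) :
    ∫ x : EuclideanSpace ℝ ι, ∏ i, (1 + (b * x i) ^ 2)⁻¹ = (π / b) ^ Fintype.card ι := by
  have hline : ∫ t : ℝ, (1 + (b * t) ^ 2)⁻¹ = π / b := by
    rw [Measure.integral_comp_mul_left (fun t => (1 + t ^ 2)⁻¹) b, integral_univ_inv_one_add_sq,
      abs_of_pos (by positivity), smul_eq_mul, inv_mul_eq_div]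
  have htransfer := (EuclideanSpace.volume_preserving_symm_measurableEquiv_toLp ι).integral_comp
    (MeasurableEquiv.measurableEmbedding _) fun x : ι → ℝ => ∏ i, (1 + (b * x i) ^ 2)⁻¹
  rw [integral_fintype_prod_volume_eq_prod fun (_ : ι) t => (1 + (b * t) ^ 2)⁻¹] at htransfer
  rw [← hline]
  simpa using htransfer

lemma pow_card_le_volume_real_closedBall {r : ℝ} (hr : 0 ≤ r) :
    (2 * (r / √(Fintype.card ι))) ^ Fintype.card ι ≤
      volume.real (Metric.closedBall (0 : EuclideanSpace ℝ ι) r) := by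
  set a := r / √(Fintype.card ι) with ha
  have ha0 : 0 ≤ a := by positivity
  have hcube : volume.real (WithLp.ofLp ⁻¹' Metric.closedBall (0 : ι → ℝ) a :
      Set (EuclideanSpace ℝ ι)) = (2 * a) ^ Fintype.card ι := by
    rw [measureReal_def, (PiLp.volume_preserving_ofLp ι).measure_preimage
      measurableSet_closedBall.nullMeasurableSet, Real.volume_pi_closedBall _ ha0,
      ENNReal.toReal_ofReal (by positivity)]
  rw [← hcube]
  refine measureReal_mono (fun x hx => ?_) measure_closedBall_lt_top.ne
  have hcoord : ∀ i, ‖x i‖ ≤ a := (pi_norm_le_iff_of_nonneg ha0).1 (mem_closedBall_zero_iff.1 hx)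
  rw [mem_closedBall_zero_iff, EuclideanSpace.norm_eq, sqrt_le_left hr]
  calc ∑ i, ‖x i‖ ^ 2 ≤ ∑ _i : ι, a ^ 2 := by gcongr with i; exact hcoord i
    _ = Fintype.card ι * (r ^ 2 / Fintype.card ι) := by simp [ha, div_pow]
    _ ≤ r ^ 2 := by
      rw [mul_div_left_comm]; exact mul_le_of_le_one_right (sq_nonneg r) (div_self_le_one _)

lemma sum_log_one_add_sq_le (x : EuclideanSpace ℝ ι) :
    ∑ i, log (1 + x i ^ 2) ≤ Fintype.card ι * log (1 + ‖x‖ ^ 2 / Fintype.card ι) := by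
  cases isEmpty_or_nonempty ι
  · simp
  have hcard : (0 : ℝ) < Fintype.card ι := by exact_mod_cast Fintype.card_pos
  have hjensen := strictConcaveOn_log_Ioi.concaveOn.le_map_sum (t := Finset.univ)
    (w := fun _ : ι => (Fintype.card ι : ℝ)⁻¹) (p := fun i => 1 + x i ^ 2)
    (fun _ _ => by positivity) (by simp [hcard.ne'])
    (fun i _ => Set.mem_Ioi.2 (by positivity))
  simp only [smul_eq_mul, ← Finset.mul_sum, Finset.sum_add_distrib, Finset.sum_const,
    Finset.card_univ, nsmul_eq_mul, mul_one] at hjensen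
  rw [inv_mul_le_iff₀ hcard, mul_add, inv_mul_cancel₀ hcard.ne'] at hjensen
  rw [EuclideanSpace.real_norm_sq_eq, div_eq_inv_mul]
  exact hjensen

lemma sum_log_one_add_mul_sq_le {b : ℝ} (hb : 0 ≤ b) (x : EuclideanSpace ℝ ι) :
    ∑ i, log (1 + (b * x i) ^ 2) ≤
      Fintype.card ι * (2 * log (1 + b / √(Fintype.card ι) * ‖x‖)) := by
  have hbx := sum_log_one_add_sq_le (b • x)
  simp only [PiLp.smul_apply, smul_eq_mul, norm_smul, norm_of_nonneg hb] at hbx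
  refine hbx.trans ?_
  have hsq : (b * ‖x‖) ^ 2 / Fintype.card ι = (b / √(Fintype.card ι) * ‖x‖) ^ 2 := by
    rw [div_mul_eq_mul_div, div_pow, sq_sqrt (Nat.cast_nonneg _)]
  have hcross : 0 ≤ b / √(Fintype.card ι) * ‖x‖ := by positivity
  rw [hsq]
  gcongr
  calc log (1 + (b / √(Fintype.card ι) * ‖x‖) ^ 2)
      ≤ log ((1 + b / √(Fintype.card ι) * ‖x‖) ^ 2) := log_le_log (by positivity) (by nlinarith)
    _ = 2 * log (1 + b / √(Fintype.card ι) * ‖x‖) := by rw [log_pow, Nat.cast_two]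

end EuclideanSpace

section Taylor

variable {E : Type*} [NormedAddCommGroup E] [NormedSpace ℝ E]

lemma abs_multilinearMap_const_le {k : ℕ} (hk : k ≠ 0)
    (T : MultilinearMap ℝ (fun _ : Fin k => E) ℝ) {c : ℝ}
    (hT : ∀ u : E, ‖u‖ = 1 → |T fun _ => u| ≤ c) (x : E) :
    |T fun _ => x| ≤ c * ‖x‖ ^ k := by
  obtain rfl | hx := eq_or_ne x 0
  · rw [T.map_coord_zero (⟨0, Nat.pos_of_ne_zero hk⟩ : Fin k) rfl]
    simp [hk]
  · have hscale : T (fun _ => x) = ‖x‖ ^ k * T fun _ => ‖x‖⁻¹ • x := by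
      have h := T.map_smul_univ (fun _ => ‖x‖) (fun _ => ‖x‖⁻¹ • x)
      simpa [smul_inv_smul₀ (norm_ne_zero_iff.2 hx)] using h
    rw [hscale, abs_mul, abs_of_nonneg (by positivity), mul_comm]
    gcongr
    exact hT _ (norm_smul_inv_norm hx)

variable {T : (k : ℕ) → MultilinearMap ℝ (fun _ : Fin k => E) ℝ} {c : ℝ} {m n q : ℕ} {x : E}

lemma abs_taylor_sum_le (hm : m ≠ 0) (hc : 0 ≤ c)
    (hT : ∀ k, m ≤ k → k ≤ n → ∀ u : E, ‖u‖ = 1 → |T k fun _ => u| ≤ c) (hx : ‖x‖ ≤ 1) :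
    |∑ k ∈ Finset.Icc m n, (1 / (Nat.factorial k) : ℝ) * T k fun _ => x| ≤
      exp 1 * (c * ‖x‖ ^ m) := by
  have hfactorial : ∑ k ∈ Finset.Icc m n, (1 / (Nat.factorial k) : ℝ) ≤ exp 1 := by
    refine le_trans ?_ (by simpa using sum_le_exp_of_nonneg zero_le_one (n + 1))
    simp only [one_div]
    refine Finset.sum_le_sum_of_subset_of_nonneg (fun k hk => ?_) fun _ _ _ => by positivity
    exact Finset.mem_range_succ_iff.2 (Finset.mem_Icc.1 hk).2
  calc |∑ k ∈ Finset.Icc m n, (1 / (Nat.factorial k) : ℝ) * T k fun _ => x|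
      ≤ ∑ k ∈ Finset.Icc m n, |(1 / (Nat.factorial k) : ℝ) * T k fun _ => x| :=
        Finset.abs_sum_le_sum_abs _ _
    _ ≤ ∑ k ∈ Finset.Icc m n, (1 / (Nat.factorial k) : ℝ) * (c * ‖x‖ ^ m) := by
        gcongr with k hk
        obtain ⟨hmk, hkn⟩ := Finset.mem_Icc.1 hk
        rw [abs_mul, abs_of_nonneg (by positivity)]
        gcongr
        calc |T k fun _ => x| ≤ c * ‖x‖ ^ k :=
              abs_multilinearMap_const_le (by omega) (T k) (hT k hmk hkn) x
          _ ≤ c * ‖x‖ ^ m := by gcongr ?_ * ?_; exact pow_le_pow_of_le_one (norm_nonneg _) hx hmk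
    _ ≤ exp 1 * (c * ‖x‖ ^ m) := by
        rw [← Finset.sum_mul]
        gcongr

lemma le_mul_sq_of_taylor (hc : 1 ≤ c)
    (hT : ∀ k, 3 ≤ k → k ≤ n → ∀ u : E, ‖u‖ = 1 → |T k fun _ => u| ≤ c) (hq : 2 ≤ q) {y : ℝ}
    (hy : |y - (‖x‖ ^ 2 / 2 + ∑ k ∈ Finset.Icc 3 n,
      (1 / (Nat.factorial k) : ℝ) * T k fun _ => x)| ≤ c * ‖x‖ ^ q) (hx : ‖x‖ ≤ 1) :
    y ≤ (exp 1 + 2) * c * ‖x‖ ^ 2 := by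
  have hsum := (abs_le.1 (abs_taylor_sum_le (by norm_num) (by linarith) hT hx)).2
  have hremainder := (abs_le.1 hy).2
  have hcube : exp 1 * (c * ‖x‖ ^ 3) ≤ exp 1 * (c * ‖x‖ ^ 2) := by
    gcongr exp 1 * (c * ?_)
    exact pow_le_pow_of_le_one (norm_nonneg _) hx (by norm_num)
  have hpow : c * ‖x‖ ^ q ≤ c * ‖x‖ ^ 2 := by
    gcongr c * ?_
    exact pow_le_pow_of_le_one (norm_nonneg _) hx hq
  have hquadratic : ‖x‖ ^ 2 ≤ c * ‖x‖ ^ 2 := le_mul_of_one_le_left (by positivity) hc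
  linarith [sq_nonneg ‖x‖]

lemma exp_neg_le_of_log_taylor (hc : 0 ≤ c)
    (hT : ∀ k, 1 ≤ k → k ≤ n → ∀ u : E, ‖u‖ = 1 → |T k fun _ => u| ≤ c) {y : ℝ} (hy0 : 0 < y)
    (hy : |log y - ∑ k ∈ Finset.Icc 1 n,
      (1 / (Nat.factorial k) : ℝ) * T k fun _ => x| ≤ c * ‖x‖ ^ q) (hx : ‖x‖ ≤ 1) :
    exp (-((exp 1 + 1) * c)) ≤ y := by
  rw [← le_log_iff_exp_le hy0]
  have hsum := (abs_le.1 (abs_taylor_sum_le one_ne_zero hc hT hx)).1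
  have hremainder := (abs_le.1 hy).1
  have hlinear : exp 1 * (c * ‖x‖ ^ 1) ≤ exp 1 * c := by
    gcongr
    exact mul_le_of_le_one_right hc (pow_le_one₀ (norm_nonneg _) hx)
  have hpow : c * ‖x‖ ^ q ≤ c := mul_le_of_le_one_right hc (pow_le_one₀ (norm_nonneg _) hx)
  linarith

end Taylor

section LaplaceIntegral

variable {d : ℕ} {f g F : EuclideanSpace ℝ (Fin d) → ℝ} {a b c σ δ κ lam R : ℝ}

/-- The normalised Laplace integral of `g e^{-λ f}` over `S`. The paper's `I_in(λ)` and `I_out(λ)`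
are its values on the closed ball of radius `R√(d/λ)` and on the complement of that ball. -/
def laplaceIntegral (f g : EuclideanSpace ℝ (Fin d) → ℝ) (lam : ℝ)
    (S : Set (EuclideanSpace ℝ (Fin d))) : ℝ :=
  (lam / (2 * π)) ^ ((d : ℝ) / 2) * ∫ x in S, g x * exp (-(lam * f x))

lemma exp_neg_min_rate_le_prod (hd : d ≠ 0) (hσ : 0 < σ) (hlam : lam * σ ^ 2 = d) (hκ : 0 < κ)
    (hR : 2 ≤ R) (hκR : 4 ≤ κ * R) (hδ : R * σ ≤ δ) (hδ1 : δ ≤ 1)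
    {x : EuclideanSpace ℝ (Fin d)} (hx : R * σ ≤ ‖x‖) :
    exp (-(lam * κ * min (‖x‖ ^ 2 / 2) (min (σ * ‖x‖) (δ * log (1 + ‖x‖))))) ≤
      exp (-(κ * R * d / 4)) * ∏ i, (1 + (κ * √d / (4 * σ) * x i) ^ 2)⁻¹ := by
  have hsqrt : √(d : ℝ) ≠ 0 := by positivity
  have hprod : ∏ i, (1 + (κ * √d / (4 * σ) * x i) ^ 2)⁻¹ =
      exp (-∑ i, log (1 + (κ * √d / (4 * σ) * x i) ^ 2)) := by
    rw [← Finset.sum_neg_distrib, exp_sum]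
    refine Finset.prod_congr rfl fun i _ => ?_
    rw [exp_neg, exp_log (by positivity)]
  have hrate : κ * √d / (4 * σ) / √d = κ / (4 * σ) := by field_simp
  have hsum := sum_log_one_add_mul_sq_le (by positivity : 0 ≤ κ * √d / (4 * σ)) x
  rw [Fintype.card_fin, hrate] at hsum
  have hmin := log_majorant_le_min_rate hσ hκ hR hκR hδ hδ1 hx
  rw [hprod, ← exp_add, exp_le_exp, ← neg_add, neg_le_neg_iff]
  calc κ * R * d / 4 + ∑ i, log (1 + (κ * √d / (4 * σ) * x i) ^ 2)
      ≤ d * (κ * R / 4 + 2 * log (1 + κ / (4 * σ) * ‖x‖)) := by linarith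
    _ ≤ d * (κ / σ ^ 2 * min (‖x‖ ^ 2 / 2) (min (σ * ‖x‖) (δ * log (1 + ‖x‖)))) := by gcongr
    _ = lam * κ * min (‖x‖ ^ 2 / 2) (min (σ * ‖x‖) (δ * log (1 + ‖x‖))) := by
        rw [← hlam]; field_simp

lemma abs_setIntegral_compl_closedBall_le (hd : d ≠ 0) (hσ : 0 < σ) (hlam : lam * σ ^ 2 = d)
    (hκ : 0 < κ) (hR : 2 ≤ R) (hκR : 4 ≤ κ * R) (hδ : R * σ ≤ δ) (hδ1 : δ ≤ 1) (hc : 0 ≤ c)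
    (hF : ∀ x, |F x| ≤
      c * exp (-(lam * κ * min (‖x‖ ^ 2 / 2) (min (σ * ‖x‖) (δ * log (1 + ‖x‖)))))) :
    |∫ x in (Metric.closedBall 0 (R * σ))ᶜ, F x| ≤
      c * (exp (-(κ * R * d / 4)) * (π / (κ * √d / (4 * σ))) ^ d) := by
  set b := κ * √d / (4 * σ)
  have hb : 0 < b := by positivity
  have hmajorant : Integrable fun x : EuclideanSpace ℝ (Fin d) =>
      c * (exp (-(κ * R * d / 4)) * ∏ i, (1 + (b * x i) ^ 2)⁻¹) :=
    ((integrable_prod_inv_one_add_mul_sq hb.ne').const_mul _).const_mul c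
  have hdominated : ∀ x ∈ (Metric.closedBall (0 : EuclideanSpace ℝ (Fin d)) (R * σ))ᶜ,
      ‖F x‖ ≤ c * (exp (-(κ * R * d / 4)) * ∏ i, (1 + (b * x i) ^ 2)⁻¹) := fun x hx => by
    rw [Set.mem_compl_iff, mem_closedBall_zero_iff, not_le] at hx
    refine (hF x).trans ?_
    gcongr
    exact exp_neg_min_rate_le_prod hd hσ hlam hκ hR hκR hδ hδ1 hx.le
  calc |∫ x in (Metric.closedBall 0 (R * σ))ᶜ, F x|
      ≤ ∫ x in (Metric.closedBall (0 : EuclideanSpace ℝ (Fin d)) (R * σ))ᶜ,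
          c * (exp (-(κ * R * d / 4)) * ∏ i, (1 + (b * x i) ^ 2)⁻¹) :=
        norm_integral_le_of_norm_le hmajorant.integrableOn
          (ae_restrict_of_forall_mem measurableSet_closedBall.compl hdominated)
    _ ≤ ∫ x : EuclideanSpace ℝ (Fin d),
          c * (exp (-(κ * R * d / 4)) * ∏ i, (1 + (b * x i) ^ 2)⁻¹) :=
        setIntegral_le_integral hmajorant <| .of_forall fun x => by
          rw [Pi.zero_apply]; positivity
    _ = c * (exp (-(κ * R * d / 4)) * (π / b) ^ d) := by
        rw [integral_const_mul, integral_const_mul, integral_prod_inv_one_add_mul_sq hb,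
          Fintype.card_fin]

lemma exp_mul_pow_le_setIntegral_closedBall (hσ : 0 < σ) (hlam : lam * σ ^ 2 = d)
    (hR : 1 ≤ R) (ha : 0 ≤ a)
    (hf : ContinuousOn f (Metric.closedBall 0 (R * σ)))
    (hg : ContinuousOn g (Metric.closedBall 0 (R * σ)))
    (hf_le : ∀ x ∈ Metric.closedBall 0 (R * σ), f x ≤ a * ‖x‖ ^ 2)
    (hg_ge : ∀ x ∈ Metric.closedBall 0 (R * σ), exp (-b) ≤ g x) :
    exp (-(a * d + b)) * (2 * (σ / √d)) ^ d ≤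
      ∫ x in Metric.closedBall 0 (R * σ), g x * exp (-(lam * f x)) := by
  have hlam0 : 0 ≤ lam := nonneg_of_mul_nonneg_left (hlam ▸ Nat.cast_nonneg d) (by positivity)
  have hsubset : Metric.closedBall (0 : EuclideanSpace ℝ (Fin d)) σ ⊆
      Metric.closedBall 0 (R * σ) :=
    Metric.closedBall_subset_closedBall (le_mul_of_one_le_left hσ.le hR)
  have hint : IntegrableOn (fun x => g x * exp (-(lam * f x))) (Metric.closedBall 0 (R * σ)) :=
    (hg.mul (continuousOn_const.mul hf).neg.rexp).integrableOn_compact (isCompact_closedBall _ _)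
  have hnonneg : ∀ x ∈ Metric.closedBall 0 (R * σ), 0 ≤ g x * exp (-(lam * f x)) := fun x hx =>
    mul_nonneg ((exp_pos _).le.trans (hg_ge x hx)) (exp_pos _).le
  have hlower : ∀ x ∈ Metric.closedBall 0 σ, exp (-(a * d + b)) ≤ g x * exp (-(lam * f x)) := by
    intro x hx
    have hlamf : lam * f x ≤ a * d := by
      calc lam * f x ≤ lam * (a * ‖x‖ ^ 2) := by gcongr; exact hf_le x (hsubset hx)
        _ ≤ lam * (a * σ ^ 2) := by gcongr; exact mem_closedBall_zero_iff.1 hx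
        _ = a * d := by rw [← hlam]; ring
    rw [neg_add_rev, exp_add]
    have hgx := hg_ge x (hsubset hx)
    exact mul_le_mul hgx (exp_le_exp.2 (neg_le_neg hlamf)) (exp_pos _).le ((exp_pos _).le.trans hgx)
  calc exp (-(a * d + b)) * (2 * (σ / √d)) ^ d
      ≤ exp (-(a * d + b)) * volume.real (Metric.closedBall (0 : EuclideanSpace ℝ (Fin d)) σ) := by
        gcongr
        simpa using pow_card_le_volume_real_closedBall (ι := Fin d) hσ.le
    _ ≤ ∫ x in Metric.closedBall 0 σ, g x * exp (-(lam * f x)) :=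
        setIntegral_ge_of_const_le_real measurableSet_closedBall measure_closedBall_lt_top.ne
          hlower (hint.mono_set hsubset)
    _ ≤ ∫ x in Metric.closedBall 0 (R * σ), g x * exp (-(lam * f x)) :=
        setIntegral_mono_set hint (ae_restrict_of_forall_mem measurableSet_closedBall hnonneg)
          hsubset.eventuallyLE

lemma laplaceIntegral_pos_and_abs_div_le {S S' : Set (EuclideanSpace ℝ (Fin d))} {η A : ℝ}
    (hlam : 0 < lam) (hA : 0 < A) (hη : 0 ≤ η)
    (hS : A ≤ ∫ x in S, g x * exp (-(lam * f x)))
    (hS' : |∫ x in S', g x * exp (-(lam * f x))| ≤ A * η) :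
    0 < laplaceIntegral f g lam S ∧
      |laplaceIntegral f g lam S'| / laplaceIntegral f g lam S ≤ η := by
  have hnormalisation : 0 < (lam / (2 * π)) ^ ((d : ℝ) / 2) := by positivity
  have hpos := hA.trans_le hS
  refine ⟨mul_pos hnormalisation hpos, ?_⟩
  rw [laplaceIntegral, laplaceIntegral, abs_mul, abs_of_pos hnormalisation,
    mul_div_mul_left _ _ hnormalisation.ne', div_le_iff₀ hpos, mul_comm η]
  exact hS'.trans (by gcongr)

end LaplaceIntegral

section Parameters

variable {d L : ℕ} {κ lam R : ℝ}

lemma two_mul_pi_div_le_exp (hκ : 0 < κ) : 2 * π / κ ≤ exp (2 + log (1 / κ)) := by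
  have hexp_two : 2 * π ≤ exp 2 := by
    have : exp 2 = exp 1 * exp 1 := by rw [← exp_add]; norm_num
    nlinarith [exp_one_gt_d9, pi_lt_d2]
  rw [exp_add, exp_log (by positivity), mul_one_div]
  gcongr

lemma tail_volume_le {a b c v : ℝ} (ha : 0 ≤ a) (hb : 0 ≤ b) (hc : 0 ≤ c) (hv : 0 ≤ v)
    (hd : 1 ≤ d) (hκ : 0 < κ) (hκ1 : κ ≤ 1) (hlam : 1 ≤ lam)
    (hR : 4 * (a + b + c + 2 + L) * (1 + log (1 / κ) + log lam / d) ≤ κ * R) :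
    c * (exp (-(κ * R * d / 4)) * (2 * π / κ * v) ^ d) ≤
      exp (-(a * d + b)) * v ^ d * (1 / lam ^ L) := by
  have hd1 : (1 : ℝ) ≤ d := by exact_mod_cast hd
  have hlogκ : 0 ≤ log (1 / κ) := log_nonneg ((one_le_div hκ).2 hκ1)
  have hloglam : 0 ≤ log lam := log_nonneg hlam
  have hc_le : c ≤ exp c := (by linarith : c ≤ c + 1).trans (add_one_le_exp c)
  have hpow_le : (2 * π / κ) ^ d ≤ exp (d * (2 + log (1 / κ))) := by
    rw [exp_nat_mul]
    gcongr
    exact two_mul_pi_div_le_exp hκ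
  have hpow_lam : 1 / lam ^ L = exp (-(L * log lam)) := by
    rw [exp_neg, exp_nat_mul, exp_log (by linarith), one_div]
  have hexponent : c + (-(κ * R * d / 4) + d * (2 + log (1 / κ))) ≤
      -(a * d + b) + -(L * log lam) := by
    have hRd : 4 * (a + b + c + 2 + L) * (d + d * log (1 / κ) + log lam) ≤ κ * R * d := by
      calc 4 * (a + b + c + 2 + L) * (d + d * log (1 / κ) + log lam)
          = 4 * (a + b + c + 2 + L) * (1 + log (1 / κ) + log lam / d) * d := by field_simp
        _ ≤ κ * R * d := by gcongr
    have hdlogκ : 0 ≤ (a + b + c + 1 + L) * (d * log (1 / κ)) := by positivity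
    have hloglam' : 0 ≤ (a + b + c + 2) * log lam := by positivity
    have hLd : 0 ≤ (L : ℝ) * d := by positivity
    nlinarith
  calc c * (exp (-(κ * R * d / 4)) * (2 * π / κ * v) ^ d)
      ≤ exp c * (exp (-(κ * R * d / 4)) * (exp (d * (2 + log (1 / κ))) * v ^ d)) := by
        rw [mul_pow]
        gcongr
    _ = exp (c + (-(κ * R * d / 4) + d * (2 + log (1 / κ)))) * v ^ d := by
        rw [exp_add, exp_add]; ring
    _ ≤ exp (-(a * d + b) + -(L * log lam)) * v ^ d := by gcongr
    _ = exp (-(a * d + b)) * v ^ d * (1 / lam ^ L) := by rw [exp_add, hpow_lam]; ring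

lemma le_of_mul_max_one_le {K t : ℝ} (hK : 0 ≤ K) (h : K * max 1 t ≤ R) : K ≤ R :=
  (le_mul_of_one_le_right hK (le_max_left 1 t)).trans h

lemma mul_one_add_log_le_of_mul_max_le {K t : ℝ} (hK : 1 ≤ K) (hκ : 0 < κ)
    (hκe : κ ≤ 1 / exp 1) (ht : 0 ≤ t)
    (h : K * max 1 (κ⁻¹ * (√(log (1 / κ)) + log R + t)) ≤ R) :
    K * (1 + log (1 / κ) + t) ≤ κ * R := by
  have hR : 1 ≤ R := hK.trans (le_of_mul_max_one_le (by linarith) h)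
  have hlogR : 0 ≤ log R := log_nonneg hR
  have hsqrt : 1 ≤ √(log (1 / κ)) := by
    rw [one_le_sqrt, le_log_iff_exp_le (by positivity)]
    exact (le_one_div (exp_pos _) hκ).2 hκe
  have hthreshold : K * (√(log (1 / κ)) + log R + t) ≤ κ * R := by
    calc K * (√(log (1 / κ)) + log R + t)
        = κ * (K * (κ⁻¹ * (√(log (1 / κ)) + log R + t))) := by field_simp
      _ ≤ κ * (K * max 1 (κ⁻¹ * (√(log (1 / κ)) + log R + t))) := by
          gcongr
          exact le_max_right _ _
      _ ≤ κ * R := by gcongr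
  have hκR : 1 ≤ κ * R :=
    (one_le_mul_of_one_le_of_one_le hK (by linarith)).trans hthreshold
  have hlogκ : log (1 / κ) ≤ log R :=
    log_le_log (by positivity) ((div_le_iff₀' hκ).2 hκR)
  exact le_trans (by gcongr) hthreshold

lemma one_le_of_scaling (hL : L ≠ 0) (hd : 1 ≤ d) (hR : 1 ≤ R) (hlam : 0 < lam)
    (h : (R ^ 2 * d) ^ (L + 1) / lam ^ L ≤ 1) : 1 ≤ lam := by
  rw [div_le_one (by positivity)] at h
  have hbase : 1 ≤ R ^ 2 * d :=
    one_le_mul_of_one_le_of_one_le (one_le_pow₀ hR) (by exact_mod_cast hd)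
  exact (one_le_pow_iff_of_nonneg hlam.le hL).1 ((one_le_pow₀ hbase).trans h)

lemma mul_sqrt_div_le_rpow_of_scaling (hL : L ≠ 0) (hd : 1 ≤ d) (hR : 1 ≤ R) (hlam : 0 < lam)
    (h : (R ^ 2 * d) ^ (L + 1) / lam ^ L ≤ 1) :
    R * √(d / lam) ≤ (d : ℝ) ^ (-1 / (2 * (L : ℝ))) := by
  have hd0 : (0 : ℝ) < d := by exact_mod_cast hd
  have hrpow : ((d : ℝ) ^ (-1 / (2 * (L : ℝ)))) ^ (2 * L) = 1 / d := by
    rw [← rpow_mul_natCast hd0.le, Nat.cast_mul, Nat.cast_two,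
      div_mul_cancel₀ _ (by positivity), rpow_neg_one, one_div]
  apply le_of_pow_le_pow_left₀ (show 2 * L ≠ 0 by positivity) (by positivity)
  rw [hrpow, pow_mul, mul_pow, sq_sqrt (by positivity), le_div_iff₀ hd0]
  calc (R ^ 2 * (d / lam)) ^ L * d = (R ^ 2 * d) ^ L * (1 * d) / lam ^ L := by
        rw [← mul_div_assoc, div_pow]; ring
    _ ≤ (R ^ 2 * d) ^ L * (R ^ 2 * d) / lam ^ L := by gcongr; exact one_le_pow₀ hR
    _ ≤ 1 := by rwa [← pow_succ]

lemma one_div_pow_le_five_mul (hd : 1 ≤ d) (hR : 1 ≤ R) (hlam : 0 < lam) :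
    1 / lam ^ L ≤ 5 * R ^ (2 * L) * (d : ℝ) ^ (L + 1) / lam ^ L := by
  have hd1 : (1 : ℝ) ≤ d := by exact_mod_cast hd
  gcongr
  exact one_le_mul_of_one_le_of_one_le
    (one_le_mul_of_one_le_of_one_le (by norm_num) (one_le_pow₀ hR)) (one_le_pow₀ hd1)

end Parameters

theorem laplace_tail_ratio_bound_general {L d : ℕ} (hL : 1 ≤ L) (hd : 1 ≤ d)
    {f g : EuclideanSpace ℝ (Fin d) → ℝ} {a b c r₀ κ lam R : ℝ} (ha : 0 ≤ a) (hb : 0 ≤ b)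
    (hc : 0 ≤ c) (hκ : 0 < κ) (hκe : κ ≤ 1 / exp 1)
    (hf : ContinuousOn f (Metric.closedBall 0 r₀)) (hg : ContinuousOn g (Metric.closedBall 0 r₀))
    (hf_le : ∀ x, ‖x‖ ≤ r₀ → ‖x‖ ≤ 1 → f x ≤ a * ‖x‖ ^ 2)
    (hg_ge : ∀ x, ‖x‖ ≤ r₀ → ‖x‖ ≤ 1 → exp (-b) ≤ g x) (hlam : 0 < lam)
    (hdecay : ∀ x, |g x| * exp (-(lam * f x)) ≤
      c * exp (-(lam * κ * min (‖x‖ ^ 2 / 2)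
        (min (√(d / lam) * ‖x‖) ((d : ℝ) ^ (-1 / (2 * (L : ℝ))) * log (1 + ‖x‖))))))
    (hR : 4 * (a + b + c + 2 + L) *
      max 1 (κ⁻¹ * (√(log (1 / κ)) + log R + log lam / d)) ≤ R)
    (hscaling : (R ^ 2 * d) ^ (L + 1) / lam ^ L ≤ 1) (hr₀ : R * √(d / lam) ≤ r₀) :
    0 < laplaceIntegral f g lam (Metric.closedBall 0 (R * √(d / lam))) ∧
      |laplaceIntegral f g lam (Metric.closedBall 0 (R * √(d / lam)))ᶜ| /
        laplaceIntegral f g lam (Metric.closedBall 0 (R * √(d / lam))) ≤ 1 / lam ^ L := by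
  have hL0 : L ≠ 0 := by omega
  have hd0 : d ≠ 0 := by omega
  have hd1 : (1 : ℝ) ≤ d := by exact_mod_cast hd
  have hK : 8 ≤ 4 * (a + b + c + 2 + L) := by linarith [Nat.cast_nonneg (α := ℝ) L]
  have hR8 : 8 ≤ R := hK.trans (le_of_mul_max_one_le (by linarith) hR)
  have hlam1 := one_le_of_scaling hL0 hd (by linarith) hlam hscaling
  have hloglam : 0 ≤ log lam / d := div_nonneg (log_nonneg hlam1) (by linarith)
  have hκ1 : κ ≤ 1 := hκe.trans ((div_le_one (exp_pos 1)).2 (one_le_exp zero_le_one))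
  have hlogκ : 0 ≤ log (1 / κ) := log_nonneg ((one_le_div hκ).2 hκ1)
  have hthreshold := mul_one_add_log_le_of_mul_max_le (by linarith) hκ hκe hloglam hR
  have hκR : 4 ≤ κ * R := by nlinarith
  have hδ := mul_sqrt_div_le_rpow_of_scaling hL0 hd (by linarith) hlam hscaling
  have hδ1 : (d : ℝ) ^ (-1 / (2 * (L : ℝ))) ≤ 1 :=
    rpow_le_one_of_one_le_of_nonpos hd1
      (div_nonpos_of_nonpos_of_nonneg (by norm_num) (by positivity))
  set σ := √((d : ℝ) / lam)
  have hσ : 0 < σ := sqrt_pos.2 (by positivity)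
  have hσ_sq : lam * σ ^ 2 = d := by
    rw [sq_sqrt (by positivity), mul_div_cancel₀ _ hlam.ne']
  have hball := Metric.closedBall_subset_closedBall (x := (0 : EuclideanSpace ℝ (Fin d))) hr₀
  have hball_one : ∀ x ∈ Metric.closedBall (0 : EuclideanSpace ℝ (Fin d)) (R * σ),
      ‖x‖ ≤ r₀ ∧ ‖x‖ ≤ 1 := fun x hx =>
    have hx' := mem_closedBall_zero_iff.1 hx
    ⟨hx'.trans hr₀, hx'.trans (hδ.trans hδ1)⟩
  have hin := exp_mul_pow_le_setIntegral_closedBall hσ hσ_sq (by linarith) ha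
    (hf.mono hball) (hg.mono hball) (fun x hx => hf_le x (hball_one x hx).1 (hball_one x hx).2)
    (fun x hx => hg_ge x (hball_one x hx).1 (hball_one x hx).2)
  have hout := abs_setIntegral_compl_closedBall_le hd0 hσ hσ_sq hκ (by linarith) hκR hδ hδ1 hc
    (F := fun x => g x * exp (-(lam * f x))) (by simpa [abs_mul] using hdecay)
  have hside : π / (κ * √d / (4 * σ)) = 2 * π / κ * (2 * (σ / √d)) := by field_simp; ring
  rw [hside] at hout
  exact laplaceIntegral_pos_and_abs_div_le hlam (by positivity) (by positivity) hin
    (hout.trans (tail_volume_le ha hb hc (by positivity) hd hκ hκ1 hlam1 hthreshold))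

/-- **Tail bound (Lemma on `I_out/I_in`).** Under Assumption A — where `T k` plays the
role of `∇^k f(0)` and `G k` that of `∇^k (log g)(0)` — and `d ≥ 2L`, there exist
constants `c⁻ ≥ 1`, `c⁺ ∈ (0,1]` depending only on `c_f, c_g, L` such that whenever
`R ≥ c⁻ max(1, κ⁻¹[√(log(1/κ)) + log R + (log λ)/d])`, `(R²d)^{L+1}/λ^L ≤ c⁺` and
`R√(d/λ) ≤ r₀`, one has `I_in(λ) > 0` and `|I_out(λ)|/I_in(λ) ≤ 5 R^{2L} d^{L+1}/λ^L`. -/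
theorem laplace_tail_ratio_bound (L : ℕ) (hL : 1 ≤ L) (cf cg : ℝ)
    (hcf : 1 ≤ cf) (hcg : 1 ≤ cg) :
    ∃ cm cp : ℝ, 1 ≤ cm ∧ 0 < cp ∧ cp ≤ 1 ∧
      ∀ (d : ℕ), 2 * L ≤ d →
      ∀ (r₀ κ : ℝ), 0 < r₀ → 0 < κ → κ ≤ 1 / Real.exp 1 →
      ∀ (f g : EuclideanSpace ℝ (Fin d) → ℝ)
        (T G : (k : ℕ) → MultilinearMap ℝ (fun _ : Fin k => EuclideanSpace ℝ (Fin d)) ℝ),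
        -- smoothness
        ContDiffOn ℝ ((2 * L + 2 : ℕ) : ℕ∞) f (Metric.closedBall 0 r₀) →
        ContDiffOn ℝ ((2 * L : ℕ) : ℕ∞) g (Metric.closedBall 0 r₀) →
        -- (A1)
        (∀ k, 3 ≤ k → k ≤ 2 * L + 1 →
          ∀ (σ : Equiv.Perm (Fin k)) (m : Fin k → EuclideanSpace ℝ (Fin d)),
            T k (m ∘ σ) = T k m) →
        (∀ k, 3 ≤ k → k ≤ 2 * L + 1 → ∀ u : EuclideanSpace ℝ (Fin d), ‖u‖ = 1 →
          |T k fun _ => u| ≤ cf) →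
        (∀ x : EuclideanSpace ℝ (Fin d), ‖x‖ ≤ r₀ →
          |f x - (‖x‖ ^ 2 / 2 + ∑ k ∈ Finset.Icc 3 (2 * L + 1),
              (1 / (Nat.factorial k) : ℝ) * T k fun _ => x)| ≤
            cf * ‖x‖ ^ (2 * (L + 1))) →
        -- (A2)
        g 0 = 1 →
        (∀ x : EuclideanSpace ℝ (Fin d), ‖x‖ ≤ r₀ → 0 < g x) →
        (∀ k, 1 ≤ k → k ≤ 2 * L - 1 →
          ∀ (σ : Equiv.Perm (Fin k)) (m : Fin k → EuclideanSpace ℝ (Fin d)),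
            G k (m ∘ σ) = G k m) →
        (∀ k, 1 ≤ k → k ≤ 2 * L - 1 → ∀ u : EuclideanSpace ℝ (Fin d), ‖u‖ = 1 →
          |G k fun _ => u| ≤ cg) →
        (∀ x : EuclideanSpace ℝ (Fin d), ‖x‖ ≤ r₀ →
          |Real.log (g x) - ∑ k ∈ Finset.Icc 1 (2 * L - 1),
              (1 / (Nat.factorial k) : ℝ) * G k fun _ => x| ≤ cg * ‖x‖ ^ (2 * L)) →
        ∀ lam R : ℝ, 0 < lam →
          -- (A3)
          (∀ x : EuclideanSpace ℝ (Fin d),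
            |g x| * Real.exp (-(lam * f x)) ≤
              cg * Real.exp (-(lam * κ *
                min (‖x‖ ^ 2 / 2)
                  (min (Real.sqrt ((d : ℝ) / lam) * ‖x‖)
                    ((d : ℝ) ^ (-1 / (2 * (L : ℝ))) * Real.log (1 + ‖x‖)))))) →
          cm * max 1
              (κ⁻¹ * (Real.sqrt (Real.log (1 / κ)) + Real.log R + Real.log lam / d)) ≤ R →
          (R ^ 2 * d) ^ (L + 1) / lam ^ L ≤ cp →
          R * Real.sqrt ((d : ℝ) / lam) ≤ r₀ →
          0 < (lam / (2 * π)) ^ ((d : ℝ) / 2) *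
              ∫ x in Metric.closedBall (0 : EuclideanSpace ℝ (Fin d))
                  (R * Real.sqrt ((d : ℝ) / lam)),
                g x * Real.exp (-(lam * f x)) ∧
          |(lam / (2 * π)) ^ ((d : ℝ) / 2) *
                ∫ x in (Metric.closedBall (0 : EuclideanSpace ℝ (Fin d))
                    (R * Real.sqrt ((d : ℝ) / lam)))ᶜ,
                  g x * Real.exp (-(lam * f x))| /
              ((lam / (2 * π)) ^ ((d : ℝ) / 2) *
                ∫ x in Metric.closedBall (0 : EuclideanSpace ℝ (Fin d))
                    (R * Real.sqrt ((d : ℝ) / lam)),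
                  g x * Real.exp (-(lam * f x))) ≤
            5 * R ^ (2 * L) * (d : ℝ) ^ (L + 1) / lam ^ L := by
  have hK : 1 ≤ 4 * ((exp 1 + 2) * cf + (exp 1 + 1) * cg + cg + 2 + L) := by
    have : 0 ≤ (exp 1 + 2) * cf + (exp 1 + 1) * cg + L := by positivity
    linarith
  refine ⟨_, 1, hK, one_pos, le_rfl, ?_⟩
  intro d hd r₀ κ _ hκ hκe f g T G hf hg _ hT hfT _ hg_pos _ hG hgG lam R hlam hdecay hR hscaling
    hr₀
  have hR1 : 1 ≤ R := hK.trans (le_of_mul_max_one_le (by positivity) hR)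
  refine (laplace_tail_ratio_bound_general hL (by omega) (by positivity) (by positivity)
    (by positivity) hκ hκe hf.continuousOn hg.continuousOn
    (fun x hxr hx1 => le_mul_sq_of_taylor hcf hT (by omega) (hfT x hxr) hx1)
    (fun x hxr hx1 => exp_neg_le_of_log_taylor (by positivity) hG (hg_pos x hxr) (hgG x hxr) hx1)
    hlam hdecay hR hscaling hr₀).imp_right fun hratio => hratio.trans ?_
  exact one_div_pow_le_five_mul (by omega) hR1 hlam
end
end
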